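/- Let $K$ be an algebraically closed field and let $\Gamma$ be a finite Brauer tree of multiplicity one, i.e. a finite tree with a cyclic ordering of the edges at each vertex. Let $Q$ be its Brauer quiver: the vertices of $Q$ are the edges of $\Gamma$, and for every vertex $x$ of $\Gamma$ and every edge $i$ at $x$ there is an arrow from $i$ to the edge following $i$ in the cyclic order at $x$ (a loop if $x$ is a leaf), so that $Q$ is a union of oriented cycles, one for each vertex of $\Gamma$, and each vertex of $Q$ lies on two of them. Let $A=KQ/I$ be the basic Brauer tree algebra, where $I$ is generated by all products of two composable arrows from different cycles and by the differences of the two full turns (one in each cycle) starting at the same vertex of $Q$. An $A$-cycle is a maximal ordered set of nonrepeating arrows of $Q$ such that the product of any two neighbouring arrows is nonzero in $A$. Let $T=(P_0\xrightarrow{f}P_1)$, with $P_0=\bigoplus_{i\in I}Ae_i$ in degree $0$ and $P_1=\bigoplus_{j\in J}Ae_j$ in degree $1$ for sets $I,J$ of vertices of $Q$, be an indecomposable partial tilting complex (that is, $\mathrm{Hom}_{D^b(A)}(T,T[k])=0$ for $k\neq 0$) which is the minimal projective presentation of an indecomposable non-projective left $A$-module not isomorphic to $P/\mathrm{soc}(P)$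 for any indecomposable projective module $P$. The diagram of $T$ is the subgraph of $Q$ consisting of the vertices in $I\cup J$, called marked, and, for all $i\in I$, $j\in J$ such that the component $Ae_i\to Ae_j$ of $f$ is nonzero, of the directed path (with its vertices and arrows) from $i$ to $j$ inside a cycle of $Q$, making less than a full turn. For two such complexes $T,S$, the restriction of $T$ with respect to $S$ is the intersection of the diagram of $T$ with the union of the $A$-cycles that contain at least one marked vertex of $S$. Let $T_i$ and $T_j$ be two such complexes, and suppose that the intersection of their diagrams (common vertices and common arrows) is connected and has more than one vertex, and that both end points of the intersection (its vertices incident to exactly one of its arrows) are sinks of the intersection. Then $$\mathrm{Hom}_{D^b(A)}(T_i,T_j[-1])=0=\mathrm{Hom}_{D^b(A)}(T_j,T_i[-1])$$ if and only if (1) neither the restriction of $T_i$ with respect to $T_j$ is contained in the restriction of $T_j$ with respect to $T_i$, nor the restriction of $T_j$ with respect to $T_i$ is contained in the restriction of $T_i$ with respect to $T_j$; or (2) the diagrams of $T_i$ and $T_j$ have a common vertex which has degree one in both of them. -/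

import Mathlib

open CategoryTheory

universe u v w

/-- A Brauer tree of multiplicity one: a tree together with a cyclic ordering of the edges at
each vertex.  A dart `d` of the tree is an edge together with the choice of one of its end points
`d.fst`; `next d` is the edge following it in the cyclic order at `d.fst`. -/
structure BrauerTree (V : Type v) where
  graph : SimpleGraph V
  isTree : graph.IsTree
  next : Equiv.Perm graph.Dart
  next_fst : ∀ d, (next d).fst = d.fst
  next_cyclic : ∀ d d', d.fst = d'.fst → next.SameCycle d d'

namespace BrauerTree

variable {V : Type v} (Γ : BrauerTree V)

/-- The vertices of the Brauer quiver are the edges of the tree. -/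
abbrev Edge : Type v := Γ.graph.edgeSet

/-- The arrows of the Brauer quiver: the arrow `d` goes from the edge of `d` to the edge that
follows it around `d.fst`.  (At a leaf this is a loop.) -/
abbrev Arrow : Type v := Γ.graph.Dart

variable {Γ}

/-- The source of an arrow of the quiver. -/
def src (d : Γ.Arrow) : Γ.Edge := ⟨d.edge, d.edge_mem⟩

/-- The target of an arrow of the quiver. -/
def tgt (d : Γ.Arrow) : Γ.Edge := src (Γ.next d)

/-- The arrow `d` lies on the directed path of the quiver that goes from `i` to `j` inside one
oriented cycle (the arrows around one vertex of the tree) without completing a full turn. -/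
def OnPath (i j : Γ.Edge) (d : Γ.Arrow) : Prop :=
  ∃ (d₀ : Γ.Arrow) (k m : ℕ), k < m ∧ m < Function.minimalPeriod Γ.next d₀ ∧
    src d₀ = i ∧ src ((Γ.next ^ m) d₀) = j ∧ d = (Γ.next ^ k) d₀

variable (K : Type u) [Field K] (Γ)

/-- The free algebra on the vertices (trivial paths) and the arrows of the quiver. -/
abbrev Free : Type _ := FreeAlgebra K (Γ.Edge ⊕ Γ.Arrow)

variable {Γ}

/-- The generator of the free algebra given by a vertex. -/
def freeVertex (i : Γ.Edge) : Γ.Free K := FreeAlgebra.ι K (Sum.inl i)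

/-- The generator of the free algebra given by an arrow. -/
def freeArrow (d : Γ.Arrow) : Γ.Free K := FreeAlgebra.ι K (Sum.inr d)

/-- The full turn starting with the arrow `d`: the product of the arrows around `d.fst`, each of
them once, beginning with `d`. -/
noncomputable def freeTurn (d : Γ.Arrow) : Γ.Free K :=
  ((List.range (Function.minimalPeriod Γ.next d)).map
    fun k => freeArrow K ((Γ.next ^ k) d)).prod

variable (Γ)

/-- The relations of the basic Brauer tree algebra.  The first five families present the path
algebra of the quiver (a path `a` followed by `b` is the product `a * b`), the last two are the
Brauer relations with multiplicity one. -/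
inductive Rel : Γ.Free K → Γ.Free K → Prop
  | idem (i : Γ.Edge) : Rel (freeVertex K i * freeVertex K i) (freeVertex K i)
  | orth (i j : Γ.Edge) (h : i ≠ j) : Rel (freeVertex K i * freeVertex K j) 0
  | one : Rel (∑ᶠ i : Γ.Edge, freeVertex K i) 1
  | src_mul (d : Γ.Arrow) : Rel (freeVertex K (src d) * freeArrow K d) (freeArrow K d)
  | mul_tgt (d : Γ.Arrow) : Rel (freeArrow K d * freeVertex K (tgt d)) (freeArrow K d)
  /-- An arrow followed by the arrow of the other cycle through its target is zero. -/
  | zero (d : Γ.Arrow) : Rel (freeArrow K d * freeArrow K (Γ.next d).symm) 0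
  /-- The two full turns at a vertex of the quiver agree. -/
  | turn (d : Γ.Arrow) : Rel (freeTurn K d) (freeTurn K d.symm)

/-- The basic Brauer tree algebra of `Γ` (multiplicity one) over `K`. -/
def Alg : Type _ := RingQuot (Γ.Rel K)

noncomputable instance : Ring (Γ.Alg K) := RingQuot.instRing (Γ.Rel K)

noncomputable instance : Algebra K (Γ.Alg K) := RingQuot.instAlgebra (Γ.Rel K)

/-- The quotient map from the free algebra. -/
noncomputable def toAlg : Γ.Free K →ₐ[K] Γ.Alg K := RingQuot.mkAlgHom K (Γ.Rel K)

variable {Γ}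

/-- The idempotent `e_i`. -/
noncomputable def idemp (i : Γ.Edge) : Γ.Alg K := Γ.toAlg K (freeVertex K i)

/-- The class of an arrow in the algebra. -/
noncomputable def arrow (d : Γ.Arrow) : Γ.Alg K := Γ.toAlg K (freeArrow K d)

/-- The indecomposable projective left module `A e_i`. -/
noncomputable abbrev Proj (i : Γ.Edge) : Ideal (Γ.Alg K) := Ideal.span {idemp K i}

/-- A nonempty sequence of nonrepeating arrows such that the product of any two neighbouring
ones is nonzero in the algebra. -/
def IsArrowChain (L : List Γ.Arrow) : Prop :=
  L ≠ [] ∧ L.Nodup ∧ L.IsChain fun d d' => arrow K d * arrow K d' ≠ 0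

/-- An `A`-cycle: a maximal ordered set of nonrepeating arrows such that the product of any two
neighbouring ones is nonzero. -/
def IsACycle (L : List Γ.Arrow) : Prop :=
  IsArrowChain K L ∧ ∀ L', IsArrowChain K L' → L <:+: L' → L' = L

variable (Γ)

/-- A subdiagram of the quiver: a set of vertices and a set of arrows. -/
@[ext]
structure Subdiagram where
  verts : Set Γ.Edge
  arrows : Set Γ.Arrow

variable {Γ}

namespace Subdiagram

instance : Inter Γ.Subdiagram := ⟨fun D E => ⟨D.verts ∩ E.verts, D.arrows ∩ E.arrows⟩⟩

instance : HasSubset Γ.Subdiagram := ⟨fun D E => D.verts ⊆ E.verts ∧ D.arrows ⊆ E.arrows⟩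

/-- The subdiagram is nonempty and any two of its vertices are joined by an undirected path of
its arrows. -/
def Connected (D : Γ.Subdiagram) : Prop :=
  D.verts.Nonempty ∧ ∀ x ∈ D.verts, ∀ y ∈ D.verts,
    Relation.EqvGen (fun a b => ∃ d ∈ D.arrows, src d = a ∧ tgt d = b) x y

/-- The vertex `x` of the subdiagram is incident to exactly one of its arrows. -/
def IsDegreeOne (D : Γ.Subdiagram) (x : Γ.Edge) : Prop :=
  x ∈ D.verts ∧ {d ∈ D.arrows | src d = x ∨ tgt d = x}.ncard = 1

/-- The vertex `x` of the subdiagram receives an arrow of it, and no arrow of it leaves `x`. -/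
def IsSink (D : Γ.Subdiagram) (x : Γ.Edge) : Prop :=
  x ∈ D.verts ∧ (∃ d ∈ D.arrows, tgt d = x) ∧ ∀ d ∈ D.arrows, src d ≠ x

end Subdiagram

/-- The socle of a module: the sum of its simple submodules. -/
def socle (R : Type*) [Ring R] (M : Type*) [AddCommGroup M] [Module R M] : Submodule R M :=
  sSup {S | IsSimpleModule R S}

variable (Γ)

/-- A homomorphism `P₀ = ⨁_{i ∈ I} A e_i ⟶ P₁ = ⨁_{j ∈ J} A e_j`, where `I` and `J` are sets of
vertices of the quiver. -/
structure TwoTerm where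
  I : Finset Γ.Edge
  J : Finset Γ.Edge
  f : (∀ i : I, Proj K i.1) →ₗ[Γ.Alg K] (∀ j : J, Proj K j.1)

variable {Γ} {K}

namespace TwoTerm

/-- The term `P₀`. -/
abbrev P₀ (T : Γ.TwoTerm K) : Type _ := ∀ i : T.I, Proj K i.1

/-- The term `P₁`. -/
abbrev P₁ (T : Γ.TwoTerm K) : Type _ := ∀ j : T.J, Proj K j.1

/-- The presented module `M = coker (P₀ ⟶ P₁)`. -/
abbrev M (T : Γ.TwoTerm K) : Type _ := T.P₁ ⧸ LinearMap.range T.f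

/-- The cochain complex `P₀ ⟶ P₁` of left modules, with `P₀` in degree `0` and `P₁` in
degree `1`. -/
noncomputable def complex (T : Γ.TwoTerm K) : CochainComplex (ModuleCat (Γ.Alg K)) ℤ :=
  HomologicalComplex.double (c := ComplexShape.up ℤ) (i₀ := 0) (i₁ := 1)
    (ModuleCat.ofHom T.f) (by simp)

/-- The complex as an object of the derived category.  The bounded derived category of finitely
generated modules is a full subcategory, so that morphisms may be computed here. -/
noncomputable def obj (T : Γ.TwoTerm K) [HasDerivedCategory.{w} (ModuleCat (Γ.Alg K))] :
    DerivedCategory (ModuleCat (Γ.Alg K)) :=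
  DerivedCategory.Q.obj T.complex

/-- The complex `P₀ ⟶ P₁` is the minimal projective presentation of an indecomposable
nonprojective module that is not isomorphic to `P / soc P` for an indecomposable
projective `P`. -/
structure IsPresentation (T : Γ.TwoTerm K) : Prop where
  range_le : LinearMap.range T.f ≤ Module.jacobson (Γ.Alg K) T.P₁
  ker_le : LinearMap.ker T.f ≤ Module.jacobson (Γ.Alg K) T.P₀
  indecomposable : Indecomposable (ModuleCat.of (Γ.Alg K) T.M)
  not_projective : ¬ Module.Projective (Γ.Alg K) T.M
  not_quot_socle : ∀ i : Γ.Edge,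
    IsEmpty (T.M ≃ₗ[Γ.Alg K] (Proj K i ⧸ socle (Γ.Alg K) (Proj K i)))

/-- `T` is an indecomposable partial tilting complex. -/
def IsIndecPartialTilting (T : Γ.TwoTerm K)
    [HasDerivedCategory.{w} (ModuleCat (Γ.Alg K))] : Prop :=
  Indecomposable T.obj ∧ ∀ k : ℤ, k ≠ 0 → ∀ φ : T.obj ⟶ T.obj⟦k⟧, φ = 0

open Classical in
/-- The component `A e_i ⟶ A e_j` of the differential. -/
noncomputable def component (T : Γ.TwoTerm K) (i : T.I) (j : T.J) :
    Proj K i.1 →ₗ[Γ.Alg K] Proj K j.1 :=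
  LinearMap.proj j ∘ₗ T.f ∘ₗ LinearMap.single (Γ.Alg K) (fun i : T.I => Proj K i.1) i

/-- The marked vertices of the diagram of `T`. -/
def marked (T : Γ.TwoTerm K) : Set Γ.Edge := {x | x ∈ T.I ∨ x ∈ T.J}

/-- The arrows of the diagram of `T`: those on the paths from `i ∈ I` to `j ∈ J` such that the
component of the differential from `A e_i` to `A e_j` is nonzero. -/
def diagramArrows (T : Γ.TwoTerm K) : Set Γ.Arrow :=
  {d | ∃ (i : T.I) (j : T.J), T.component i j ≠ 0 ∧ OnPath i.1 j.1 d}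

/-- The diagram of `T`: the marked vertices, and the paths belonging to the nonzero components of
the differential. -/
def diagram (T : Γ.TwoTerm K) : Γ.Subdiagram where
  verts := {x | x ∈ T.marked ∨ ∃ d ∈ T.diagramArrows, src d = x ∨ tgt d = x}
  arrows := T.diagramArrows

/-- The restriction of (the diagram of) `T` with respect to `S`: the intersection of the diagram
of `T` with the union of the `A`-cycles containing at least one marked vertex of `S`. -/
def restriction (T S : Γ.TwoTerm K) : Γ.Subdiagram where
  verts := {x ∈ T.diagram.verts | ∃ L : List Γ.Arrow, IsACycle K L ∧
    (∃ m ∈ S.marked, ∃ d ∈ L, src d = m ∨ tgt d = m) ∧ ∃ d ∈ L, src d = x ∨ tgt d = x}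
  arrows := {a ∈ T.diagram.arrows | ∃ L : List Γ.Arrow, IsACycle K L ∧
    (∃ m ∈ S.marked, ∃ d ∈ L, src d = m ∨ tgt d = m) ∧ a ∈ L}

end TwoTerm

end BrauerTree

/-!
In the basis of `A` given by paths, a morphism `T ⟶ U[-1]` is a combination `α` of paths from the
sinks of `T` to the sources of `U` that is annihilated by both differentials. Since `T` has no
nonzero morphism to `T[-1]`, no edge is both a source and a sink of `T`. Indecomposability then
makes `T` a walk: if two sources or two sinks lay around the same vertex of the tree, a shortest
path occurring in the differential would yield a nontrivial idempotent endomorphism.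

Let the diagrams of `T` and `U` meet as in the theorem. At every vertex `v` of the tree at most
one path `arc a i`, from a sink `a` of `T` to a source `i` of `U`, can occur in `α`, with
coefficient `z v`. Full turns impose, at each edge of the tree which is marked in both walks, a
linear equation between the values of `z` at its two ends; on a tree such a system has a nowhere
vanishing solution, and a zero of `z` spreads along the whole intersection. Hence a nonzero `α`
exists if and only if nothing forces a single zero, and this means that `T` precedes `U`: starting
from a common source the path of `T` never runs past that of `U`, and at a common sink the walk of
`U` continues at both ends of the edge. Unless the two walks have a common end, this is the
inclusion of the restriction of `T` in the restriction of `U`; a common end excludes both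
inclusions of this kind.
-/

section TwoTermComplexes

open HomologicalComplex Limits

variable {C : Type*} [Category* C] [Abelian C]

theorem derivedCategory_hom_eq_zero_iff [HasDerivedCategory.{w} C] (L N : CochainComplex C ℤ)
    [L.IsKProjective] :
    (∀ φ : DerivedCategory.Q.obj L ⟶ DerivedCategory.Q.obj N, φ = 0) ↔
      ∀ φ : L ⟶ N, Nonempty (Homotopy φ 0) := by
  have hbij := CochainComplex.IsKProjective.Qh_map_bijective L
    ((HomotopyCategory.quotient C (ComplexShape.up ℤ)).obj N)
  let e := DerivedCategory.quotientCompQhIso C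
  constructor
  · intro hzero φ
    have hQh : DerivedCategory.Qh.map
        ((HomotopyCategory.quotient C (ComplexShape.up ℤ)).map φ) = 0 := by
      rw [← cancel_mono (e.hom.app N), zero_comp,
        DerivedCategory.quotientCompQhIso_hom_naturality φ, hzero (DerivedCategory.Q.map φ),
        comp_zero]
    refine ⟨HomotopyCategory.homotopyOfEq _ _ (hbij.1 ?_)⟩
    simp [hQh]
  · intro hzero φ
    obtain ⟨ψ, hψ⟩ := hbij.2 (e.hom.app L ≫ φ ≫ e.inv.app N)
    obtain ⟨ψ, rfl⟩ := (HomotopyCategory.quotient _ _).map_surjective ψ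
    rw [HomotopyCategory.eq_of_homotopy ψ 0 (hzero ψ).some, Functor.map_zero,
      Functor.map_zero] at hψ
    rw [← cancel_epi (e.hom.app L), ← cancel_mono (e.inv.app N), Category.assoc, ← hψ]
    simp

theorem derivedCategory_hom_shift_eq_zero_iff [HasDerivedCategory.{w} C]
    (L N : CochainComplex C ℤ) [L.IsKProjective] (n : ℤ) :
    (∀ φ : DerivedCategory.Q.obj L ⟶ (DerivedCategory.Q.obj N)⟦n⟧, φ = 0) ↔
      ∀ φ : L ⟶ N⟦n⟧, Nonempty (Homotopy φ 0) := by
  rw [← derivedCategory_hom_eq_zero_iff]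
  let e := ((DerivedCategory.Q (C := C)).commShiftIso n).app N
  constructor
  · intro hzero φ
    exact (cancel_mono e.hom).1 ((hzero _).trans zero_comp.symm)
  · intro hzero φ
    exact (cancel_mono e.inv).1 ((hzero _).trans zero_comp.symm)

variable {X₀ X₁ Y₀ Y₁ : C} (f : X₀ ⟶ X₁) (g : Y₀ ⟶ Y₁) (h : (ComplexShape.up ℤ).Rel 0 1)

theorem isStrictlyLE_double : CochainComplex.IsStrictlyLE (double f h) 1 := by
  rw [CochainComplex.isStrictlyLE_iff]
  intro i hi
  exact isZero_double_X f h i (by lia) (by lia)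

theorem projective_double_X [Projective X₀] [Projective X₁] (n : ℤ) :
    Projective ((double f h).X n) := by
  by_cases h0 : n = 0
  · subst h0
    exact Projective.of_iso (doubleXIso₀ f h).symm inferInstance
  by_cases h1 : n = 1
  · subst h1
    exact Projective.of_iso (doubleXIso₁ f h (by lia)).symm inferInstance
  have hzero := isZero_double_X f h n h0 h1
  exact ⟨fun _ _ _ => ⟨0, hzero.eq_of_src _ _⟩⟩

theorem isKProjective_double [Projective X₀] [Projective X₁] :
    CochainComplex.IsKProjective (double f h) :=
  have := isStrictlyLE_double f h
  have := projective_double_X f h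
  CochainComplex.isKProjective_of_projective _ 1

theorem double_hom_eq_zero_iff (N : CochainComplex C ℤ) (hN : IsZero (N.X 0))
    (e₁ : N.X 1 ≅ Y₀) (e₂ : N.X 2 ≅ Y₁) (hd : N.d 1 2 = -(e₁.hom ≫ g ≫ e₂.inv)) :
    (∀ φ : double f h ⟶ N, φ = 0) ↔ ∀ α : X₁ ⟶ Y₀, f ≫ α = 0 → α ≫ g = 0 → α = 0 := by
  have h01 : (0 : ℤ) ≠ 1 := by lia
  constructor
  · intro hzero α hf hg
    have hcomp : ∀ k, (ComplexShape.up ℤ).Rel 1 k → (α ≫ e₁.inv) ≫ N.d 1 k = 0 := by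
      intro k hk
      obtain rfl : 2 = k := by have : (1 : ℤ) + 1 = k := hk; lia
      simp [hd, reassoc_of% hg]
    have hdeg1 := congrArg (fun φ => φ.f 1)
      (hzero (mkHomFromDouble h h01 0 (α ≫ e₁.inv) (by simp [reassoc_of% hf]) hcomp))
    rw [mkHomFromDouble_f₁] at hdeg1
    simpa using hdeg1
  · intro hzero φ
    have hφ0 : φ.f 0 = 0 := hN.eq_of_tgt _ _
    have comm01 := φ.comm 0 1
    have comm12 := φ.comm 1 2
    have hα : (doubleXIso₁ f h h01).inv ≫ φ.f 1 ≫ e₁.hom = 0 := by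
      apply hzero
      · rw [hφ0, zero_comp, double_d f h h01] at comm01
        have := congrArg (fun x => (doubleXIso₀ f h).inv ≫ x ≫ e₁.hom) comm01
        simpa using this.symm
      · rw [hd, double_d_eq_zero₀ f h 1 2 (by lia), zero_comp] at comm12
        have := congrArg (fun x => (doubleXIso₁ f h h01).inv ≫ x ≫ e₂.hom) comm12
        simpa using this
    apply from_double_hom_ext
    · rw [hφ0]; rfl
    · simpa using hα

theorem double_hom_shift_eq_zero_iff :
    (∀ φ : double f h ⟶ (CategoryTheory.shiftFunctor (CochainComplex C ℤ) (-1 : ℤ)).obj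
      (double g h), φ = 0) ↔
      ∀ α : X₁ ⟶ Y₀, f ≫ α = 0 → α ≫ g = 0 → α = 0 := by
  have hzero : IsZero ((double g h).X (-1)) := isZero_double_X g h (-1) (by lia) (by lia)
  have hd : (-1 : ℤ).negOnePow • (double g h).d 0 1 =
      -((doubleXIso₀ g h).hom ≫ g ≫ (doubleXIso₁ g h (by lia)).inv) := by
    rw [← double_d g h (by lia)]; simp
  exact double_hom_eq_zero_iff f g h
    ((CategoryTheory.shiftFunctor (CochainComplex C ℤ) (-1 : ℤ)).obj (double g h)) hzero
    (doubleXIso₀ g h : (double g h).X 0 ≅ Y₀) (doubleXIso₁ g h (by lia)) hd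

variable {f g h} in
/-- A homotopy lowers degrees by one, and in each degree one of its ends vanishes. -/
theorem eq_zero_of_homotopy_double_shift
    {φ : double f h ⟶ (CategoryTheory.shiftFunctor (CochainComplex C ℤ) (-1 : ℤ)).obj
      (double g h)} (H : Homotopy φ 0) : φ = 0 := by
  have hH : H.hom = 0 := by
    funext i j
    by_cases hij : (ComplexShape.up ℤ).Rel j i
    · have hij' : j + 1 = i := hij
      by_cases hi : i = 0 ∨ i = 1
      · exact (isZero_double_X g h (j + -1) (by lia) (by lia)).eq_of_tgt _ _
      · exact (isZero_double_X f h i (by lia) (by lia)).eq_of_src _ _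
    · exact H.zero i j hij
  refine HomologicalComplex.hom_ext _ _ fun n => ?_
  rw [H.comm n, hH, map_zero, map_zero]
  exact (add_zero _).trans (add_zero _)

theorem derivedCategory_double_hom_shift_eq_zero_iff [HasDerivedCategory.{w} C]
    [Projective X₀] [Projective X₁] :
    (∀ φ : DerivedCategory.Q.obj (double f h) ⟶
      (DerivedCategory.Q.obj (double g h))⟦(-1 : ℤ)⟧, φ = 0) ↔
      ∀ α : X₁ ⟶ Y₀, f ≫ α = 0 → α ≫ g = 0 → α = 0 := by
  have := isKProjective_double f h
  rw [derivedCategory_hom_shift_eq_zero_iff, ← double_hom_shift_eq_zero_iff f g h]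
  exact ⟨fun hφ φ => eq_zero_of_homotopy_double_shift (hφ φ).some,
    fun hφ φ => ⟨Homotopy.ofEq (hφ φ)⟩⟩

end TwoTermComplexes

namespace BrauerTree

section CyclicOrder

variable {V : Type v} {Γ : BrauerTree V}

instance [Finite V] : Finite Γ.Arrow :=
  Finite.of_injective (fun d : Γ.Arrow => d.toProd) SimpleGraph.Dart.toProd_injective

theorem src_eq_src_iff {d d' : Γ.Arrow} : src d = src d' ↔ d = d' ∨ d = d'.symm := by
  rw [src, src, Subtype.mk.injEq, SimpleGraph.dart_edge_eq_iff]

theorem src_symm (d : Γ.Arrow) : src d.symm = src d := src_eq_src_iff.2 (Or.inr rfl)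

theorem exists_src_eq (i : Γ.Edge) : ∃ d : Γ.Arrow, src d = i := by
  obtain ⟨e, he⟩ := i
  induction e using Sym2.ind with
  | _ x y => exact ⟨⟨(x, y), he⟩, rfl⟩

theorem next_pow_succ (d : Γ.Arrow) (k : ℕ) :
    (Γ.next ^ (k + 1)) d = Γ.next ((Γ.next ^ k) d) := by
  rw [pow_succ', Equiv.Perm.mul_apply]

theorem next_pow_add (d : Γ.Arrow) (k l : ℕ) :
    (Γ.next ^ l) ((Γ.next ^ k) d) = (Γ.next ^ (k + l)) d := by
  rw [add_comm, pow_add, Equiv.Perm.mul_apply]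

theorem fst_next_pow (d : Γ.Arrow) (k : ℕ) : ((Γ.next ^ k) d).fst = d.fst := by
  induction k with
  | zero => rfl
  | succ k ih => rw [next_pow_succ, Γ.next_fst, ih]

theorem exists_next_eq (d : Γ.Arrow) : ∃ d', Γ.next d' = d ∧ d'.fst = d.fst := by
  refine ⟨Γ.next.symm d, by simp, ?_⟩
  rw [← Γ.next_fst, Equiv.apply_symm_apply]

/-- The length of a full turn starting with the arrow `d`, that is, the number of edges of the
tree at the vertex `d.fst`. -/
noncomputable def turnLength (d : Γ.Arrow) : ℕ := Function.minimalPeriod Γ.next d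

theorem next_pow_turnLength (d : Γ.Arrow) : (Γ.next ^ turnLength d) d = d := by
  have hper := Function.isPeriodicPt_minimalPeriod Γ.next d
  rwa [Function.IsPeriodicPt, Function.IsFixedPt, Equiv.Perm.iterate_eq_pow] at hper

theorem next_pow_inj {d : Γ.Arrow} {k l : ℕ} (hk : k < turnLength d) (hl : l < turnLength d)
    (h : (Γ.next ^ k) d = (Γ.next ^ l) d) : k = l := by
  simp only [← Equiv.Perm.iterate_eq_pow] at h
  exact Function.iterate_injOn_Iio_minimalPeriod hk hl h

theorem next_pow_ne {d : Γ.Arrow} {k : ℕ} (hpos : 0 < k) (hk : k < turnLength d) :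
    (Γ.next ^ k) d ≠ d := fun h =>
  hpos.ne' (next_pow_inj (l := 0) hk (hpos.trans hk) (by simpa using h))

/-- The number of steps from `d` to `d'` in the cyclic order around their common vertex; it is `0`
when the arrows belong to different vertices. -/
noncomputable def arcLength (d d' : Γ.Arrow) : ℕ := sInf {k | (Γ.next ^ k) d = d'}

variable [Finite V]

theorem turnLength_pos (d : Γ.Arrow) : 0 < turnLength d := by
  apply Function.minimalPeriod_pos_of_mem_periodicPts
  obtain ⟨n, hn, hpow⟩ := (isOfFinOrder_of_finite Γ.next).exists_pow_eq_one
  refine ⟨n, hn, ?_⟩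
  rw [Function.IsPeriodicPt, Function.IsFixedPt, Equiv.Perm.iterate_eq_pow, hpow]
  rfl

theorem exists_next_pow_eq {d d' : Γ.Arrow} (h : d.fst = d'.fst) :
    ∃ k < turnLength d, (Γ.next ^ k) d = d' := by
  obtain ⟨k, hk⟩ := (Γ.next_cyclic d d' h).exists_nat_pow_eq
  refine ⟨k % turnLength d, Nat.mod_lt _ (turnLength_pos d), ?_⟩
  rw [← hk, ← Equiv.Perm.iterate_eq_pow, ← Equiv.Perm.iterate_eq_pow]
  exact Function.iterate_mod_minimalPeriod_eq

theorem turnLength_eq {d d' : Γ.Arrow} (h : d.fst = d'.fst) : turnLength d = turnLength d' := by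
  obtain ⟨k, -, rfl⟩ := exists_next_pow_eq h
  rw [turnLength, turnLength, ← Equiv.Perm.iterate_eq_pow]
  exact (Function.minimalPeriod_apply_iterate
    (Function.minimalPeriod_pos_iff_mem_periodicPts.1 (turnLength_pos d)) k).symm

theorem turnLength_next_pow (d : Γ.Arrow) (k : ℕ) :
    turnLength ((Γ.next ^ k) d) = turnLength d :=
  turnLength_eq (fst_next_pow d k)

theorem turnLength_next (d : Γ.Arrow) : turnLength (Γ.next d) = turnLength d :=
  turnLength_eq (Γ.next_fst d)

theorem next_pow_arcLength {d d' : Γ.Arrow} (h : d.fst = d'.fst) :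
    (Γ.next ^ arcLength d d') d = d' :=
  have ⟨k, _, hk⟩ := exists_next_pow_eq h
  Nat.sInf_mem (s := {k | (Γ.next ^ k) d = d'}) ⟨k, hk⟩

theorem arcLength_lt (d d' : Γ.Arrow) : arcLength d d' < turnLength d := by
  by_cases h : d.fst = d'.fst
  · obtain ⟨k, hlt, hk⟩ := exists_next_pow_eq h
    exact (Nat.sInf_le hk).trans_lt hlt
  · have hempty : {k | (Γ.next ^ k) d = d'} = ∅ :=
      Set.eq_empty_of_forall_notMem fun k hk => h (hk ▸ (fst_next_pow d k).symm)
    rw [arcLength, hempty, Nat.sInf_empty]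
    exact turnLength_pos d

theorem arcLength_eq {d d' : Γ.Arrow} {k : ℕ} (hk : k < turnLength d)
    (h : (Γ.next ^ k) d = d') : arcLength d d' = k := by
  have hfst : d.fst = d'.fst := by rw [← h, fst_next_pow]
  exact next_pow_inj (arcLength_lt d d') hk ((next_pow_arcLength hfst).trans h.symm)

theorem arcLength_self (d : Γ.Arrow) : arcLength d d = 0 := arcLength_eq (turnLength_pos d) rfl

theorem arcLength_pos {d d' : Γ.Arrow} (h : d.fst = d'.fst) (hne : d ≠ d') :
    0 < arcLength d d' := by
  refine Nat.pos_of_ne_zero fun hzero => hne ?_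
  simpa [hzero] using next_pow_arcLength h

theorem arcLength_add_arcLength_comm {d d' : Γ.Arrow} (h : d.fst = d'.fst) (hne : d ≠ d') :
    arcLength d d' + arcLength d' d = turnLength d := by
  have hlt := arcLength_lt d d'
  have hpos := arcLength_pos h hne
  have hback : arcLength d' d = turnLength d - arcLength d d' := by
    apply arcLength_eq
    · rw [← turnLength_eq h]; lia
    · have hadd := next_pow_add d (arcLength d d') (turnLength d - arcLength d d')
      rwa [next_pow_arcLength h, Nat.add_sub_cancel' hlt.le, next_pow_turnLength] at hadd
  lia

theorem arcLength_add {a b c : Γ.Arrow} (hab : a.fst = b.fst) (hbc : b.fst = c.fst)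
    (hlt : arcLength a b + arcLength b c < turnLength a) :
    arcLength a c = arcLength a b + arcLength b c := by
  apply arcLength_eq hlt
  rw [← next_pow_add, next_pow_arcLength hab, next_pow_arcLength hbc]

theorem arcLength_sub {a b c : Γ.Arrow} (hab : a.fst = b.fst) (hbc : b.fst = c.fst)
    (hle : arcLength a b ≤ arcLength a c) : arcLength b c = arcLength a c - arcLength a b := by
  apply arcLength_eq
  · rw [← turnLength_eq hab]
    exact (Nat.sub_le _ _).trans_lt (arcLength_lt a c)
  · have hadd := next_pow_add a (arcLength a b) (arcLength a c - arcLength a b)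
    rwa [next_pow_arcLength hab, Nat.add_sub_cancel' hle,
      next_pow_arcLength (hab.trans hbc)] at hadd

theorem arcLength_sub_right {a b c : Γ.Arrow} (hab : a.fst = b.fst) (hbc : b.fst = c.fst)
    (hle : arcLength b c ≤ arcLength a c) :
    arcLength a b = arcLength a c - arcLength b c := by
  apply arcLength_eq ((Nat.sub_le _ _).trans_lt (arcLength_lt a c))
  apply (Γ.next ^ arcLength b c).injective
  rw [next_pow_add, next_pow_arcLength hbc, Nat.sub_add_cancel hle,
    next_pow_arcLength (hab.trans hbc)]

theorem arcLength_right_inj {a b c : Γ.Arrow} (hab : a.fst = b.fst) (hac : a.fst = c.fst)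
    (h : arcLength a b = arcLength a c) : b = c := by
  rw [← next_pow_arcLength hab, h, next_pow_arcLength hac]

theorem arcLength_next {a b : Γ.Arrow} (hab : a.fst = b.fst) (hne : Γ.next b ≠ a) :
    arcLength a (Γ.next b) = arcLength a b + 1 := by
  have hpow : (Γ.next ^ (arcLength a b + 1)) a = Γ.next b := by
    rw [next_pow_succ, next_pow_arcLength hab]
  refine arcLength_eq (lt_of_le_of_ne (arcLength_lt a b) fun hfull => hne ?_) hpow
  rw [← hpow, hfull, next_pow_turnLength]

end CyclicOrder

end BrauerTree

namespace BrauerTree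

section Algebra

variable {V : Type v} {Γ : BrauerTree V} (K : Type u) [Field K]

theorem toAlg_rel {x y : Γ.Free K} (h : Γ.Rel K x y) : Γ.toAlg K x = Γ.toAlg K y :=
  RingQuot.mkAlgHom_rel K h

theorem idemp_mul_self (i : Γ.Edge) : idemp K i * idemp K i = idemp K i := by
  rw [idemp, ← map_mul]; exact toAlg_rel K (.idem i)

theorem idemp_mul_of_ne {i j : Γ.Edge} (h : i ≠ j) : idemp K i * idemp K j = 0 := by
  rw [idemp, idemp, ← map_mul, toAlg_rel K (.orth i j h), map_zero]

theorem idemp_src_mul_arrow (d : Γ.Arrow) : idemp K (src d) * arrow K d = arrow K d := by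
  rw [idemp, arrow, ← map_mul]; exact toAlg_rel K (.src_mul d)

theorem arrow_mul_idemp_tgt (d : Γ.Arrow) : arrow K d * idemp K (tgt d) = arrow K d := by
  rw [idemp, arrow, ← map_mul]; exact toAlg_rel K (.mul_tgt d)

theorem arrow_mul_arrow_symm (d : Γ.Arrow) : arrow K d * arrow K (Γ.next d).symm = 0 := by
  rw [arrow, arrow, ← map_mul, toAlg_rel K (.zero d), map_zero]

theorem idemp_mul_arrow {i : Γ.Edge} {d : Γ.Arrow} (h : i ≠ src d) :
    idemp K i * arrow K d = 0 := by
  rw [← idemp_src_mul_arrow, ← mul_assoc, idemp_mul_of_ne K h, zero_mul]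

theorem arrow_mul_idemp {i : Γ.Edge} {d : Γ.Arrow} (h : tgt d ≠ i) :
    arrow K d * idemp K i = 0 := by
  rw [← arrow_mul_idemp_tgt, mul_assoc, idemp_mul_of_ne K h, mul_zero]

theorem arrow_mul_arrow {d d' : Γ.Arrow} (h : d' ≠ Γ.next d) : arrow K d * arrow K d' = 0 := by
  by_cases hs : src d' = tgt d
  · rcases src_eq_src_iff.1 hs with h' | h'
    · exact absurd h' h
    · rw [h', arrow_mul_arrow_symm]
  · rw [← idemp_src_mul_arrow K d', ← mul_assoc, arrow_mul_idemp K (Ne.symm hs), zero_mul]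

/-- The path of length `k` around `d.fst` that starts with the arrow `d`. -/
noncomputable def path (d : Γ.Arrow) : ℕ → Γ.Alg K
  | 0 => idemp K (src d)
  | k + 1 => path d k * arrow K ((Γ.next ^ k) d)

theorem path_succ (d : Γ.Arrow) (k : ℕ) :
    path K d (k + 1) = path K d k * arrow K ((Γ.next ^ k) d) := rfl

theorem idemp_src_mul_path (d : Γ.Arrow) (k : ℕ) :
    idemp K (src d) * path K d k = path K d k := by
  induction k with
  | zero => exact idemp_mul_self K _
  | succ k ih => rw [path_succ, ← mul_assoc, ih]

theorem path_mul_idemp_src (d : Γ.Arrow) (k : ℕ) :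
    path K d k * idemp K (src ((Γ.next ^ k) d)) = path K d k := by
  cases k with
  | zero => exact idemp_mul_self K _
  | succ k => rw [path_succ, mul_assoc, next_pow_succ, ← tgt, arrow_mul_idemp_tgt]

theorem idemp_mul_path {i : Γ.Edge} {d : Γ.Arrow} (h : i ≠ src d) (k : ℕ) :
    idemp K i * path K d k = 0 := by
  rw [← idemp_src_mul_path, ← mul_assoc, idemp_mul_of_ne K h, zero_mul]

theorem path_mul_idemp {i : Γ.Edge} {d : Γ.Arrow} {k : ℕ} (h : src ((Γ.next ^ k) d) ≠ i) :
    path K d k * idemp K i = 0 := by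
  rw [← path_mul_idemp_src, mul_assoc, idemp_mul_of_ne K h, mul_zero]

theorem path_mul_path (d : Γ.Arrow) (k l : ℕ) :
    path K d k * path K ((Γ.next ^ k) d) l = path K d (k + l) := by
  induction l with
  | zero => exact path_mul_idemp_src K d k
  | succ l ih => rw [path_succ, ← mul_assoc, ih, next_pow_add, ← add_assoc, path_succ]

theorem path_one (d : Γ.Arrow) : path K d 1 = arrow K d := idemp_src_mul_arrow K d

theorem path_succ' (d : Γ.Arrow) (k : ℕ) :
    path K d (k + 1) = arrow K d * path K (Γ.next d) k := by
  rw [← path_one, add_comm k 1]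
  exact (path_mul_path K d 1 k).symm

theorem path_mul_arrow_of_ne {d d' : Γ.Arrow} {k : ℕ} (hk : 0 < k)
    (h : d' ≠ (Γ.next ^ k) d) : path K d k * arrow K d' = 0 := by
  obtain ⟨k, rfl⟩ := Nat.exists_eq_succ_of_ne_zero hk.ne'
  rw [path_succ, mul_assoc, arrow_mul_arrow, mul_zero]
  rwa [← next_pow_succ]

theorem path_mul_path_of_ne {d d' : Γ.Arrow} {k l : ℕ} (hk : 0 < k) (hl : 0 < l)
    (h : d' ≠ (Γ.next ^ k) d) : path K d k * path K d' l = 0 := by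
  obtain ⟨l, rfl⟩ := Nat.exists_eq_succ_of_ne_zero hl.ne'
  rw [path_succ', ← mul_assoc, path_mul_arrow_of_ne K hk h, zero_mul]

theorem idemp_src_mul_toAlg_prod (d : Γ.Arrow) (k : ℕ) :
    idemp K (src d) * Γ.toAlg K ((List.range k).map
      fun m => freeArrow K ((Γ.next ^ m) d)).prod = path K d k := by
  induction k with
  | zero => simp [path]
  | succ k ih =>
    rw [List.range_succ, List.map_append, List.prod_append, map_mul, ← mul_assoc, ih]
    simp [path_succ, arrow]

variable (Γ) in
/-- The subspace of the algebra spanned by the paths around the vertices of the tree. -/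
noncomputable def pathSpan : Submodule K (Γ.Alg K) :=
  Submodule.span K (Set.range fun p : Γ.Arrow × ℕ => path K p.1 p.2)

theorem mul_mem_pathSpan {x y : Γ.Alg K} (hy : ∀ d k, path K d k * y ∈ Γ.pathSpan K)
    (hx : x ∈ Γ.pathSpan K) : x * y ∈ Γ.pathSpan K := by
  induction hx using Submodule.span_induction with
  | mem x hx => obtain ⟨⟨d, k⟩, rfl⟩ := hx; exact hy d k
  | zero => rw [zero_mul]; exact Submodule.zero_mem _
  | add x x' _ _ hx hx' => rw [add_mul]; exact Submodule.add_mem _ hx hx'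
  | smul c x _ hx => rw [smul_mul_assoc]; exact Submodule.smul_mem _ c hx

theorem path_mem_pathSpan (d : Γ.Arrow) (k : ℕ) :
    path K d k ∈ Γ.pathSpan K :=
  Submodule.subset_span ⟨(d, k), rfl⟩

theorem path_mul_arrow_mem_pathSpan (d d' : Γ.Arrow) (k : ℕ) :
    path K d k * arrow K d' ∈ Γ.pathSpan K := by
  by_cases hd' : d' = (Γ.next ^ k) d
  · rw [hd', ← path_succ]; exact path_mem_pathSpan K d (k + 1)
  rcases Nat.eq_zero_or_pos k with rfl | hk
  · change idemp K (src d) * arrow K d' ∈ _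
    by_cases hsrc : src d = src d'
    · rw [hsrc, idemp_src_mul_arrow, ← path_one]; exact path_mem_pathSpan K d' 1
    · rw [idemp_mul_arrow K hsrc]; exact Submodule.zero_mem _
  · rw [path_mul_arrow_of_ne K hk hd']; exact Submodule.zero_mem _

theorem path_mul_idemp_mem_pathSpan (d : Γ.Arrow) (k : ℕ) (i : Γ.Edge) :
    path K d k * idemp K i ∈ Γ.pathSpan K := by
  by_cases hi : src ((Γ.next ^ k) d) = i
  · rw [← hi, path_mul_idemp_src]; exact path_mem_pathSpan K d k
  · rw [path_mul_idemp K hi]; exact Submodule.zero_mem _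

theorem mul_toAlg_mem_pathSpan (y : Γ.Free K) {x : Γ.Alg K}
    (hx : x ∈ Γ.pathSpan K) :
    x * Γ.toAlg K y ∈ Γ.pathSpan K := by
  induction y using FreeAlgebra.induction generalizing x with
  | grade0 r =>
    rw [AlgHom.commutes, ← Algebra.commutes, ← Algebra.smul_def]
    exact Submodule.smul_mem _ r hx
  | grade1 g =>
    rcases g with i | a
    · exact mul_mem_pathSpan K (fun d k => path_mul_idemp_mem_pathSpan K d k i) hx
    · exact mul_mem_pathSpan K (fun d k => path_mul_arrow_mem_pathSpan K d a k) hx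
  | mul a b ha hb =>
    rw [map_mul, ← mul_assoc]
    exact hb (ha hx)
  | add a b ha hb =>
    rw [map_add, mul_add]
    exact Submodule.add_mem _ (ha hx) (hb hx)

variable [Finite V]

theorem toAlg_freeTurn (d : Γ.Arrow) : Γ.toAlg K (freeTurn K d) = path K d (turnLength d) := by
  rw [← idemp_src_mul_toAlg_prod, freeTurn, ← turnLength]
  obtain ⟨k, hk⟩ := Nat.exists_eq_succ_of_ne_zero (turnLength_pos d).ne'
  rw [hk, List.range_succ_eq_map, List.map_cons, List.prod_cons, map_mul, ← mul_assoc]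
  congr 1
  exact (idemp_src_mul_arrow K d).symm

theorem path_turnLength_symm (d : Γ.Arrow) :
    path K d (turnLength d) = path K d.symm (turnLength d.symm) := by
  rw [← toAlg_freeTurn, ← toAlg_freeTurn]; exact toAlg_rel K (.turn d)

theorem path_eq_zero {d : Γ.Arrow} {k : ℕ} (h : turnLength d < k) : path K d k = 0 := by
  obtain ⟨m, rfl⟩ := Nat.exists_eq_add_of_lt h
  rw [add_assoc, ← path_mul_path, path_turnLength_symm,
    path_mul_path_of_ne K (turnLength_pos _) (Nat.succ_pos m)]
  rw [next_pow_turnLength, next_pow_turnLength]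
  exact fun h => d.symm_ne h.symm

/-- The full turn starting at the vertex `i` of the quiver. -/
noncomputable def socElt (i : Γ.Edge) : Γ.Alg K :=
  path K (exists_src_eq i).choose (turnLength (exists_src_eq i).choose)

theorem path_turnLength (d : Γ.Arrow) : path K d (turnLength d) = socElt K (src d) := by
  have h := (exists_src_eq (src d)).choose_spec
  rw [socElt]
  rcases src_eq_src_iff.1 h with h | h
  · rw [h]
  · rw [h, path_turnLength_symm]

theorem idemp_mul_socElt (i : Γ.Edge) : idemp K i * socElt K i = socElt K i := by
  obtain ⟨d, rfl⟩ := exists_src_eq i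
  rw [← path_turnLength, idemp_src_mul_path]

theorem socElt_mul_idemp (i : Γ.Edge) : socElt K i * idemp K i = socElt K i := by
  obtain ⟨d, rfl⟩ := exists_src_eq i
  have := path_mul_idemp_src K d (turnLength d)
  rwa [next_pow_turnLength, path_turnLength] at this

theorem path_mul_socElt {d : Γ.Arrow} {k : ℕ} (hk : 0 < k) (i : Γ.Edge) :
    path K d k * socElt K i = 0 := by
  obtain ⟨d', rfl⟩ := exists_src_eq i
  rw [← path_turnLength]
  by_cases h : d' = (Γ.next ^ k) d
  · subst h
    rw [path_mul_path, path_eq_zero]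
    rw [turnLength_next_pow]; lia
  · exact path_mul_path_of_ne K hk (turnLength_pos _) h

theorem socElt_mul_path {d : Γ.Arrow} {k : ℕ} (hk : 0 < k) (i : Γ.Edge) :
    socElt K i * path K d k = 0 := by
  obtain ⟨d', rfl⟩ := exists_src_eq i
  rw [← path_turnLength]
  by_cases h : d = d'
  · subst h
    have := path_mul_path K d (turnLength d) k
    rw [next_pow_turnLength] at this
    rw [this, path_eq_zero K (by lia)]
  · exact path_mul_path_of_ne K (turnLength_pos _) hk (by rwa [next_pow_turnLength])

theorem finsum_idemp : ∑ᶠ i : Γ.Edge, idemp K i = 1 := by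
  have h := toAlg_rel K (Rel.one (Γ := Γ) (K := K))
  rw [map_one] at h
  rw [← h]
  have := (Γ.toAlg K).toAddMonoidHom.map_finsum (f := fun i : Γ.Edge => freeVertex K i)
    (Set.toFinite _)
  exact this.symm

theorem pathSpan_eq_top : Γ.pathSpan K = ⊤ := by
  refine eq_top_iff.2 fun y _ => ?_
  obtain ⟨y, rfl⟩ : ∃ x, Γ.toAlg K x = y := RingQuot.mkAlgHom_surjective K (Γ.Rel K) y
  have hone : (1 : Γ.Alg K) ∈ Γ.pathSpan K := by
    rw [← finsum_idemp K]
    refine finsum_induction (· ∈ Γ.pathSpan K) (Submodule.zero_mem _)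
      (fun _ _ => Submodule.add_mem _) fun i => ?_
    obtain ⟨d, rfl⟩ := exists_src_eq i
    exact path_mem_pathSpan K d 0
  simpa only [one_mul] using mul_toAlg_mem_pathSpan K y hone

end Algebra

end BrauerTree

namespace BrauerTree

section Representation

theorem end_finsupp_ext {R α : Type*} [CommSemiring R] {f g : Module.End R (α →₀ R)}
    (h : ∀ x, f (Finsupp.single x 1) = g (Finsupp.single x 1)) : f = g :=
  Finsupp.lhom_ext' fun x => LinearMap.ext_ring (h x)

variable {V : Type v} (Γ : BrauerTree V) (K : Type u) [Field K]

/-- The index set of the basis of paths on which the algebra acts in its regular representation: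
the trivial path at `i`, the full turn at `i`, and the path of length `k` starting with the
arrow `d`, of which only those with `0 < k < turnLength d` occur. -/
inductive RepIndex : Type v
  | trivial (i : Γ.Edge)
  | turn (i : Γ.Edge)
  | arc (d : Γ.Arrow) (k : ℕ)

variable {Γ}

/-- The vertex of the quiver at which a path starts. -/
def RepIndex.source : Γ.RepIndex → Γ.Edge
  | trivial i => i
  | turn i => i
  | arc d _ => src d

open Classical in
/-- The vector of the regular representation belonging to the path of length `k` that starts
with `d`. -/
noncomputable def repPath (d : Γ.Arrow) (k : ℕ) : Γ.RepIndex →₀ K :=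
  if k = 0 then Finsupp.single (RepIndex.trivial (src d)) 1
  else if k < turnLength d then Finsupp.single (RepIndex.arc d k) 1
  else if k = turnLength d then Finsupp.single (RepIndex.turn (src d)) 1
  else 0

theorem repPath_zero (d : Γ.Arrow) : repPath K d 0 = Finsupp.single (RepIndex.trivial (src d)) 1 :=
  if_pos rfl

theorem repPath_of_lt {d : Γ.Arrow} {k : ℕ} (hpos : 0 < k) (h : k < turnLength d) :
    repPath K d k = Finsupp.single (RepIndex.arc d k) 1 := by
  rw [repPath, if_neg hpos.ne', if_pos h]

theorem repPath_turnLength [Finite V] (d : Γ.Arrow) :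
    repPath K d (turnLength d) = Finsupp.single (RepIndex.turn (src d)) 1 := by
  rw [repPath, if_neg (turnLength_pos d).ne', if_neg (lt_irrefl _), if_pos rfl]

theorem repPath_of_gt {d : Γ.Arrow} {k : ℕ} (h : turnLength d < k) : repPath K d k = 0 := by
  rw [repPath, if_neg (by lia), if_neg (by lia), if_neg (by lia)]

open Classical in
/-- The action of a vertex in the regular representation. -/
noncomputable def repVertex (i : Γ.Edge) : Module.End K (Γ.RepIndex →₀ K) :=
  Finsupp.linearCombination K fun x => if x.source = i then Finsupp.single x (1 : K) else 0

open Classical in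
/-- The action of an arrow in the regular representation. -/
noncomputable def repArrow (a : Γ.Arrow) : Module.End K (Γ.RepIndex →₀ K) :=
  Finsupp.linearCombination K fun x => match x with
    | .trivial i => if tgt a = i then repPath K a 1 else 0
    | .turn _ => 0
    | .arc d k => if Γ.next a = d ∧ 0 < k ∧ k < turnLength d then repPath K a (k + 1) else 0

theorem repVertex_single (i : Γ.Edge) (x : Γ.RepIndex) (h : x.source = i) :
    repVertex K i (Finsupp.single x 1) = Finsupp.single x 1 := by
  simp [repVertex, h]

theorem repVertex_single_of_ne (i : Γ.Edge) (x : Γ.RepIndex) (h : x.source ≠ i) :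
    repVertex K i (Finsupp.single x 1) = 0 := by
  simp [repVertex, h]

theorem repVertex_src_repPath (d : Γ.Arrow) (k : ℕ) :
    repVertex K (src d) (repPath K d k) = repPath K d k := by
  unfold repPath
  split_ifs
  · exact repVertex_single K _ _ rfl
  · exact repVertex_single K _ _ rfl
  · exact repVertex_single K _ _ rfl
  · exact map_zero _

theorem repArrow_trivial (a : Γ.Arrow) :
    repArrow K a (Finsupp.single (RepIndex.trivial (tgt a)) 1) = repPath K a 1 := by
  simp [repArrow]

theorem repArrow_trivial_of_ne {a : Γ.Arrow} {i : Γ.Edge} (h : tgt a ≠ i) :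
    repArrow K a (Finsupp.single (RepIndex.trivial i) 1) = 0 := by
  simp [repArrow, h]

theorem repArrow_turn (a : Γ.Arrow) (i : Γ.Edge) :
    repArrow K a (Finsupp.single (RepIndex.turn i) 1) = 0 := by
  simp [repArrow]

theorem repArrow_arc_of_not {a d : Γ.Arrow} {k : ℕ}
    (h : ¬ (Γ.next a = d ∧ 0 < k ∧ k < turnLength d)) :
    repArrow K a (Finsupp.single (RepIndex.arc d k) 1) = 0 := by
  simp only [repArrow, Finsupp.linearCombination_single, one_smul]
  exact if_neg h

theorem repArrow_arc {a : Γ.Arrow} {k : ℕ} (hpos : 0 < k) (hk : k < turnLength (Γ.next a)) :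
    repArrow K a (Finsupp.single (RepIndex.arc (Γ.next a) k) 1) = repPath K a (k + 1) := by
  simp only [repArrow, Finsupp.linearCombination_single, one_smul]
  exact if_pos ⟨trivial, hpos, hk⟩

theorem repArrow_repPath [Finite V] (a : Γ.Arrow) (k : ℕ) :
    repArrow K a (repPath K (Γ.next a) k) = repPath K a (k + 1) := by
  rcases Nat.eq_zero_or_pos k with rfl | hpos
  · rw [repPath_zero]; exact repArrow_trivial K a
  rcases lt_trichotomy k (turnLength (Γ.next a)) with h | h | h
  · rw [repPath_of_lt K hpos h, repArrow_arc K hpos h]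
  · subst h
    rw [repPath_turnLength, repArrow_turn, turnLength_next, repPath_of_gt K (Nat.lt_succ_self _)]
  · rw [repPath_of_gt K h, map_zero, repPath_of_gt]
    rw [turnLength_next] at h; lia

theorem repArrow_repPath_of_ne [Finite V] {a d : Γ.Arrow} {k : ℕ} (hpos : 0 < k)
    (hd : d ≠ Γ.next a) : repArrow K a (repPath K d k) = 0 := by
  rcases lt_trichotomy k (turnLength d) with h | h | h
  · rw [repPath_of_lt K hpos h, repArrow_arc_of_not]
    exact fun h => hd h.1.symm
  · subst h
    rw [repPath_turnLength, repArrow_turn]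
  · rw [repPath_of_gt K h, map_zero]

theorem repVertex_mul_self (i : Γ.Edge) : repVertex K i * repVertex K i = repVertex K i := by
  refine end_finsupp_ext fun x => ?_
  by_cases h : x.source = i
  · simp [repVertex_single K i x h]
  · simp [repVertex_single_of_ne K i x h]

theorem repVertex_mul_of_ne {i j : Γ.Edge} (hij : i ≠ j) :
    repVertex K i * repVertex K j = 0 := by
  refine end_finsupp_ext fun x => ?_
  by_cases h : x.source = j
  · rw [Module.End.mul_apply, repVertex_single K j x h,
      repVertex_single_of_ne K i x (h ▸ hij.symm), LinearMap.zero_apply]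
  · simp [repVertex_single_of_ne K j x h]

theorem finsum_repVertex [Finite V] : ∑ᶠ i : Γ.Edge, repVertex K i = 1 := by
  refine end_finsupp_ext fun x => ?_
  have hfinsum := (LinearMap.applyₗ (R := K) (M₂ := Γ.RepIndex →₀ K)
    (Finsupp.single x (1 : K))).toAddMonoidHom.map_finsum (f := fun i : Γ.Edge => repVertex K i)
    (Set.toFinite _)
  refine hfinsum.trans ?_
  rw [finsum_eq_single _ x.source]
  · exact repVertex_single K _ x rfl
  · exact fun j hj => repVertex_single_of_ne K _ x hj.symm

theorem repVertex_mul_repArrow (a : Γ.Arrow) :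
    repVertex K (src a) * repArrow K a = repArrow K a := by
  refine end_finsupp_ext fun x => ?_
  rw [Module.End.mul_apply]
  rcases x with i | i | ⟨d, k⟩
  · by_cases h : tgt a = i
    · subst h; rw [repArrow_trivial, repVertex_src_repPath]
    · rw [repArrow_trivial_of_ne K h, map_zero]
  · rw [repArrow_turn, map_zero]
  · by_cases h : Γ.next a = d ∧ 0 < k ∧ k < turnLength d
    · obtain ⟨rfl, h⟩ := h
      rw [repArrow_arc K h.1 h.2, repVertex_src_repPath]
    · rw [repArrow_arc_of_not K h, map_zero]

theorem repArrow_mul_repVertex (a : Γ.Arrow) :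
    repArrow K a * repVertex K (tgt a) = repArrow K a := by
  refine end_finsupp_ext fun x => ?_
  rw [Module.End.mul_apply]
  by_cases hx : x.source = tgt a
  · rw [repVertex_single K _ x hx]
  · rw [repVertex_single_of_ne K _ x hx, map_zero]
    rcases x with i | i | ⟨d, k⟩
    · exact (repArrow_trivial_of_ne K (Ne.symm hx)).symm
    · rw [repArrow_turn]
    · rw [repArrow_arc_of_not]
      rintro ⟨rfl, -⟩
      exact hx rfl

theorem repArrow_mul_symm [Finite V] (a : Γ.Arrow) :
    repArrow K a * repArrow K (Γ.next a).symm = 0 := by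
  have hpath : ∀ k, 0 < k → repArrow K a (repPath K (Γ.next a).symm k) = 0 := fun k hk =>
    repArrow_repPath_of_ne K hk (Γ.next a).symm_ne
  refine end_finsupp_ext fun x => ?_
  rw [Module.End.mul_apply, LinearMap.zero_apply]
  rcases x with i | i | ⟨d, k⟩
  · by_cases h : tgt (Γ.next a).symm = i
    · subst h; rw [repArrow_trivial, hpath 1 one_pos]
    · rw [repArrow_trivial_of_ne K h, map_zero]
  · rw [repArrow_turn, map_zero]
  · by_cases h : Γ.next (Γ.next a).symm = d ∧ 0 < k ∧ k < turnLength d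
    · obtain ⟨rfl, h⟩ := h
      rw [repArrow_arc K h.1 h.2, hpath _ (Nat.succ_pos k)]
    · rw [repArrow_arc_of_not K h, map_zero]

theorem repArrow_prod_repPath [Finite V] (d : Γ.Arrow) (k m : ℕ) :
    ((List.range k).map fun m => repArrow K ((Γ.next ^ m) d)).prod
      (repPath K ((Γ.next ^ k) d) m) = repPath K d (m + k) := by
  induction k generalizing m with
  | zero => simp
  | succ k ih =>
    rw [List.range_succ, List.map_append, List.prod_append, Module.End.mul_apply,
      List.map_singleton, List.prod_singleton, next_pow_succ, repArrow_repPath, ih]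
    congr 1; lia

/-- The action of a full turn in the regular representation. -/
noncomputable def repTurn (d : Γ.Arrow) : Module.End K (Γ.RepIndex →₀ K) :=
  ((List.range (turnLength d)).map fun m => repArrow K ((Γ.next ^ m) d)).prod

theorem repTurn_repPath [Finite V] (d : Γ.Arrow) (m : ℕ) :
    repTurn K d (repPath K d m) = repPath K d (m + turnLength d) := by
  have := repArrow_prod_repPath K d (turnLength d) m
  rwa [next_pow_turnLength] at this

theorem repTurn_eq_zero [Finite V] {d : Γ.Arrow} {x : Γ.RepIndex →₀ K}
    (h : ∀ a, Γ.next a = d → repArrow K a x = 0) : repTurn K d x = 0 := by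
  obtain ⟨k, hk⟩ := Nat.exists_eq_succ_of_ne_zero (turnLength_pos d).ne'
  rw [repTurn, hk, List.range_succ, List.map_append, List.prod_append, Module.End.mul_apply,
      List.map_singleton, List.prod_singleton, h, map_zero]
  have := next_pow_turnLength d
  rwa [hk, next_pow_succ] at this

theorem repTurn_trivial [Finite V] (d : Γ.Arrow) :
    repTurn K d (Finsupp.single (RepIndex.trivial (src d)) 1) =
      Finsupp.single (RepIndex.turn (src d)) 1 := by
  rw [← repPath_zero, repTurn_repPath, zero_add, repPath_turnLength]

theorem repTurn_trivial_of_ne [Finite V] {d : Γ.Arrow} {i : Γ.Edge} (h : src d ≠ i) :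
    repTurn K d (Finsupp.single (RepIndex.trivial i) 1) = 0 := by
  refine repTurn_eq_zero K fun a ha => repArrow_trivial_of_ne K ?_
  rwa [tgt, ha]

theorem repTurn_turn [Finite V] (d : Γ.Arrow) (i : Γ.Edge) :
    repTurn K d (Finsupp.single (RepIndex.turn i) 1) = 0 :=
  repTurn_eq_zero K fun a _ => repArrow_turn K a i

theorem repTurn_arc [Finite V] (d d' : Γ.Arrow) (k : ℕ) :
    repTurn K d (Finsupp.single (RepIndex.arc d' k) 1) = 0 := by
  by_cases hd : d = d' ∧ 0 < k ∧ k < turnLength d'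
  · obtain ⟨rfl, hpos, hlt⟩ := hd
    rw [← repPath_of_lt K hpos hlt, repTurn_repPath, repPath_of_gt]
    lia
  · refine repTurn_eq_zero K fun a ha => repArrow_arc_of_not K ?_
    rwa [ha]

theorem repTurn_symm [Finite V] (d : Γ.Arrow) : repTurn K d = repTurn K d.symm := by
  refine end_finsupp_ext fun x => ?_
  rcases x with i | i | ⟨d', k⟩
  · by_cases hi : src d = i
    · subst hi
      have hsymm := repTurn_trivial K d.symm
      rw [src_symm] at hsymm
      rw [repTurn_trivial, hsymm]
    · rw [repTurn_trivial_of_ne K hi, repTurn_trivial_of_ne K (by rwa [src_symm])]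
  · rw [repTurn_turn, repTurn_turn]
  · rw [repTurn_arc, repTurn_arc]

variable (Γ) in
/-- The regular representation on the free algebra. -/
noncomputable def repFree : Γ.Free K →ₐ[K] Module.End K (Γ.RepIndex →₀ K) :=
  FreeAlgebra.lift K (Sum.elim (repVertex K) (repArrow K))

theorem repFree_vertex (i : Γ.Edge) : repFree Γ K (freeVertex K i) = repVertex K i := by
  simp [repFree, freeVertex]

theorem repFree_arrow (a : Γ.Arrow) : repFree Γ K (freeArrow K a) = repArrow K a := by
  simp [repFree, freeArrow]

theorem repFree_turn (d : Γ.Arrow) : repFree Γ K (freeTurn K d) = repTurn K d := by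
  rw [freeTurn, map_list_prod, List.map_map, repTurn, turnLength]
  congr 1
  refine List.map_congr_left fun k _ => ?_
  exact repFree_arrow K _

theorem repFree_rel [Finite V] {x y : Γ.Free K} (h : Γ.Rel K x y) :
    repFree Γ K x = repFree Γ K y := by
  cases h with
  | idem i => rw [map_mul, repFree_vertex, repVertex_mul_self]
  | orth i j h => rw [map_mul, repFree_vertex, repFree_vertex, repVertex_mul_of_ne K h, map_zero]
  | one =>
    rw [map_one, ← finsum_repVertex]
    refine ((repFree Γ K).toAddMonoidHom.map_finsum (f := fun i : Γ.Edge => freeVertex K i)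
      (Set.toFinite _)).trans ?_
    exact finsum_congr fun i => repFree_vertex K i
  | src_mul d => rw [map_mul, repFree_vertex, repFree_arrow, repVertex_mul_repArrow]
  | mul_tgt d => rw [map_mul, repFree_vertex, repFree_arrow, repArrow_mul_repVertex]
  | zero d => rw [map_mul, repFree_arrow, repFree_arrow, repArrow_mul_symm, map_zero]
  | turn d => rw [repFree_turn, repFree_turn, repTurn_symm]

variable (Γ) in
/-- The regular representation of the Brauer tree algebra. -/
noncomputable def rep [Finite V] : Γ.Alg K →ₐ[K] Module.End K (Γ.RepIndex →₀ K) :=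
  RingQuot.liftAlgHom K ⟨repFree Γ K, fun _ _ h => repFree_rel K h⟩

theorem rep_toAlg [Finite V] (x : Γ.Free K) : rep Γ K (Γ.toAlg K x) = repFree Γ K x :=
  RingQuot.liftAlgHom_mkAlgHom_apply ..

theorem rep_idemp [Finite V] (i : Γ.Edge) : rep Γ K (idemp K i) = repVertex K i :=
  (rep_toAlg K _).trans (repFree_vertex K i)

theorem rep_arrow [Finite V] (a : Γ.Arrow) : rep Γ K (arrow K a) = repArrow K a :=
  (rep_toAlg K _).trans (repFree_arrow K a)

variable (Γ) in
/-- The coordinates of an element of the Brauer tree algebra with respect to the basis of paths. -/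
noncomputable def coords [Finite V] : Γ.Alg K →ₗ[K] (Γ.RepIndex →₀ K) :=
  LinearMap.applyₗ (∑ᶠ i : Γ.Edge, Finsupp.single (RepIndex.trivial i) (1 : K)) ∘ₗ
    (rep Γ K).toLinearMap

theorem coords_idemp [Finite V] (i : Γ.Edge) :
    coords Γ K (idemp K i) = Finsupp.single (RepIndex.trivial i) 1 := by
  change rep Γ K (idemp K i) (∑ᶠ i : Γ.Edge, Finsupp.single (RepIndex.trivial i) (1 : K)) = _
  rw [rep_idemp]
  refine ((repVertex K i).toAddMonoidHom.map_finsum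
    (f := fun i : Γ.Edge => Finsupp.single (RepIndex.trivial i) (1 : K)) (Set.toFinite _)).trans ?_
  rw [finsum_eq_single _ i]
  · exact repVertex_single K _ _ rfl
  · exact fun j hj => repVertex_single_of_ne K _ _ hj

theorem coords_path [Finite V] (d : Γ.Arrow) (k : ℕ) :
    coords Γ K (path K d k) = repPath K d k := by
  induction k generalizing d with
  | zero => rw [repPath_zero]; exact coords_idemp K _
  | succ k ih =>
    have hnext := ih (Γ.next d)
    change rep Γ K _ _ = _ at hnext
    change rep Γ K _ _ = _
    rw [path_succ', map_mul, Module.End.mul_apply, hnext, rep_arrow, repArrow_repPath]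

end Representation

end BrauerTree
namespace BrauerTree

section Coordinates

variable {V : Type v} {Γ : BrauerTree V} (K : Type u) [Field K]

/-- The vertex of the quiver at which a path ends. -/
def RepIndex.target : Γ.RepIndex → Γ.Edge
  | trivial i => i
  | turn i => i
  | arc d k => src ((Γ.next ^ k) d)

/-- The sum of the idempotents belonging to a set of vertices of the quiver. -/
noncomputable def idempSum (I : Finset Γ.Edge) : Γ.Alg K := ∑ i ∈ I, idemp K i

section

variable {K}

-- `Finset.mul_sum` and its relatives do not rewrite here: the additive monoid found on the quotient
-- ring `Γ.Alg K` agrees with the one of these lemmas only after unfolding `RingQuot.instRing`.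
theorem alg_mul_sum {ι : Type*} (s : Finset ι) (f : ι → Γ.Alg K) (x : Γ.Alg K) :
    x * ∑ i ∈ s, f i = ∑ i ∈ s, x * f i := by exact Finset.mul_sum s f x

theorem alg_sum_mul {ι : Type*} (s : Finset ι) (f : ι → Γ.Alg K) (x : Γ.Alg K) :
    (∑ i ∈ s, f i) * x = ∑ i ∈ s, f i * x := by exact Finset.sum_mul s f x

theorem alg_sum_sub {ι : Type*} (s : Finset ι) (f g : ι → Γ.Alg K) :
    ∑ i ∈ s, (f i - g i) = ∑ i ∈ s, f i - ∑ i ∈ s, g i := by exact Finset.sum_sub_distrib f g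

theorem idemp_mul_idempSum {I : Finset Γ.Edge} {i : Γ.Edge} (h : i ∈ I) :
    idemp K i * idempSum K I = idemp K i := by
  rw [idempSum, alg_mul_sum, Finset.sum_eq_single i, idemp_mul_self]
  · exact fun j _ hj => idemp_mul_of_ne K hj.symm
  · exact fun h' => absurd h h'

theorem idemp_mul_idempSum_of_notMem {I : Finset Γ.Edge} {i : Γ.Edge} (h : i ∉ I) :
    idemp K i * idempSum K I = 0 := by
  rw [idempSum, alg_mul_sum]
  exact Finset.sum_eq_zero fun j hj => idemp_mul_of_ne K fun e => h (e ▸ hj)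

theorem idempSum_mul_idemp {I : Finset Γ.Edge} {i : Γ.Edge} (h : i ∈ I) :
    idempSum K I * idemp K i = idemp K i := by
  rw [idempSum, alg_sum_mul, Finset.sum_eq_single i, idemp_mul_self]
  · exact fun j _ hj => idemp_mul_of_ne K hj
  · exact fun h' => absurd h h'

theorem idempSum_mul_idemp_of_notMem {I : Finset Γ.Edge} {i : Γ.Edge} (h : i ∉ I) :
    idempSum K I * idemp K i = 0 := by
  rw [idempSum, alg_sum_mul]
  exact Finset.sum_eq_zero fun j hj => idemp_mul_of_ne K fun e => h (e ▸ hj)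

theorem idempSum_mul_idempSum (I : Finset Γ.Edge) :
    idempSum K I * idempSum K I = idempSum K I := by
  conv_lhs => rw [idempSum, alg_sum_mul]
  exact Finset.sum_congr rfl fun i hi => idemp_mul_idempSum hi

end

open Classical in
/-- The path from `a` to `b` around their common vertex, and zero if there is none. -/
noncomputable def arc (a b : Γ.Arrow) : Γ.Alg K :=
  if a.fst = b.fst ∧ a ≠ b then path K a (arcLength a b) else 0

theorem arc_eq {a b : Γ.Arrow} (h : a.fst = b.fst) (hne : a ≠ b) :
    arc K a b = path K a (arcLength a b) := if_pos ⟨h, hne⟩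

theorem arc_eq_zero {a b : Γ.Arrow} (h : ¬ (a.fst = b.fst ∧ a ≠ b)) : arc K a b = 0 := if_neg h

theorem idemp_src_mul_arc (a b : Γ.Arrow) : idemp K (src a) * arc K a b = arc K a b := by
  unfold arc
  split_ifs
  · exact idemp_src_mul_path K _ _
  · exact mul_zero _

variable [Finite V]

noncomputable instance : Fintype Γ.Arrow := Fintype.ofFinite _

noncomputable instance : Fintype Γ.Edge := Fintype.ofFinite _

theorem path_induction {p : Γ.Alg K → Prop} (path : ∀ d k, p (path K d k)) (zero : p 0)
    (add : ∀ x y, p x → p y → p (x + y)) (smul : ∀ (c : K) x, p x → p (c • x))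
    (x : Γ.Alg K) : p x := by
  have hx : x ∈ Γ.pathSpan K := by rw [pathSpan_eq_top]; trivial
  induction hx using Submodule.span_induction with
  | mem x hx => obtain ⟨⟨d, k⟩, rfl⟩ := hx; exact path d k
  | zero => exact zero
  | add x y _ _ hx hy => exact add x y hx hy
  | smul c x _ hx => exact smul c x hx

theorem source_of_repPath_ne_zero {d : Γ.Arrow} {k : ℕ} {y : Γ.RepIndex}
    (h : repPath K d k y ≠ 0) : y.source = src d ∧ y.target = src ((Γ.next ^ k) d) := by
  classical
  rcases Nat.eq_zero_or_pos k with rfl | hpos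
  · rw [repPath_zero, Finsupp.single_apply] at h
    obtain rfl : RepIndex.trivial (src d) = y := by by_contra h'; exact h (if_neg h')
    exact ⟨rfl, rfl⟩
  rcases lt_trichotomy k (turnLength d) with hk | hk | hk
  · rw [repPath_of_lt K hpos hk, Finsupp.single_apply] at h
    obtain rfl : RepIndex.arc d k = y := by by_contra h'; exact h (if_neg h')
    exact ⟨rfl, rfl⟩
  · subst hk
    rw [repPath_turnLength, Finsupp.single_apply] at h
    obtain rfl : RepIndex.turn (src d) = y := by by_contra h'; exact h (if_neg h')
    exact ⟨rfl, by rw [next_pow_turnLength]; rfl⟩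
  · rw [repPath_of_gt K hk] at h
    exact absurd rfl h

theorem coords_idemp_mul_of_ne {i : Γ.Edge} {y : Γ.RepIndex} (h : y.source ≠ i)
    (x : Γ.Alg K) : coords Γ K (idemp K i * x) y = 0 := by
  induction x using path_induction with
  | path d k =>
    by_cases hi : i = src d
    · subst hi
      rw [idemp_src_mul_path, coords_path]
      by_contra h'
      exact h (source_of_repPath_ne_zero K h').1
    · rw [idemp_mul_path K hi, map_zero]; rfl
  | zero => rw [mul_zero, map_zero]; rfl
  | add x y hx hy => rw [mul_add, map_add, Finsupp.add_apply, hx, hy, add_zero]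
  | smul c x hx => rw [mul_smul_comm, map_smul, Finsupp.smul_apply, hx, smul_zero]

theorem coords_mul_idemp_of_ne {i : Γ.Edge} {y : Γ.RepIndex} (h : y.target ≠ i)
    (x : Γ.Alg K) : coords Γ K (x * idemp K i) y = 0 := by
  induction x using path_induction with
  | path d k =>
    by_cases hi : src ((Γ.next ^ k) d) = i
    · subst hi
      rw [path_mul_idemp_src, coords_path]
      by_contra h'
      exact h (source_of_repPath_ne_zero K h').2
    · rw [path_mul_idemp K hi, map_zero]; rfl
  | zero => rw [zero_mul, map_zero]; rfl
  | add x y hx hy => rw [add_mul, map_add, Finsupp.add_apply, hx, hy, add_zero]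
  | smul c x hx => rw [smul_mul_assoc, map_smul, Finsupp.smul_apply, hx, smul_zero]

/-- The coefficient of an element of the algebra at the trivial path at `i`. -/
noncomputable def idempCoeff (i : Γ.Edge) : Γ.Alg K →ₗ[K] K :=
  Finsupp.lapply (RepIndex.trivial i) ∘ₗ coords Γ K

/-- The coefficient of an element of the algebra at the full turn at `i`. -/
noncomputable def socCoeff (i : Γ.Edge) : Γ.Alg K →ₗ[K] K :=
  Finsupp.lapply (RepIndex.turn i) ∘ₗ coords Γ K

open Classical in
/-- The coefficient of an element of the algebra at the path from `a` to `b`. -/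
noncomputable def arcCoeff (a b : Γ.Arrow) : Γ.Alg K →ₗ[K] K :=
  if a.fst = b.fst ∧ a ≠ b then Finsupp.lapply (RepIndex.arc a (arcLength a b)) ∘ₗ coords Γ K
  else 0

theorem arcCoeff_apply {a b : Γ.Arrow} (h : a.fst = b.fst) (hne : a ≠ b) (x : Γ.Alg K) :
    arcCoeff K a b x = coords Γ K x (RepIndex.arc a (arcLength a b)) := by
  rw [arcCoeff, if_pos ⟨h, hne⟩]; rfl

theorem arcCoeff_eq_zero {a b : Γ.Arrow} (h : ¬ (a.fst = b.fst ∧ a ≠ b)) (x : Γ.Alg K) :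
    arcCoeff K a b x = 0 := by
  rw [arcCoeff, if_neg h]; rfl

theorem path_eq_arc {d : Γ.Arrow} {k : ℕ} (hpos : 0 < k) (hk : k < turnLength d) :
    path K d k = arc K d ((Γ.next ^ k) d) := by
  rw [arc_eq K (fst_next_pow d k).symm (next_pow_ne hpos hk).symm, arcLength_eq hk rfl]

theorem coords_arc {a b : Γ.Arrow} (h : a.fst = b.fst) (hne : a ≠ b) :
    coords Γ K (arc K a b) = Finsupp.single (RepIndex.arc a (arcLength a b)) 1 := by
  rw [arc_eq K h hne, coords_path, repPath_of_lt K (arcLength_pos h hne) (arcLength_lt a b)]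

theorem coords_socElt (i : Γ.Edge) :
    coords Γ K (socElt K i) = Finsupp.single (RepIndex.turn i) 1 := by
  obtain ⟨d, rfl⟩ := exists_src_eq i
  rw [← path_turnLength, coords_path, repPath_turnLength]

theorem arcCoeff_arc_self {a b : Γ.Arrow} (h : a.fst = b.fst) (hne : a ≠ b) :
    arcCoeff K a b (arc K a b) = 1 := by
  rw [arcCoeff_apply K h hne, coords_arc K h hne, Finsupp.single_eq_same]

theorem arcCoeff_arc_of_ne {a b a' b' : Γ.Arrow} (h : a ≠ a' ∨ b ≠ b') :
    arcCoeff K a b (arc K a' b') = 0 := by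
  classical
  by_cases hab : a.fst = b.fst ∧ a ≠ b
  swap
  · exact arcCoeff_eq_zero K hab _
  by_cases hab' : a'.fst = b'.fst ∧ a' ≠ b'
  swap
  · rw [arc_eq_zero K hab', map_zero]
  rw [arcCoeff_apply K hab.1 hab.2, coords_arc K hab'.1 hab'.2, Finsupp.single_apply, if_neg]
  intro hindex
  obtain ⟨rfl, hlength⟩ := RepIndex.arc.inj hindex
  have hb : b' = b := by rw [← next_pow_arcLength hab'.1, hlength, next_pow_arcLength hab.1]
  exact h.elim (fun h => h rfl) fun h => h hb.symm

theorem arcCoeff_socElt (a b : Γ.Arrow) (i : Γ.Edge) : arcCoeff K a b (socElt K i) = 0 := by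
  by_cases hab : a.fst = b.fst ∧ a ≠ b
  · simp [arcCoeff_apply K hab.1 hab.2, coords_socElt]
  · exact arcCoeff_eq_zero K hab _

theorem arcCoeff_idemp (a b : Γ.Arrow) (i : Γ.Edge) : arcCoeff K a b (idemp K i) = 0 := by
  by_cases hab : a.fst = b.fst ∧ a ≠ b
  · simp [arcCoeff_apply K hab.1 hab.2, coords_idemp]
  · exact arcCoeff_eq_zero K hab _

theorem idempCoeff_idemp_self (i : Γ.Edge) : idempCoeff K i (idemp K i) = 1 := by
  simp [idempCoeff, coords_idemp]

theorem idempCoeff_idemp_of_ne {i j : Γ.Edge} (h : i ≠ j) : idempCoeff K i (idemp K j) = 0 := by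
  simp [idempCoeff, coords_idemp, h]

theorem idempCoeff_socElt (i j : Γ.Edge) : idempCoeff K i (socElt K j) = 0 := by
  simp [idempCoeff, coords_socElt]

theorem idempCoeff_arc (i : Γ.Edge) (a b : Γ.Arrow) : idempCoeff K i (arc K a b) = 0 := by
  by_cases hab : a.fst = b.fst ∧ a ≠ b
  · simp [idempCoeff, coords_arc K hab.1 hab.2]
  · rw [arc_eq_zero K hab, map_zero]

theorem socCoeff_idemp (i j : Γ.Edge) : socCoeff K i (idemp K j) = 0 := by
  simp [socCoeff, coords_idemp]

theorem socCoeff_socElt_self (i : Γ.Edge) : socCoeff K i (socElt K i) = 1 := by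
  simp [socCoeff, coords_socElt]

theorem socCoeff_socElt_of_ne {i j : Γ.Edge} (h : i ≠ j) : socCoeff K i (socElt K j) = 0 := by
  simp [socCoeff, coords_socElt, h]

theorem socCoeff_arc (i : Γ.Edge) (a b : Γ.Arrow) : socCoeff K i (arc K a b) = 0 := by
  by_cases hab : a.fst = b.fst ∧ a ≠ b
  · simp [socCoeff, coords_arc K hab.1 hab.2]
  · rw [arc_eq_zero K hab, map_zero]

theorem socElt_ne_zero (i : Γ.Edge) : socElt K i ≠ 0 := by
  intro h
  have := socCoeff_socElt_self K i
  rw [h, map_zero] at this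
  exact zero_ne_one this

theorem arc_mul_idemp_src (a b : Γ.Arrow) : arc K a b * idemp K (src b) = arc K a b := by
  by_cases hab : a.fst = b.fst ∧ a ≠ b
  · rw [arc_eq K hab.1 hab.2]
    have := path_mul_idemp_src K a (arcLength a b)
    rwa [next_pow_arcLength hab.1] at this
  · rw [arc_eq_zero K hab, zero_mul]

theorem arc_mul_arc_of_ne (a : Γ.Arrow) {b b' : Γ.Arrow} (c : Γ.Arrow) (h : b ≠ b') :
    arc K a b * arc K b' c = 0 := by
  by_cases hab : a.fst = b.fst ∧ a ≠ b
  swap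
  · rw [arc_eq_zero K hab, zero_mul]
  by_cases hbc : b'.fst = c.fst ∧ b' ≠ c
  swap
  · rw [arc_eq_zero K hbc, mul_zero]
  rw [arc_eq K hab.1 hab.2, arc_eq K hbc.1 hbc.2]
  apply path_mul_path_of_ne K (arcLength_pos hab.1 hab.2) (arcLength_pos hbc.1 hbc.2)
  rw [next_pow_arcLength hab.1]
  exact h.symm

theorem arc_mul_arc {a b c : Γ.Arrow} (h : a.fst = b.fst) (h' : b.fst = c.fst)
    (hab : a ≠ b) (hbc : b ≠ c) :
    arc K a b * arc K b c = path K a (arcLength a b + arcLength b c) := by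
  rw [arc_eq K h hab, arc_eq K h' hbc, ← path_mul_path, next_pow_arcLength h]

theorem arc_mul_arc_of_lt {a b c : Γ.Arrow} (h : a.fst = b.fst) (h' : b.fst = c.fst)
    (hab : a ≠ b) (hbc : b ≠ c) (hlt : arcLength a b + arcLength b c < turnLength a) :
    arc K a b * arc K b c = arc K a c := by
  rw [arc_mul_arc K h h' hab hbc, ← arcLength_add h h' hlt, arc_eq K (h.trans h')]
  rintro rfl
  have := arcLength_add_arcLength_comm h hab
  lia

theorem arc_mul_arc_of_gt {a b c : Γ.Arrow} (h : a.fst = b.fst) (h' : b.fst = c.fst)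
    (hab : a ≠ b) (hbc : b ≠ c) (hlt : turnLength a < arcLength a b + arcLength b c) :
    arc K a b * arc K b c = 0 := by
  rw [arc_mul_arc K h h' hab hbc, path_eq_zero K hlt]

theorem arc_mul_arc_self {a b : Γ.Arrow} (h : a.fst = b.fst) (hab : a ≠ b) :
    arc K a b * arc K b a = socElt K (src a) := by
  rw [arc_mul_arc K h h.symm hab hab.symm, arcLength_add_arcLength_comm h hab, path_turnLength]

theorem idemp_eq_sum (j : Γ.Edge) :
    ∑ i, idempCoeff K i (idemp K j) • idemp K i = idemp K j := by
  rw [Finset.sum_eq_single_of_mem j (Finset.mem_univ j)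
    fun i _ hij => by rw [idempCoeff_idemp_of_ne K hij, zero_smul],
    idempCoeff_idemp_self, one_smul]

theorem socElt_eq_sum (j : Γ.Edge) :
    ∑ i, socCoeff K i (socElt K j) • socElt K i = socElt K j := by
  rw [Finset.sum_eq_single_of_mem j (Finset.mem_univ j)
    fun i _ hij => by rw [socCoeff_socElt_of_ne K hij, zero_smul],
    socCoeff_socElt_self, one_smul]

theorem arc_eq_sum {c d : Γ.Arrow} (h : c.fst = d.fst) (hne : c ≠ d) :
    ∑ a, ∑ b, arcCoeff K a b (arc K c d) • arc K a b = arc K c d := by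
  have hleft : ∀ a ∈ Finset.univ, a ≠ c → ∑ b, arcCoeff K a b (arc K c d) • arc K a b = 0 :=
    fun a _ ha => Finset.sum_eq_zero fun b _ => by
      rw [arcCoeff_arc_of_ne K (Or.inl ha), zero_smul]
  rw [Finset.sum_eq_single_of_mem c (Finset.mem_univ c) hleft,
    Finset.sum_eq_single_of_mem d (Finset.mem_univ d)
      fun b _ hb => by rw [arcCoeff_arc_of_ne K (Or.inr hb), zero_smul],
    arcCoeff_arc_self K h hne, one_smul]

theorem eq_sum_coeff (x : Γ.Alg K) :
    x = ∑ i, idempCoeff K i x • idemp K i + ∑ i, socCoeff K i x • socElt K i +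
      ∑ a, ∑ b, arcCoeff K a b x • arc K a b := by
  induction x using path_induction with
  | path d k =>
    rcases Nat.eq_zero_or_pos k with rfl | hpos
    · simp [path, idemp_eq_sum, socCoeff_idemp, arcCoeff_idemp]
    rcases lt_trichotomy k (turnLength d) with hk | rfl | hk
    · simp [path_eq_arc K hpos hk, idempCoeff_arc, socCoeff_arc,
        arc_eq_sum K (fst_next_pow d k).symm (next_pow_ne hpos hk).symm]
    · simp [path_turnLength, idempCoeff_socElt, socElt_eq_sum, arcCoeff_socElt]
    · simp [path_eq_zero K hk]
  | zero => simp
  | add x y hx hy =>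
    conv_lhs => rw [hx, hy]
    simp only [map_add, add_smul, Finset.sum_add_distrib]
    abel
  | smul c x hx =>
    conv_lhs => rw [hx]
    simp only [map_smul, smul_add, Finset.smul_sum, smul_eq_mul, mul_smul]

variable {K}

theorem mem_of_coords_ne_zero {I J : Finset Γ.Edge} {x : Γ.Alg K}
    (hl : idempSum K I * x = x) (hr : x * idempSum K J = x) {y : Γ.RepIndex}
    (h : coords Γ K x y ≠ 0) : y.source ∈ I ∧ y.target ∈ J := by
  constructor
  · by_contra h'
    rw [← hl, idempSum, alg_sum_mul, map_sum, Finsupp.finsetSum_apply] at h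
    exact h (Finset.sum_eq_zero fun i hi => coords_idemp_mul_of_ne K (fun e => h' (e ▸ hi)) x)
  · by_contra h'
    rw [← hr, idempSum, alg_mul_sum, map_sum, Finsupp.finsetSum_apply] at h
    exact h (Finset.sum_eq_zero fun i hi => coords_mul_idemp_of_ne K (fun e => h' (e ▸ hi)) x)

theorem mem_of_arcCoeff_ne_zero {I J : Finset Γ.Edge} {x : Γ.Alg K}
    (hl : idempSum K I * x = x) (hr : x * idempSum K J = x) {a b : Γ.Arrow}
    (h : arcCoeff K a b x ≠ 0) : a.fst = b.fst ∧ a ≠ b ∧ src a ∈ I ∧ src b ∈ J := by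
  by_cases hab : a.fst = b.fst ∧ a ≠ b
  · rw [arcCoeff_apply K hab.1 hab.2] at h
    obtain ⟨hsource, htarget⟩ := mem_of_coords_ne_zero hl hr h
    rw [RepIndex.target, next_pow_arcLength hab.1] at htarget
    exact ⟨hab.1, hab.2, hsource, htarget⟩
  · exact absurd (arcCoeff_eq_zero K hab x) h

theorem eq_sum_arc_of_disjoint {I J : Finset Γ.Edge} (hIJ : Disjoint I J) {x : Γ.Alg K}
    (hl : idempSum K I * x = x) (hr : x * idempSum K J = x) :
    x = ∑ a, ∑ b, arcCoeff K a b x • arc K a b := by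
  conv_lhs => rw [eq_sum_coeff K x]
  rw [Finset.sum_eq_zero, Finset.sum_eq_zero, zero_add, zero_add]
  · intro i _
    suffices socCoeff K i x = 0 by rw [this, zero_smul]
    by_contra h
    obtain ⟨hI, hJ⟩ := mem_of_coords_ne_zero hl hr (y := RepIndex.turn i) h
    exact Finset.disjoint_left.1 hIJ hI hJ
  · intro i _
    suffices idempCoeff K i x = 0 by rw [this, zero_smul]
    by_contra h
    obtain ⟨hI, hJ⟩ := mem_of_coords_ne_zero hl hr (y := RepIndex.trivial i) h
    exact Finset.disjoint_left.1 hIJ hI hJ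

end Coordinates

end BrauerTree
namespace BrauerTree

section Projectives

variable {V : Type v} {Γ : BrauerTree V} {K : Type u} [Field K]

theorem mem_proj_iff {i : Γ.Edge} {x : Γ.Alg K} : x ∈ Proj K i ↔ x * idemp K i = x := by
  rw [Ideal.mem_span_singleton']
  constructor
  · rintro ⟨a, rfl⟩
    rw [mul_assoc, idemp_mul_self]
  · exact fun h => ⟨x, h⟩

/-- The generator `e_i` of `A e_i`. -/
noncomputable def projGen (i : Γ.Edge) : Proj K i :=
  ⟨idemp K i, mem_proj_iff.2 (idemp_mul_self K i)⟩

theorem smul_projGen {i : Γ.Edge} (x : Proj K i) : (x : Γ.Alg K) • projGen i = x :=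
  Subtype.ext (mem_proj_iff.1 x.2)

/-- The projective module `⨁ A e_i`; the terms `T.P₀` and `T.P₁` of a complex are of this form. -/
abbrev ProjSum (K : Type u) [Field K] (I : Finset Γ.Edge) : Type _ := ∀ i : I, Proj K i.1

/-- The sum of the entries, which embeds `⨁ A e_i` into `A` as the left ideal `A (∑ e_i)`. -/
noncomputable def entrySum {I : Finset Γ.Edge} : ProjSum K I →ₗ[Γ.Alg K] Γ.Alg K where
  toFun x := ∑ i : I, (x i : Γ.Alg K)
  map_add' x y := by simp [Finset.sum_add_distrib]
  map_smul' c x := by exact (alg_mul_sum _ _ _).symm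

open Classical in
/-- The generator `e_i` of the summand `A e_i` of `⨁ A e_i`. -/
noncomputable def stdGen {I : Finset Γ.Edge} (i : I) : ProjSum K I :=
  Pi.single i (projGen i.1)

theorem stdGen_same {I : Finset Γ.Edge} (i : I) :
    ((stdGen i : ProjSum K I) i : Γ.Alg K) = idemp K i.1 := by
  simp [stdGen, projGen]

theorem stdGen_of_ne {I : Finset Γ.Edge} {i j : I} (h : j ≠ i) :
    ((stdGen i : ProjSum K I) j : Γ.Alg K) = 0 := by
  simp [stdGen, h]

theorem entrySum_stdGen {I : Finset Γ.Edge} (i : I) : entrySum (stdGen i) = idemp K i.1 := by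
  change ∑ j : I, ((stdGen i : ProjSum K I) j : Γ.Alg K) = _
  rw [Finset.sum_eq_single i, stdGen_same]
  · exact fun j _ hj => stdGen_of_ne hj
  · simp

theorem eq_sum_smul_stdGen {I : Finset Γ.Edge} (x : ProjSum K I) :
    x = ∑ i : I, (x i : Γ.Alg K) • stdGen i := by
  classical
  conv_lhs => rw [← Finset.univ_sum_single x]
  refine Finset.sum_congr rfl fun i _ => ?_
  rw [stdGen, ← Pi.single_smul, smul_projGen]

theorem entrySum_mul_idemp {I : Finset Γ.Edge} (x : ProjSum K I) (i : I) :
    entrySum x * idemp K i.1 = x i := by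
  change (∑ j : I, (x j : Γ.Alg K)) * idemp K i.1 = _
  rw [alg_sum_mul, Finset.sum_eq_single i]
  · exact mem_proj_iff.1 (x i).2
  · intro j _ hj
    rw [← mem_proj_iff.1 (x j).2, mul_assoc, idemp_mul_of_ne K, mul_zero]
    exact fun h => hj (Subtype.ext h)
  · simp

theorem entrySum_mul_idempSum {I : Finset Γ.Edge} (x : ProjSum K I) :
    entrySum x * idempSum K I = entrySum x := by
  rw [idempSum, alg_mul_sum, ← Finset.sum_coe_sort]
  exact Finset.sum_congr rfl fun i _ => entrySum_mul_idemp x i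

theorem entrySum_injective {I : Finset Γ.Edge} :
    Function.Injective (entrySum (K := K) (I := I)) := by
  intro x y h
  funext i
  apply Subtype.ext
  rw [← entrySum_mul_idemp, ← entrySum_mul_idemp, h]

instance (I : Finset Γ.Edge) : Module.Projective (Γ.Alg K) (ProjSum K I) := by
  refine Module.Projective.of_split (M := Γ.Alg K) entrySum
    (LinearMap.pi fun i => LinearMap.toSpanSingleton (Γ.Alg K) (Proj K i.1) (projGen i.1)) ?_
  refine LinearMap.ext fun x => funext fun i => Subtype.ext ?_
  exact entrySum_mul_idemp x i

/-- Right multiplication by an element of the algebra, as a homomorphism between direct sums of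
projective modules. -/
noncomputable def mulRight (I J : Finset Γ.Edge) (α : Γ.Alg K) :
    ProjSum K I →ₗ[Γ.Alg K] ProjSum K J where
  toFun x j := ⟨entrySum x * α * idemp K j.1,
    mem_proj_iff.2 (by rw [mul_assoc _ (idemp K j.1), idemp_mul_self])⟩
  map_add' x y := by
    funext j; apply Subtype.ext
    simp [add_mul]
  map_smul' c x := by
    funext j; apply Subtype.ext
    simp [mul_assoc]

theorem entrySum_mulRight {I J : Finset Γ.Edge} {α : Γ.Alg K} (h : α * idempSum K J = α)
    (x : ProjSum K I) : entrySum (mulRight I J α x) = entrySum x * α := by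
  conv_rhs => rw [← h, idempSum, alg_mul_sum, alg_mul_sum, ← Finset.sum_coe_sort]
  exact Finset.sum_congr rfl fun j _ => mul_assoc _ _ _

/-- The element of the algebra by which a homomorphism between direct sums of projective modules
multiplies on the right. -/
noncomputable def mulElt {I J : Finset Γ.Edge} (g : ProjSum K I →ₗ[Γ.Alg K] ProjSum K J) :
    Γ.Alg K := ∑ i : I, entrySum (g (stdGen i))

theorem idemp_smul_stdGen {I : Finset Γ.Edge} (i : I) :
    idemp K i.1 • (stdGen i : ProjSum K I) = stdGen i :=
  entrySum_injective <| by rw [map_smul, entrySum_stdGen, smul_eq_mul, idemp_mul_self]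

theorem idemp_mul_mulElt {I J : Finset Γ.Edge} (g : ProjSum K I →ₗ[Γ.Alg K] ProjSum K J)
    (i : I) : idemp K i.1 * mulElt g = entrySum (g (stdGen i)) := by
  rw [mulElt, alg_mul_sum, Finset.sum_eq_single i]
  · rw [← smul_eq_mul, ← map_smul, ← map_smul, idemp_smul_stdGen]
  · intro j _ hj
    rw [← idemp_smul_stdGen j, map_smul, map_smul, smul_eq_mul, ← mul_assoc,
      idemp_mul_of_ne K fun h => hj (Subtype.ext h.symm), zero_mul]
  · simp

theorem mulElt_mul_idempSum {I J : Finset Γ.Edge} (g : ProjSum K I →ₗ[Γ.Alg K] ProjSum K J) :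
    mulElt g * idempSum K J = mulElt g := by
  rw [mulElt, alg_sum_mul]
  exact Finset.sum_congr rfl fun i _ => entrySum_mul_idempSum _

theorem idempSum_mul_mulElt {I J : Finset Γ.Edge} (g : ProjSum K I →ₗ[Γ.Alg K] ProjSum K J) :
    idempSum K I * mulElt g = mulElt g := by
  rw [idempSum, alg_sum_mul, ← Finset.sum_coe_sort, mulElt]
  exact Finset.sum_congr rfl fun i _ => idemp_mul_mulElt g i

theorem entrySum_apply {I J : Finset Γ.Edge} (g : ProjSum K I →ₗ[Γ.Alg K] ProjSum K J)
    (x : ProjSum K I) : entrySum (g x) = entrySum x * mulElt g := by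
  conv_lhs => rw [eq_sum_smul_stdGen x, map_sum, map_sum]
  change _ = (∑ i : I, (x i : Γ.Alg K)) * mulElt g
  rw [alg_sum_mul]
  refine Finset.sum_congr rfl fun i _ => ?_
  rw [map_smul, map_smul, smul_eq_mul, ← idemp_mul_mulElt, ← mul_assoc, mem_proj_iff.1 (x i).2]

theorem mulElt_mulRight {I J : Finset Γ.Edge} {α : Γ.Alg K} (h : idempSum K I * α = α)
    (h' : α * idempSum K J = α) : mulElt (mulRight I J α) = α := by
  rw [mulElt]
  conv_rhs => rw [← h, idempSum, alg_sum_mul, ← Finset.sum_coe_sort]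
  refine Finset.sum_congr rfl fun i _ => ?_
  rw [entrySum_mulRight h', entrySum_stdGen]

theorem ext_mulElt {I J : Finset Γ.Edge} {g g' : ProjSum K I →ₗ[Γ.Alg K] ProjSum K J}
    (h : mulElt g = mulElt g') : g = g' := by
  ext1 x
  apply entrySum_injective
  rw [entrySum_apply, entrySum_apply, h]

theorem mulElt_comp {I J L : Finset Γ.Edge} (g : ProjSum K I →ₗ[Γ.Alg K] ProjSum K J)
    (g' : ProjSum K J →ₗ[Γ.Alg K] ProjSum K L) : mulElt (g' ∘ₗ g) = mulElt g * mulElt g' := by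
  conv_lhs => rw [mulElt]
  rw [mulElt, alg_sum_mul]
  exact Finset.sum_congr rfl fun i _ => entrySum_apply g' _

theorem mulElt_zero {I J : Finset Γ.Edge} :
    mulElt (0 : ProjSum K I →ₗ[Γ.Alg K] ProjSum K J) = 0 := by
  simp [mulElt]

namespace TwoTerm

/-- The element of `e_I A e_J` by which the differential of `T` multiplies on the right. -/
noncomputable def diffElt (T : Γ.TwoTerm K) : Γ.Alg K := mulElt T.f

theorem hom_shift_eq_zero_iff [HasDerivedCategory.{w} (ModuleCat (Γ.Alg K))]
    (T U : Γ.TwoTerm K) :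
    (∀ φ : T.obj ⟶ U.obj⟦(-1 : ℤ)⟧, φ = 0) ↔
      ∀ α : Γ.Alg K, idempSum K T.J * α = α → α * idempSum K U.I = α → T.diffElt * α = 0 →
        α * U.diffElt = 0 → α = 0 := by
  have hprojective (I : Finset Γ.Edge) : Projective (ModuleCat.of (Γ.Alg K) (ProjSum K I)) :=
    (IsProjective.iff_projective (ProjSum K I)).1 inferInstance
  have := hprojective T.I
  have := hprojective T.J
  refine (derivedCategory_double_hom_shift_eq_zero_iff (ModuleCat.ofHom T.f)
    (ModuleCat.ofHom U.f) (by simp)).trans ⟨fun h α hJ hI hT hU => ?_, fun h g hT hU => ?_⟩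
  · have hα := mulElt_mulRight hJ hI
    have hTα : mulRight T.J U.I α ∘ₗ T.f = 0 :=
      ext_mulElt (by rw [mulElt_comp, hα, mulElt_zero]; exact hT)
    have hαU : U.f ∘ₗ mulRight T.J U.I α = 0 :=
      ext_mulElt (by rw [mulElt_comp, hα, mulElt_zero]; exact hU)
    have hzero : ModuleCat.ofHom (mulRight T.J U.I α) = 0 :=
      h _ (ModuleCat.hom_ext hTα) (ModuleCat.hom_ext hαU)
    have hmul : mulRight T.J U.I α = 0 := congrArg ModuleCat.Hom.hom hzero
    rw [← hα, hmul, mulElt_zero]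
  · have hTg : g.hom ∘ₗ T.f = 0 := congrArg ModuleCat.Hom.hom hT
    have hgU : U.f ∘ₗ g.hom = 0 := congrArg ModuleCat.Hom.hom hU
    have hzero : mulElt g.hom = 0 :=
      h _ (idempSum_mul_mulElt _) (mulElt_mul_idempSum _)
        (by rw [diffElt, ← mulElt_comp, hTg, mulElt_zero])
        (by rw [diffElt, ← mulElt_comp, hgU, mulElt_zero])
    exact ModuleCat.hom_ext (ext_mulElt (hzero.trans mulElt_zero.symm))

theorem component_ne_zero_iff (T : Γ.TwoTerm K) (i : T.I) (j : T.J) :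
    T.component i j ≠ 0 ↔ idemp K i.1 * T.diffElt * idemp K j.1 ≠ 0 := by
  have himage : (T.component i j (projGen i.1) : Γ.Alg K) =
      idemp K i.1 * T.diffElt * idemp K j.1 := by
    rw [diffElt, idemp_mul_mulElt, entrySum_mul_idemp]
    rfl
  rw [← himage, not_iff_not]
  refine ⟨fun h => by rw [h]; rfl, fun h => LinearMap.ext fun x => ?_⟩
  have hgen : T.component i j (projGen i.1) = 0 := Subtype.ext h
  rw [← smul_projGen x, map_smul, hgen, smul_zero, LinearMap.zero_apply]

end TwoTerm

end Projectives

end BrauerTree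

namespace BrauerTree

section Branches

variable {V : Type v} {Γ : BrauerTree V}

/-- The vertices of the tree beyond the edge of `d`, seen from `d.fst`. -/
def side (d : Γ.Arrow) : Set V := {u | (Γ.graph.deleteEdges {d.edge}).Reachable d.snd u}

/-- The branch of the tree at the vertex `d.fst` that begins with the edge of `d`. -/
def branch (d : Γ.Arrow) : Set Γ.Edge := {e | ∃ a : Γ.Arrow, src a = e ∧ a.snd ∈ side d}

theorem snd_mem_side (d : Γ.Arrow) : d.snd ∈ side d := SimpleGraph.Reachable.refl _

theorem fst_notMem_side (d : Γ.Arrow) : d.fst ∉ side d := fun h =>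
  SimpleGraph.isBridge_iff.1
    (SimpleGraph.isAcyclic_iff_forall_adj_isBridge.1 Γ.isTree.isAcyclic d.adj) h.symm

theorem eq_of_fst_notMem_side {a d : Γ.Arrow} (h : a.fst ∉ side d) (h' : a.snd ∈ side d) :
    a = d := by
  by_cases he : a.edge = d.edge
  · rcases (SimpleGraph.dart_edge_eq_iff a d).1 he with rfl | rfl
    · rfl
    · exact absurd (snd_mem_side d) h
  · refine absurd (SimpleGraph.Reachable.trans h' (SimpleGraph.Adj.reachable ?_)) h
    rw [SimpleGraph.deleteEdges_adj]
    refine ⟨a.adj.symm, ?_⟩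
    rw [Set.mem_singleton_iff, Sym2.eq_swap]
    exact he

theorem src_mem_branch (d : Γ.Arrow) : src d ∈ branch d := ⟨d, rfl, snd_mem_side d⟩

theorem src_mem_branch_of_snd {a d : Γ.Arrow} (h : a.snd ∈ side d) : src a ∈ branch d :=
  ⟨a, rfl, h⟩

theorem src_mem_branch_of_fst {a d : Γ.Arrow} (h : a.fst ∈ side d) : src a ∈ branch d :=
  ⟨a.symm, src_symm a, h⟩

theorem snd_mem_side_or_fst_mem_side {a d : Γ.Arrow} (h : src a ∈ branch d) :
    a.snd ∈ side d ∨ a.fst ∈ side d := by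
  obtain ⟨b, hb, h⟩ := h
  rcases src_eq_src_iff.1 hb with rfl | rfl
  · exact Or.inl h
  · exact Or.inr h

theorem eq_of_mem_branch_of_notMem {a b d : Γ.Arrow} (hab : a.fst = b.fst)
    (ha : src a ∈ branch d) (hb : src b ∉ branch d) : a = d := by
  have h : a.fst ∉ side d := fun h => hb (src_mem_branch_of_fst (hab ▸ h))
  exact eq_of_fst_notMem_side h ((snd_mem_side_or_fst_mem_side ha).resolve_right h)

theorem notMem_side_of_mem_side {d d' : Γ.Arrow} (hf : d.fst = d'.fst) (hne : d ≠ d') {u : V}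
    (hu : u ∈ side d') : u ∉ side d := by
  obtain ⟨p⟩ := hu
  have hstart : d'.snd ∉ side d := fun h =>
    hne (eq_of_fst_notMem_side (hf ▸ fst_notMem_side d) h).symm
  suffices hwalk : ∀ x y, (Γ.graph.deleteEdges {d'.edge}).Walk x y → x ∈ side d' →
      x ∉ side d → y ∉ side d from hwalk _ _ p (snd_mem_side d') hstart
  intro x _ p
  induction p with
  | nil => exact fun _ h => h
  | @cons x z _ hadj _ ih =>
    intro hx hxd
    refine ih (SimpleGraph.Reachable.trans hx hadj.reachable) fun hzd => ?_
    have heq := eq_of_fst_notMem_side (a := ⟨(x, z), (SimpleGraph.deleteEdges_adj.1 hadj).1⟩)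
      hxd hzd
    exact fst_notMem_side d' (hf ▸ heq ▸ hx)

theorem eq_of_mem_branch {d d' : Γ.Arrow} (hf : d.fst = d'.fst) {e : Γ.Edge}
    (h : e ∈ branch d) (h' : e ∈ branch d') : d = d' := by
  by_contra hne
  obtain ⟨a, rfl, hsnd⟩ := h
  have hsnd' := notMem_side_of_mem_side hf.symm (Ne.symm hne) hsnd
  have hfst := (snd_mem_side_or_fst_mem_side h').resolve_left hsnd'
  obtain rfl : a = d := eq_of_fst_notMem_side (notMem_side_of_mem_side hf hne hfst) hsnd
  obtain rfl : a.symm = d' := eq_of_fst_notMem_side (a := a.symm) hsnd' hfst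
  exact a.fst_ne_snd hf

theorem mem_branch_or_mem_branch_symm (d : Γ.Arrow) (e : Γ.Edge) :
    e ∈ branch d ∨ e ∈ branch d.symm := by
  suffices hwalk : ∀ x y, Γ.graph.Walk x y → x ∈ side d ∪ side d.symm →
      y ∈ side d ∪ side d.symm by
    obtain ⟨a, rfl⟩ := exists_src_eq e
    obtain ⟨p⟩ := Γ.isTree.connected.preconnected d.snd a.snd
    exact (hwalk _ _ p (Or.inl (snd_mem_side d))).imp src_mem_branch_of_snd src_mem_branch_of_snd
  intro x _ p
  induction p with
  | nil => exact id
  | @cons x z _ hadj _ ih =>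
    intro hx
    refine ih ?_
    by_contra hz
    rw [Set.mem_union, not_or] at hz
    let a : Γ.Arrow := ⟨(z, x), hadj.symm⟩
    rcases hx with hx | hx
    · have had : a = d := eq_of_fst_notMem_side hz.1 hx
      exact hz.2 (had ▸ snd_mem_side a.symm)
    · have had : a.symm = d := by rw [eq_of_fst_notMem_side (a := a) hz.2 hx, d.symm_symm]
      exact hz.1 (had ▸ snd_mem_side a.symm)

end Branches

section Radical

variable {V : Type v} [Finite V] {Γ : BrauerTree V} {K : Type u} [Field K]

theorem idempCoeff_path {d : Γ.Arrow} {k : ℕ} (hk : 0 < k) (i : Γ.Edge) :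
    idempCoeff K i (path K d k) = 0 := by
  rcases lt_trichotomy k (turnLength d) with h | rfl | h
  · rw [path_eq_arc K hk h, idempCoeff_arc]
  · rw [path_turnLength, idempCoeff_socElt]
  · rw [path_eq_zero K h, map_zero]

open Classical in
theorem idempCoeff_idempSum (i : Γ.Edge) (I : Finset Γ.Edge) :
    idempCoeff K i (idempSum K I) = if i ∈ I then 1 else 0 := by
  rw [idempSum, map_sum]
  split_ifs with h
  · rw [Finset.sum_eq_single_of_mem i h fun j _ hj => idempCoeff_idemp_of_ne K hj.symm,
      idempCoeff_idemp_self]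
  · exact Finset.sum_eq_zero fun j hj => idempCoeff_idemp_of_ne K fun hij => h (hij ▸ hj)

theorem mul_socElt (i : Γ.Edge) (x : Γ.Alg K) :
    x * socElt K i = idempCoeff K i x • socElt K i := by
  induction x using path_induction with
  | path d k =>
    rcases Nat.eq_zero_or_pos k with rfl | hk
    · change idemp K (src d) * socElt K i = idempCoeff K i (idemp K (src d)) • socElt K i
      by_cases h : i = src d
      · rw [h, idemp_mul_socElt, idempCoeff_idemp_self, one_smul]
      · rw [idempCoeff_idemp_of_ne K h, zero_smul, ← idemp_mul_socElt, ← mul_assoc,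
          idemp_mul_of_ne K (Ne.symm h), zero_mul]
    · rw [path_mul_socElt K hk, idempCoeff_path hk, zero_smul]
  | zero => rw [zero_mul, map_zero, zero_smul]
  | add x y hx hy => rw [add_mul, hx, hy, map_add, add_smul]
  | smul c x hx => rw [smul_mul_assoc, hx, map_smul, smul_assoc]

theorem socElt_mul (i : Γ.Edge) (x : Γ.Alg K) :
    socElt K i * x = idempCoeff K i x • socElt K i := by
  induction x using path_induction with
  | path d k =>
    rcases Nat.eq_zero_or_pos k with rfl | hk
    · change socElt K i * idemp K (src d) = idempCoeff K i (idemp K (src d)) • socElt K i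
      by_cases h : i = src d
      · rw [h, socElt_mul_idemp, idempCoeff_idemp_self, one_smul]
      · rw [idempCoeff_idemp_of_ne K h, zero_smul, ← socElt_mul_idemp, mul_assoc,
          idemp_mul_of_ne K h, mul_zero]
    · rw [socElt_mul_path K hk, idempCoeff_path hk, zero_smul]
  | zero => rw [mul_zero, map_zero, zero_smul]
  | add x y hx hy => rw [mul_add, hx, hy, map_add, add_smul]
  | smul c x hx => rw [mul_smul_comm, hx, map_smul, smul_assoc]

theorem idempCoeff_eq_socCoeff_socElt_mul (i : Γ.Edge) (x : Γ.Alg K) :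
    idempCoeff K i x = socCoeff K i (socElt K i * x) := by
  rw [socElt_mul, map_smul, socCoeff_socElt_self, smul_eq_mul, mul_one]

theorem idempCoeff_mul (i : Γ.Edge) (x y : Γ.Alg K) :
    idempCoeff K i (x * y) = idempCoeff K i x * idempCoeff K i y := by
  rw [idempCoeff_eq_socCoeff_socElt_mul, ← mul_assoc, socElt_mul, smul_mul_assoc, map_smul,
    ← idempCoeff_eq_socCoeff_socElt_mul, smul_eq_mul]

theorem idempCoeff_one (i : Γ.Edge) : idempCoeff K i 1 = 1 := by
  rw [idempCoeff_eq_socCoeff_socElt_mul, mul_one, socCoeff_socElt_self]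

variable (K) in
/-- The one-dimensional representation at the vertex `i`, whose kernel is a maximal ideal. -/
noncomputable def idempCoeffHom (i : Γ.Edge) : Γ.Alg K →ₐ[K] K :=
  AlgHom.ofLinearMap (idempCoeff K i) (idempCoeff_one i) (idempCoeff_mul i)

theorem idempCoeff_entrySum_eq_zero {I : Finset Γ.Edge} {x : ProjSum K I}
    (hx : x ∈ Module.jacobson (Γ.Alg K) (ProjSum K I)) (i : Γ.Edge) :
    idempCoeff K i (entrySum x) = 0 := by
  have : RingHomSurjective (idempCoeffHom K i).toRingHom :=
    ⟨fun c => ⟨algebraMap K _ c, (idempCoeffHom K i).commutes c⟩⟩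
  let φ : ProjSum K I →ₛₗ[(idempCoeffHom K i).toRingHom] K :=
    { toFun x := idempCoeff K i (entrySum x)
      map_add' x y := by rw [map_add, map_add]
      map_smul' c x := by rw [map_smul, smul_eq_mul, idempCoeff_mul]; rfl }
  have hle : Module.jacobson (Γ.Alg K) (ProjSum K I) ≤ LinearMap.ker φ :=
    IsSemisimpleModule.jacobson_le_ker ..
  exact hle hx

end Radical

section Indecomposable

open Limits in
theorem idempotent_eq_zero_or_eq_one_of_indecomposable {R M : Type*} [Ring R]
    [AddCommGroup M] [Module R M] (h : Indecomposable (ModuleCat.of R M))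
    {e : Module.End R M} (he : IsIdempotentElem e) : e = 0 ∨ e = 1 := by
  have hcompl := LinearMap.IsIdempotentElem.isCompl he
  have hsplit := h.2 _ _ ((Submodule.prodEquivOfIsCompl _ _ hcompl).symm.toModuleIso ≪≫
    (ModuleCat.biprodIsoProd (ModuleCat.of R _) (ModuleCat.of R _)).symm)
  refine hsplit.imp (fun hrange => ?_) fun hker => ?_
  · have := ModuleCat.subsingleton_of_isZero hrange
    rw [← LinearMap.range_eq_bot]
    exact Submodule.eq_bot_of_subsingleton
  · have := ModuleCat.subsingleton_of_isZero hker
    have hinj : LinearMap.ker e = ⊥ := Submodule.eq_bot_of_subsingleton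
    exact LinearMap.ext fun x => LinearMap.ker_eq_bot.1 hinj (LinearMap.congr_fun he.eq x)

end Indecomposable

end BrauerTree

namespace BrauerTree

section Split

variable {V : Type v} {Γ : BrauerTree V} {K : Type u} [Field K]

theorem idempSum_empty : idempSum K (∅ : Finset Γ.Edge) = 0 := Finset.sum_empty

theorem idempSum_mul_idempSum_of_disjoint {S S' : Finset Γ.Edge} (h : Disjoint S S') :
    idempSum K S * idempSum K S' = 0 := by
  conv_lhs => rw [idempSum, alg_sum_mul]
  exact Finset.sum_eq_zero fun i hi =>
    idemp_mul_idempSum_of_notMem (Finset.disjoint_left.1 h hi)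

theorem idempSum_mul_of_subset {S I : Finset Γ.Edge} (h : S ⊆ I) {x : Γ.Alg K}
    (hx : idempSum K S * x = x) : idempSum K I * x = x := by
  have hmul : idempSum K I * idempSum K S = idempSum K S := by
    conv_lhs => rw [idempSum, idempSum, alg_mul_sum]
    exact Finset.sum_congr rfl fun i hi => idempSum_mul_idemp (h hi)
  rw [← hx, ← mul_assoc, hmul]

theorem mul_idempSum_of_subset {S I : Finset Γ.Edge} (h : S ⊆ I) {x : Γ.Alg K}
    (hx : x * idempSum K S = x) : x * idempSum K I = x := by
  have hmul : idempSum K S * idempSum K I = idempSum K S := by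
    conv_lhs => rw [idempSum, alg_sum_mul]
    exact Finset.sum_congr rfl fun i hi => idemp_mul_idempSum (h hi)
  rw [← hx, mul_assoc, hmul]

theorem idempSum_mul_add_of_subset {S S' I : Finset Γ.Edge} (h : S ⊆ I) (h' : S' ⊆ I)
    {n : Γ.Alg K} (hn : idempSum K S' * n = n) :
    idempSum K I * (idempSum K S + n) = idempSum K S + n := by
  rw [mul_add, idempSum_mul_of_subset h (idempSum_mul_idempSum S), idempSum_mul_of_subset h' hn]

theorem add_mul_idempSum_of_subset {S S' I : Finset Γ.Edge} (h : S ⊆ I) (h' : S' ⊆ I)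
    {n : Γ.Alg K} (hn : n * idempSum K S' = n) :
    (idempSum K S + n) * idempSum K I = idempSum K S + n := by
  rw [add_mul, mul_idempSum_of_subset h (idempSum_mul_idempSum S), mul_idempSum_of_subset h' hn]

theorem isIdempotentElem_idempSum_add {S S' : Finset Γ.Edge} (h : Disjoint S S') {n : Γ.Alg K}
    (hl : idempSum K S * n = n) (hr : n * idempSum K S' = n) :
    IsIdempotentElem (idempSum K S + n) := by
  have hright : n * idempSum K S = 0 := by
    rw [← hr, mul_assoc, idempSum_mul_idempSum_of_disjoint h.symm, mul_zero]
  have hsq : n * n = 0 := by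
    nth_rw 2 [← hl]
    rw [← mul_assoc, hright, zero_mul]
  rw [IsIdempotentElem, add_mul, mul_add, mul_add, hl, hright, hsq, add_zero, add_zero,
    idempSum_mul_idempSum]

theorem idempCoeff_eq_zero_of_disjoint [Finite V] {S S' : Finset Γ.Edge} (h : Disjoint S S')
    {n : Γ.Alg K} (hl : idempSum K S * n = n) (hr : n * idempSum K S' = n) (x : Γ.Edge) :
    idempCoeff K x n = 0 := by
  classical
  rw [← hl, ← hr, ← mul_assoc, idempCoeff_mul, idempCoeff_mul, idempCoeff_idempSum,
    idempCoeff_idempSum]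
  by_cases hx : x ∈ S
  · rw [if_neg (Finset.disjoint_left.1 h hx), mul_zero]
  · rw [if_neg hx, zero_mul, zero_mul]

open Classical in
theorem idempCoeff_idempSum_add [Finite V] {S S' S'' : Finset Γ.Edge} (h : Disjoint S' S'')
    {n : Γ.Alg K} (hl : idempSum K S' * n = n) (hr : n * idempSum K S'' = n) (x : Γ.Edge) :
    idempCoeff K x (idempSum K S + n) = if x ∈ S then 1 else 0 := by
  rw [map_add, idempCoeff_idempSum, idempCoeff_eq_zero_of_disjoint h hl hr, add_zero]

namespace TwoTerm

variable {T : Γ.TwoTerm K}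

theorem IsPresentation.range_of_idempotent (hT : T.IsPresentation) {E₀ E₁ : Γ.Alg K}
    (hl₀ : idempSum K T.I * E₀ = E₀) (hr₀ : E₀ * idempSum K T.I = E₀)
    (hl₁ : idempSum K T.J * E₁ = E₁) (hr₁ : E₁ * idempSum K T.J = E₁)
    (hidem : IsIdempotentElem E₁) (hcomm : E₀ * T.diffElt = T.diffElt * E₁) :
    (∀ x : T.P₁, mulRight T.J T.J E₁ x ∈ LinearMap.range T.f) ∨
      ∀ x : T.P₁, x - mulRight T.J T.J E₁ x ∈ LinearMap.range T.f := by
  set φ : T.P₁ →ₗ[Γ.Alg K] T.P₁ := mulRight T.J T.J E₁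
  have hφf : φ ∘ₗ T.f = T.f ∘ₗ mulRight T.I T.I E₀ := by
    apply ext_mulElt
    rw [mulElt_comp, mulElt_comp, mulElt_mulRight hl₁ hr₁, mulElt_mulRight hl₀ hr₀]
    exact hcomm.symm
  have hφφ : φ ∘ₗ φ = φ := by
    apply ext_mulElt
    rw [mulElt_comp, mulElt_mulRight hl₁ hr₁, hidem.eq]
  have hle : LinearMap.range T.f ≤ (LinearMap.range T.f).comap φ := by
    rintro _ ⟨x, rfl⟩
    exact ⟨mulRight T.I T.I E₀ x, (LinearMap.congr_fun hφf x).symm⟩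
  let e : Module.End (Γ.Alg K) T.M := (LinearMap.range T.f).mapQ (LinearMap.range T.f) φ hle
  have he : IsIdempotentElem e := by
    refine LinearMap.ext fun m => ?_
    obtain ⟨x, rfl⟩ := Submodule.Quotient.mk_surjective _ m
    exact congrArg Submodule.Quotient.mk (LinearMap.congr_fun hφφ x)
  refine (idempotent_eq_zero_or_eq_one_of_indecomposable hT.indecomposable he).imp
    (fun h x => ?_) fun h x => ?_
  · rw [← Submodule.Quotient.mk_eq_zero]
    exact LinearMap.congr_fun h (Submodule.Quotient.mk x)
  · rw [← Submodule.Quotient.eq]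
    exact (LinearMap.congr_fun h (Submodule.Quotient.mk x)).symm

variable [Finite V]

theorem IsPresentation.idempCoeff_eq_zero (hT : T.IsPresentation) {y : Γ.Alg K}
    (h : y * idempSum K T.I = y) (hker : y * T.diffElt = 0) (x : Γ.Edge) :
    idempCoeff K x y = 0 := by
  have hy : entrySum (fun i : T.I => (⟨y * idemp K i.1,
      mem_proj_iff.2 (by rw [mul_assoc, idemp_mul_self])⟩ : Proj K i.1)) = y := by
    conv_rhs => rw [← h, idempSum, alg_mul_sum, ← Finset.sum_coe_sort]
    rfl
  rw [← hy]
  refine idempCoeff_entrySum_eq_zero (hT.ker_le ?_) x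
  rw [LinearMap.mem_ker]
  apply entrySum_injective
  rw [entrySum_apply, hy, map_zero]
  exact hker

theorem IsPresentation.idempCoeff_eq_zero_or_eq_one (hT : T.IsPresentation) {E₀ E₁ : Γ.Alg K}
    (hl₀ : idempSum K T.I * E₀ = E₀) (hr₀ : E₀ * idempSum K T.I = E₀)
    (hl₁ : idempSum K T.J * E₁ = E₁) (hr₁ : E₁ * idempSum K T.J = E₁)
    (hidem : IsIdempotentElem E₁) (hcomm : E₀ * T.diffElt = T.diffElt * E₁) :
    (∀ x ∈ T.J, idempCoeff K x E₁ = 0) ∨ ∀ x ∈ T.J, idempCoeff K x E₁ = 1 := by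
  have himage (j : T.J) : idempCoeff K j.1 (entrySum (mulRight T.J T.J E₁ (stdGen j))) =
      idempCoeff K j.1 E₁ := by
    rw [entrySum_mulRight hr₁, entrySum_stdGen, idempCoeff_mul, idempCoeff_idemp_self, one_mul]
  refine (hT.range_of_idempotent hl₀ hr₀ hl₁ hr₁ hidem hcomm).imp
    (fun h x hx => ?_) fun h x hx => ?_
  · rw [← himage ⟨x, hx⟩]
    exact idempCoeff_entrySum_eq_zero (hT.range_le (h _)) x
  · have hdiff := idempCoeff_entrySum_eq_zero (hT.range_le (h (stdGen ⟨x, hx⟩))) x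
    rw [map_sub, map_sub, entrySum_stdGen, idempCoeff_idemp_self, sub_eq_zero] at hdiff
    rw [← himage ⟨x, hx⟩, ← hdiff]

/-- The pair `(e_{I ∩ L} + n, e_{J ∩ L} + n')` is an idempotent endomorphism of the complex,
and the presented module is indecomposable. -/
theorem IsPresentation.subset_or_disjoint (hT : T.IsPresentation) (L : Set Γ.Edge)
    [DecidablePred (· ∈ L)] {n n' : Γ.Alg K} (hnl : idempSum K (T.I.filter (· ∉ L)) * n = n)
    (hnr : n * idempSum K (T.I.filter (· ∈ L)) = n)
    (hnl' : idempSum K (T.J.filter (· ∈ L)) * n' = n')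
    (hnr' : n' * idempSum K (T.J.filter (· ∉ L)) = n')
    (hcomm : (idempSum K (T.I.filter (· ∈ L)) + n) * T.diffElt =
      T.diffElt * (idempSum K (T.J.filter (· ∈ L)) + n')) :
    (∀ x ∈ T.marked, x ∈ L) ∨ ∀ x ∈ T.marked, x ∉ L := by
  classical
  have hsub {S : Finset Γ.Edge} {p : Γ.Edge → Prop} [DecidablePred p] : S.filter p ⊆ S :=
    Finset.filter_subset p S
  have hdisj {S : Finset Γ.Edge} : Disjoint (S.filter (· ∈ L)) (S.filter (· ∉ L)) :=
    Finset.disjoint_filter_filter_not S S (· ∈ L)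
  have hr₀ := add_mul_idempSum_of_subset (S := T.I.filter (· ∈ L)) hsub hsub hnr
  have hcoeff₀ := idempCoeff_idempSum_add (S := T.I.filter (· ∈ L)) hdisj.symm hnl hnr
  have hcoeff₁ := idempCoeff_idempSum_add (S := T.J.filter (· ∈ L)) hdisj hnl' hnr'
  rcases hT.idempCoeff_eq_zero_or_eq_one (idempSum_mul_add_of_subset hsub hsub hnl) hr₀
    (idempSum_mul_add_of_subset hsub hsub hnl') (add_mul_idempSum_of_subset hsub hsub hnr')
    (isIdempotentElem_idempSum_add hdisj hnl' hnr') hcomm with h | h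
  · have hJ : ∀ x ∈ T.J, x ∉ L := fun x hx hxL => by simpa [hcoeff₁, hx, hxL] using h x hx
    rw [Finset.filter_false_of_mem hJ, idempSum_empty, zero_mul] at hnl'
    rw [Finset.filter_false_of_mem hJ, idempSum_empty, ← hnl', add_zero, mul_zero] at hcomm
    refine Or.inr fun x hx => hx.elim (fun hxI hxL => ?_) (hJ x)
    simpa [hcoeff₀, hxI, hxL] using hT.idempCoeff_eq_zero hr₀ hcomm x
  · have hJ : ∀ x ∈ T.J, x ∈ L := fun x hx => by
      by_contra hxL
      simpa [hcoeff₁, hxL] using h x hx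
    rw [Finset.filter_false_of_mem fun x hx => not_not.2 (hJ x hx), idempSum_empty, mul_zero]
      at hnr'
    rw [Finset.filter_true_of_mem hJ, ← hnr', add_zero, diffElt, mulElt_mul_idempSum] at hcomm
    refine Or.inl fun x hx => hx.elim (fun hxI => ?_) (hJ x)
    by_contra hxL
    have hzero := hT.idempCoeff_eq_zero
      (y := idempSum K T.I - (idempSum K (T.I.filter (· ∈ L)) + n))
      (by rw [sub_mul, idempSum_mul_idempSum, hr₀])
      (by rw [sub_mul, diffElt, hcomm, idempSum_mul_mulElt, sub_self]) x
    rw [map_sub, idempCoeff_idempSum, hcoeff₀] at hzero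
    simp [hxI, hxL] at hzero

end TwoTerm

end Split

end BrauerTree
namespace BrauerTree

section Pivot

variable {V : Type v} {Γ : BrauerTree V}

theorem src_notMem_branch_union {a i j : Γ.Arrow} (hai : a.fst = i.fst) (haj : a.fst = j.fst)
    (hi : a ≠ i) (hj : a ≠ j) : src a ∉ branch i ∪ branch j := fun h =>
  h.elim (fun h => hi (eq_of_mem_branch hai (src_mem_branch a) h))
    fun h => hj (eq_of_mem_branch haj (src_mem_branch a) h)

theorem eq_or_eq_of_mem_branch_union {a b i j : Γ.Arrow} (hab : a.fst = b.fst)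
    (ha : src a ∈ branch i ∪ branch j) (hb : src b ∉ branch i ∪ branch j) : a = i ∨ a = j :=
  ha.imp (fun h => eq_of_mem_branch_of_notMem hab h fun h' => hb (Or.inl h'))
    fun h => eq_of_mem_branch_of_notMem hab h fun h' => hb (Or.inr h')

variable {K : Type u} [Field K]

theorem idempSum_mul_smul_arc {S : Finset Γ.Edge} {r : K} {a b : Γ.Arrow}
    (h : r ≠ 0 → src a ∈ S) : idempSum K S * (r • arc K a b) = r • arc K a b := by
  by_cases hr : r = 0
  · rw [hr, zero_smul, mul_zero]
  · rw [mul_smul_comm, ← idemp_src_mul_arc, ← mul_assoc, idempSum_mul_idemp (h hr)]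

theorem idempSum_mul_smul_arc_of_notMem {S : Finset Γ.Edge} {r : K} {a b : Γ.Arrow}
    (h : src a ∉ S) : idempSum K S * (r • arc K a b) = 0 := by
  rw [mul_smul_comm, ← idemp_src_mul_arc, ← mul_assoc, idempSum_mul_idemp_of_notMem h, zero_mul,
    smul_zero]

variable [Finite V]

theorem smul_arc_mul_idempSum {S : Finset Γ.Edge} {r : K} {a b : Γ.Arrow}
    (h : r ≠ 0 → src b ∈ S) : r • arc K a b * idempSum K S = r • arc K a b := by
  by_cases hr : r = 0
  · rw [hr, zero_smul, zero_mul]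
  · rw [smul_mul_assoc, ← arc_mul_idemp_src, mul_assoc, idemp_mul_idempSum (h hr)]

theorem smul_arc_mul_idempSum_of_notMem {S : Finset Γ.Edge} {r : K} {a b : Γ.Arrow}
    (h : src b ∉ S) : r • arc K a b * idempSum K S = 0 := by
  rw [smul_mul_assoc, ← arc_mul_idemp_src, mul_assoc, idemp_mul_idempSum_of_notMem h, mul_zero,
    smul_zero]

theorem sum_smul_arc_mul_sum_smul_arc (f : Γ.Arrow → Γ.Arrow → K) (r : Γ.Arrow → K)
    (j : Γ.Arrow) : (∑ a, ∑ b, f a b • arc K a b) * ∑ b, r b • arc K j b =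
      ∑ a, ∑ b, (f a j * r b) • (arc K a j * arc K j b) := by
  rw [alg_sum_mul]
  refine Finset.sum_congr rfl fun a _ => ?_
  rw [alg_sum_mul, Finset.sum_eq_single j]
  · rw [alg_mul_sum]
    exact Finset.sum_congr rfl fun b _ => smul_mul_smul_comm ..
  · intro b _ hb
    rw [alg_mul_sum]
    refine Finset.sum_eq_zero fun b' _ => ?_
    rw [smul_mul_smul_comm, arc_mul_arc_of_ne K _ _ hb, smul_zero]
  · simp

theorem sum_smul_arc_mul_sum_sum_smul_arc (f : Γ.Arrow → Γ.Arrow → K) (r : Γ.Arrow → K)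
    (i : Γ.Arrow) : (∑ a, r a • arc K a i) * ∑ a, ∑ b, f a b • arc K a b =
      ∑ a, ∑ b, (r a * f i b) • (arc K a i * arc K i b) := by
  rw [alg_sum_mul]
  refine Finset.sum_congr rfl fun a _ => ?_
  rw [alg_mul_sum, Finset.sum_eq_single i]
  · rw [alg_mul_sum]
    exact Finset.sum_congr rfl fun b _ => smul_mul_smul_comm ..
  · intro b _ hb
    rw [alg_mul_sum]
    refine Finset.sum_eq_zero fun b' _ => ?_
    rw [smul_mul_smul_comm, arc_mul_arc_of_ne K _ _ hb.symm, smul_zero]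
  · simp

namespace TwoTerm

variable {T : Γ.TwoTerm K}

/-- The coefficient of the differential at the path from `a` to `b`. -/
noncomputable def coeff (T : Γ.TwoTerm K) (a b : Γ.Arrow) : K := arcCoeff K a b T.diffElt

theorem mem_of_coeff_ne_zero {a b : Γ.Arrow} (h : T.coeff a b ≠ 0) :
    a.fst = b.fst ∧ a ≠ b ∧ src a ∈ T.I ∧ src b ∈ T.J :=
  mem_of_arcCoeff_ne_zero (idempSum_mul_mulElt _) (mulElt_mul_idempSum _) h

theorem diffElt_eq_sum (h : Disjoint T.I T.J) : T.diffElt = ∑ a, ∑ b, T.coeff a b • arc K a b :=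
  eq_sum_arc_of_disjoint h (idempSum_mul_mulElt _) (mulElt_mul_idempSum _)

theorem idempSum_mul_diffElt_sub (hd : Disjoint T.I T.J) (L : Set Γ.Edge)
    [DecidablePred (· ∈ L)] :
    idempSum K (T.I.filter (· ∈ L)) * T.diffElt - T.diffElt * idempSum K (T.J.filter (· ∈ L)) =
      ∑ a, ∑ b, ((T.coeff a b * L.indicator 1 (src a)) • arc K a b -
        (T.coeff a b * L.indicator 1 (src b)) • arc K a b) := by
  have hleft (a b : Γ.Arrow) : idempSum K (T.I.filter (· ∈ L)) * (T.coeff a b • arc K a b) =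
      (T.coeff a b * L.indicator 1 (src a)) • arc K a b := by
    by_cases ha : src a ∈ L
    · rw [Set.indicator_of_mem ha, Pi.one_apply, mul_one, idempSum_mul_smul_arc fun h =>
        Finset.mem_filter.2 ⟨(mem_of_coeff_ne_zero h).2.2.1, ha⟩]
    · rw [Set.indicator_of_notMem ha, mul_zero, zero_smul,
        idempSum_mul_smul_arc_of_notMem fun h => ha (Finset.mem_filter.1 h).2]
  have hright (a b : Γ.Arrow) : T.coeff a b • arc K a b * idempSum K (T.J.filter (· ∈ L)) =
      (T.coeff a b * L.indicator 1 (src b)) • arc K a b := by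
    by_cases hb : src b ∈ L
    · rw [Set.indicator_of_mem hb, Pi.one_apply, mul_one, smul_arc_mul_idempSum fun h =>
        Finset.mem_filter.2 ⟨(mem_of_coeff_ne_zero h).2.2.2, hb⟩]
    · rw [Set.indicator_of_notMem hb, mul_zero, zero_smul,
        smul_arc_mul_idempSum_of_notMem fun h => hb (Finset.mem_filter.1 h).2]
  simp only [diffElt_eq_sum hd, alg_mul_sum, alg_sum_mul, hleft, hright, ← alg_sum_sub]

/-- A shortest path from `i` to `j` among those around the vertex `i.fst` of the tree that occur
in the differential; every other path of the differential beginning at `i` or ending at `j`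
factors through it. -/
structure IsPivot (T : Γ.TwoTerm K) (i j : Γ.Arrow) : Prop where
  coeff_ne_zero : T.coeff i j ≠ 0
  arcLength_le : ∀ a b, a.fst = i.fst → T.coeff a b ≠ 0 → arcLength i j ≤ arcLength a b

namespace IsPivot

variable {i j : Γ.Arrow}

theorem arc_mul_arc_row (h : T.IsPivot i j) {b : Γ.Arrow} (hb : T.coeff i b ≠ 0) (hbj : b ≠ j) :
    arc K i j * arc K j b = arc K i b := by
  obtain ⟨hij, hne, -, -⟩ := mem_of_coeff_ne_zero h.coeff_ne_zero
  obtain ⟨hib, -, -, -⟩ := mem_of_coeff_ne_zero hb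
  have hjb := hij.symm.trans hib
  have hle := h.arcLength_le i b rfl hb
  have hsub := arcLength_sub hij hjb hle
  have hlt := arcLength_lt i b
  exact arc_mul_arc_of_lt K hij hjb hne hbj.symm (by lia)

theorem arc_mul_arc_column (h : T.IsPivot i j) {a : Γ.Arrow} (ha : T.coeff a j ≠ 0)
    (hai : a ≠ i) : arc K a i * arc K i j = arc K a j := by
  obtain ⟨hij, hne, -, -⟩ := mem_of_coeff_ne_zero h.coeff_ne_zero
  obtain ⟨haj, -, -, -⟩ := mem_of_coeff_ne_zero ha
  have hai' := haj.trans hij.symm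
  have hle := h.arcLength_le a j hai' ha
  have hsub := arcLength_sub_right hai' hij hle
  have hlt := arcLength_lt a j
  exact arc_mul_arc_of_lt K hai' hij hai hne (by lia)

theorem src_mem_branch_union_iff (h : T.IsPivot i j) (hd : Disjoint T.I T.J) {a b : Γ.Arrow}
    (hab : T.coeff a b ≠ 0) (hai : a ≠ i) (hbj : b ≠ j) :
    src a ∈ branch i ∪ branch j ↔ src b ∈ branch i ∪ branch j := by
  obtain ⟨-, -, hi, hj⟩ := mem_of_coeff_ne_zero h.coeff_ne_zero
  obtain ⟨hfst, -, ha, hb⟩ := mem_of_coeff_ne_zero hab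
  refine ⟨fun hmem => ?_, fun hmem => ?_⟩ <;> by_contra hnot
  · refine (eq_or_eq_of_mem_branch_union hfst hmem hnot).elim hai ?_
    rintro rfl
    exact Finset.disjoint_left.1 hd ha hj
  · refine (eq_or_eq_of_mem_branch_union hfst.symm hmem hnot).elim ?_ hbj
    rintro rfl
    exact Finset.disjoint_left.1 hd hi hb

theorem src_notMem_of_row (h : T.IsPivot i j) {b : Γ.Arrow} (hb : T.coeff i b ≠ 0)
    (hbj : b ≠ j) : src b ∉ branch i ∪ branch j := by
  obtain ⟨hij, -, -, -⟩ := mem_of_coeff_ne_zero h.coeff_ne_zero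
  obtain ⟨hib, hne, -, -⟩ := mem_of_coeff_ne_zero hb
  exact src_notMem_branch_union hib.symm (hib.symm.trans hij) hne.symm hbj

theorem src_notMem_of_column (h : T.IsPivot i j) {a : Γ.Arrow} (ha : T.coeff a j ≠ 0)
    (hai : a ≠ i) : src a ∉ branch i ∪ branch j := by
  obtain ⟨hij, -, -, -⟩ := mem_of_coeff_ne_zero h.coeff_ne_zero
  obtain ⟨haj, hne, -, -⟩ := mem_of_coeff_ne_zero ha
  exact src_notMem_branch_union (haj.trans hij.symm) haj hai hne

theorem smul_arc_eq (h : T.IsPivot i j) (hd : Disjoint T.I T.J) (a b : Γ.Arrow) :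
    (T.coeff a b * (branch i ∪ branch j).indicator 1 (src a)) • arc K a b -
        (T.coeff a b * (branch i ∪ branch j).indicator 1 (src b)) • arc K a b =
      (T.coeff a j * (T.coeff i b / T.coeff i j)) • (arc K a j * arc K j b) -
        (T.coeff a j / T.coeff i j * T.coeff i b) • (arc K a i * arc K i b) := by
  have hself (c : Γ.Arrow) : arc K c c = 0 := arc_eq_zero K (by simp)
  have hi : src i ∈ branch i ∪ branch j := Or.inl (src_mem_branch i)
  have hj : src j ∈ branch i ∪ branch j := Or.inr (src_mem_branch j)
  by_cases hai : a = i <;> by_cases hbj : b = j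
  · subst hai hbj
    simp [hself, hi, hj]
  · subst hai
    by_cases hab : T.coeff a b = 0
    · simp [hab]
    · simp [hself, hi, h.src_notMem_of_row hab hbj, h.arc_mul_arc_row hab hbj,
        mul_div_cancel₀ _ h.coeff_ne_zero]
  · subst hbj
    by_cases hab : T.coeff a b = 0
    · simp [hab]
    · simp [hself, hj, h.src_notMem_of_column hab hai, h.arc_mul_arc_column hab hai,
        h.coeff_ne_zero]
  · have heq : T.coeff a b * (branch i ∪ branch j).indicator 1 (src a) =
        T.coeff a b * (branch i ∪ branch j).indicator 1 (src b) := by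
      by_cases hab : T.coeff a b = 0
      · rw [hab, zero_mul, zero_mul]
      · classical
        simp only [Set.indicator_apply, h.src_mem_branch_union_iff hd hab hai hbj, Pi.one_apply]
    rw [heq, sub_self]
    by_cases haj : T.coeff a j = 0
    · simp [haj]
    by_cases hib : T.coeff i b = 0
    · simp [hib]
    rw [← h.arc_mul_arc_column haj hai, ← h.arc_mul_arc_row hib hbj,
      mul_div_assoc', mul_assoc, div_mul_eq_mul_div, sub_self]

theorem mem_branch (hT : T.IsPresentation) (hd : Disjoint T.I T.J) (h : T.IsPivot i j) :
    ∀ x ∈ T.marked, x ∈ branch i ∪ branch j := by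
  classical
  obtain ⟨-, -, hi, hj⟩ := mem_of_coeff_ne_zero h.coeff_ne_zero
  have hiL : src i ∈ branch i ∪ branch j := Or.inl (src_mem_branch i)
  have hjL : src j ∈ branch i ∪ branch j := Or.inr (src_mem_branch j)
  refine (hT.subset_or_disjoint (branch i ∪ branch j)
    (n := ∑ a, (T.coeff a j / T.coeff i j) • arc K a i)
    (n' := ∑ b, (T.coeff i b / T.coeff i j) • arc K j b) ?_ ?_ ?_ ?_ ?_).resolve_right
      fun hnot => hnot _ (Or.inl hi) hiL
  · rw [alg_mul_sum]
    refine Finset.sum_congr rfl fun a _ => ?_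
    by_cases hai : a = i
    · rw [hai, arc_eq_zero K (by simp), smul_zero, mul_zero]
    · refine idempSum_mul_smul_arc fun hdiv => ?_
      have haj := (div_ne_zero_iff.1 hdiv).1
      exact Finset.mem_filter.2
        ⟨(mem_of_coeff_ne_zero haj).2.2.1, h.src_notMem_of_column haj hai⟩
  · rw [alg_sum_mul]
    exact Finset.sum_congr rfl fun a _ =>
      smul_arc_mul_idempSum fun _ => Finset.mem_filter.2 ⟨hi, hiL⟩
  · rw [alg_mul_sum]
    exact Finset.sum_congr rfl fun b _ =>
      idempSum_mul_smul_arc fun _ => Finset.mem_filter.2 ⟨hj, hjL⟩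
  · rw [alg_sum_mul]
    refine Finset.sum_congr rfl fun b _ => ?_
    by_cases hbj : b = j
    · rw [hbj, arc_eq_zero K (by simp), smul_zero, zero_mul]
    · refine smul_arc_mul_idempSum fun hdiv => ?_
      have hib := (div_ne_zero_iff.1 hdiv).1
      exact Finset.mem_filter.2 ⟨(mem_of_coeff_ne_zero hib).2.2.2, h.src_notMem_of_row hib hbj⟩
  · rw [add_mul, mul_add, add_comm (T.diffElt * _), ← sub_eq_sub_iff_add_eq_add,
      idempSum_mul_diffElt_sub hd, diffElt_eq_sum hd, sum_smul_arc_mul_sum_smul_arc,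
      sum_smul_arc_mul_sum_sum_smul_arc]
    simp only [h.smul_arc_eq hd, alg_sum_sub]

end IsPivot

theorem IsPresentation.mem_branch_of_forall_coeff_eq_zero (hT : T.IsPresentation)
    (hd : Disjoint T.I T.J) {d : Γ.Arrow} (hdm : src d ∈ T.marked)
    (hzero : ∀ a b, a.fst = d.fst → T.coeff a b = 0) :
    ∀ x ∈ T.marked, x ∈ branch d := by
  classical
  refine (hT.subset_or_disjoint (branch d) (n := 0) (n' := 0) (mul_zero _) (zero_mul _)
    (mul_zero _) (zero_mul _) ?_).resolve_right fun h => h _ hdm (src_mem_branch d)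
  rw [add_zero, add_zero, ← sub_eq_zero, idempSum_mul_diffElt_sub hd]
  refine Finset.sum_eq_zero fun a _ => Finset.sum_eq_zero fun b _ => ?_
  by_cases hab : T.coeff a b = 0
  · rw [hab, zero_mul, zero_mul, sub_self]
  have hfst := (mem_of_coeff_ne_zero hab).1
  have hiff : src a ∈ branch d ↔ src b ∈ branch d := by
    refine ⟨fun ha => ?_, fun hb => ?_⟩ <;> by_contra hnot
    · exact hab (hzero a b (by rw [eq_of_mem_branch_of_notMem hfst ha hnot]))
    · exact hab (hzero a b (by rw [hfst, eq_of_mem_branch_of_notMem hfst.symm hb hnot]))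
  simp only [Set.indicator_apply, hiff, Pi.one_apply, sub_self]

end TwoTerm

end Pivot

end BrauerTree
namespace BrauerTree

section Alternating

variable {K : Type u} [Field K] {V : Type v} [Finite V] {Γ : BrauerTree V}

namespace TwoTerm

variable {T : Γ.TwoTerm K}

/-- The marked vertices of `T` are the edges of a walk in the tree, alternately in `I`
and in `J`. -/
structure IsAlternating (T : Γ.TwoTerm K) : Prop where
  disjoint : Disjoint T.I T.J
  eq_of_mem_I : ∀ a b : Γ.Arrow, a.fst = b.fst → src a ∈ T.I → src b ∈ T.I → a = b
  eq_of_mem_J : ∀ a b : Γ.Arrow, a.fst = b.fst → src a ∈ T.J → src b ∈ T.J → a = b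
  coeff_ne_zero : ∀ a b : Γ.Arrow, a.fst = b.fst → src a ∈ T.I → src b ∈ T.J → T.coeff a b ≠ 0
  exists_branch : ∀ d : Γ.Arrow, src d ∈ T.marked → ∀ x ∈ T.marked,
    ∃ a : Γ.Arrow, a.fst = d.fst ∧ src a ∈ T.marked ∧ x ∈ branch a

namespace IsPresentation

theorem marked_subset_branch (hT : T.IsPresentation) (hd : Disjoint T.I T.J) {d : Γ.Arrow}
    (hdm : src d ∈ T.marked) :
    (∃ i j, i.fst = d.fst ∧ T.coeff i j ≠ 0 ∧ T.marked ⊆ branch i ∪ branch j) ∨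
      T.marked ⊆ branch d := by
  classical
  let s := Finset.univ.filter fun p : Γ.Arrow × Γ.Arrow => p.1.fst = d.fst ∧ T.coeff p.1 p.2 ≠ 0
  rcases s.eq_empty_or_nonempty with hs | hs
  · refine Or.inr (hT.mem_branch_of_forall_coeff_eq_zero hd hdm fun a b ha => ?_)
    by_contra hab
    exact Finset.eq_empty_iff_forall_notMem.1 hs (a, b) (by simp [s, ha, hab])
  · obtain ⟨⟨i, j⟩, hij, hmin⟩ := s.exists_min_image (fun p => arcLength p.1 p.2) hs
    obtain ⟨-, hid, hne⟩ := Finset.mem_filter.1 hij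
    exact Or.inl ⟨i, j, hid, hne, IsPivot.mem_branch hT hd ⟨hne, fun a b ha hab =>
      hmin (a, b) (Finset.mem_filter.2 ⟨Finset.mem_univ _, ha.trans hid, hab⟩)⟩⟩

theorem eq_or_eq_of_src_mem_marked (hT : T.IsPresentation) (hd : Disjoint T.I T.J) {d : Γ.Arrow}
    (hdm : src d ∈ T.marked) :
    (∃ i j, T.coeff i j ≠ 0 ∧ ∀ a, a.fst = d.fst → src a ∈ T.marked → a = i ∨ a = j) ∨
      ∀ a, a.fst = d.fst → src a ∈ T.marked → a = d := by
  refine (hT.marked_subset_branch hd hdm).imp ?_ fun h a ha ham =>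
    eq_of_mem_branch ha (src_mem_branch a) (h ham)
  rintro ⟨i, j, hi, hij, h⟩
  refine ⟨i, j, hij, fun a ha ham => (h ham).imp ?_ ?_⟩
  · exact eq_of_mem_branch (ha.trans hi.symm) (src_mem_branch a)
  · exact eq_of_mem_branch (ha.trans (hi.symm.trans (mem_of_coeff_ne_zero hij).1))
      (src_mem_branch a)

theorem isAlternating (hT : T.IsPresentation) (hd : Disjoint T.I T.J) : T.IsAlternating where
  disjoint := hd
  eq_of_mem_I a b hab ha hb := by
    rcases hT.eq_or_eq_of_src_mem_marked hd (Or.inl hb) with ⟨i, j, hij, h⟩ | h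
    · have hj := (mem_of_coeff_ne_zero hij).2.2.2
      have ne_j {c : Γ.Arrow} (hc : src c ∈ T.I) : c ≠ j := by
        rintro rfl
        exact Finset.disjoint_left.1 hd hc hj
      rw [(h a hab (Or.inl ha)).resolve_right (ne_j ha),
        (h b rfl (Or.inl hb)).resolve_right (ne_j hb)]
    · exact h a hab (Or.inl ha)
  eq_of_mem_J a b hab ha hb := by
    rcases hT.eq_or_eq_of_src_mem_marked hd (Or.inr hb) with ⟨i, j, hij, h⟩ | h
    · have hi := (mem_of_coeff_ne_zero hij).2.2.1
      have ne_i {c : Γ.Arrow} (hc : src c ∈ T.J) : c ≠ i := by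
        rintro rfl
        exact Finset.disjoint_left.1 hd hi hc
      rw [(h a hab (Or.inr ha)).resolve_left (ne_i ha),
        (h b rfl (Or.inr hb)).resolve_left (ne_i hb)]
    · exact h a hab (Or.inr ha)
  coeff_ne_zero a b hab ha hb := by
    have ne {c c' : Γ.Arrow} (hc : src c ∈ T.I) (hc' : src c' ∈ T.J) : c ≠ c' := by
      rintro rfl
      exact Finset.disjoint_left.1 hd hc hc'
    rcases hT.eq_or_eq_of_src_mem_marked hd (Or.inr hb) with ⟨i, j, hij, h⟩ | h
    · obtain ⟨-, -, hi, hj⟩ := mem_of_coeff_ne_zero hij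
      rwa [(h a hab (Or.inl ha)).resolve_right (ne ha hj),
        (h b rfl (Or.inr hb)).resolve_left (ne hi hb).symm]
    · exact absurd (h a hab (Or.inl ha)) (ne ha hb)
  exists_branch d hdm x hx := by
    rcases hT.marked_subset_branch hd hdm with ⟨i, j, hid, hij, h⟩ | h
    · obtain ⟨hfst, -, hi, hj⟩ := mem_of_coeff_ne_zero hij
      exact (h hx).elim (fun hxi => ⟨i, hid, Or.inl hi, hxi⟩)
        fun hxj => ⟨j, hfst.symm.trans hid, Or.inr hj, hxj⟩
    · exact ⟨d, rfl, hdm, h hx⟩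

/- At a common element of `I` and `J` the socle of the projective gives a nonzero morphism. -/
theorem disjoint_of_hom_eq_zero [HasDerivedCategory.{w} (ModuleCat (Γ.Alg K))]
    (hT : T.IsPresentation) (h : ∀ φ : T.obj ⟶ T.obj⟦(-1 : ℤ)⟧, φ = 0) : Disjoint T.I T.J := by
  rw [hom_shift_eq_zero_iff] at h
  rw [Finset.disjoint_left]
  intro i hi hj
  have hdiff : idempCoeff K i T.diffElt = 0 := by
    rw [diffElt, mulElt, map_sum]
    exact Finset.sum_eq_zero fun j _ =>
      idempCoeff_entrySum_eq_zero (hT.range_le ⟨stdGen j, rfl⟩) i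
  refine socElt_ne_zero K i (h (socElt K i) ?_ ?_ ?_ ?_)
  · rw [← idemp_mul_socElt, ← mul_assoc, idempSum_mul_idemp hj]
  · rw [← socElt_mul_idemp, mul_assoc, idemp_mul_idempSum hi]
  · rw [mul_socElt, hdiff, zero_smul]
  · rw [socElt_mul, hdiff, zero_smul]

end IsPresentation

end TwoTerm

end Alternating

end BrauerTree

namespace BrauerTree

section Diagram

variable {V : Type v} {Γ : BrauerTree V} {K : Type u} [Field K]

theorem diagram_inter_comm (T U : Γ.TwoTerm K) : T.diagram ∩ U.diagram = U.diagram ∩ T.diagram :=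
  Subdiagram.ext (Set.inter_comm _ _) (Set.inter_comm _ _)

variable [Finite V]

theorem coords_idemp_source_mul (y : Γ.RepIndex) (x : Γ.Alg K) :
    coords Γ K (idemp K y.source * x) y = coords Γ K x y := by
  induction x using path_induction with
  | path d k =>
    by_cases hi : y.source = src d
    · rw [hi, idemp_src_mul_path]
    · rw [idemp_mul_path K hi, map_zero, coords_path]
      by_contra h
      exact hi (source_of_repPath_ne_zero K (Ne.symm h)).1
  | zero => rw [mul_zero]
  | add x y hx hy => rw [mul_add, map_add, map_add, Finsupp.add_apply, Finsupp.add_apply, hx, hy]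
  | smul c x hx =>
    rw [mul_smul_comm, map_smul, map_smul, Finsupp.smul_apply, Finsupp.smul_apply, hx]

theorem coords_mul_idemp_target (y : Γ.RepIndex) (x : Γ.Alg K) :
    coords Γ K (x * idemp K y.target) y = coords Γ K x y := by
  induction x using path_induction with
  | path d k =>
    by_cases hi : src ((Γ.next ^ k) d) = y.target
    · rw [← hi, path_mul_idemp_src]
    · rw [path_mul_idemp K hi, map_zero, coords_path]
      by_contra h
      exact hi (source_of_repPath_ne_zero K (Ne.symm h)).2.symm
  | zero => rw [zero_mul]
  | add x y hx hy => rw [add_mul, map_add, map_add, Finsupp.add_apply, Finsupp.add_apply, hx, hy]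
  | smul c x hx =>
    rw [smul_mul_assoc, map_smul, map_smul, Finsupp.smul_apply, Finsupp.smul_apply, hx]

theorem arcCoeff_idemp_mul_idemp (a b : Γ.Arrow) (x : Γ.Alg K) :
    arcCoeff K a b (idemp K (src a) * x * idemp K (src b)) = arcCoeff K a b x := by
  by_cases h : a.fst = b.fst ∧ a ≠ b
  · have htarget : (RepIndex.arc a (arcLength a b)).target = src b := by
      rw [RepIndex.target, next_pow_arcLength h.1]
    rw [arcCoeff_apply K h.1 h.2, arcCoeff_apply K h.1 h.2, ← htarget, coords_mul_idemp_target]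
    exact coords_idemp_source_mul (RepIndex.arc a (arcLength a b)) x
  · rw [arcCoeff_eq_zero K h, arcCoeff_eq_zero K h]

namespace TwoTerm

variable {T U : Γ.TwoTerm K}

theorem component_ne_zero_of_coeff_ne_zero {i a : Γ.Arrow} (h : T.coeff i a ≠ 0)
    (hi : src i ∈ T.I) (ha : src a ∈ T.J) : T.component ⟨src i, hi⟩ ⟨src a, ha⟩ ≠ 0 := by
  rw [component_ne_zero_iff]
  intro hzero
  rw [coeff, ← arcCoeff_idemp_mul_idemp, hzero, map_zero] at h
  exact h rfl

namespace IsAlternating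

variable {a d i : Γ.Arrow}

theorem ne_of_mem (hT : T.IsAlternating) (hi : src i ∈ T.I) (ha : src a ∈ T.J) : i ≠ a := by
  rintro rfl
  exact Finset.disjoint_left.1 hT.disjoint hi ha

theorem mem_diagramArrows_iff (hT : T.IsAlternating) : d ∈ T.diagramArrows ↔
    ∃ i a : Γ.Arrow, i.fst = d.fst ∧ a.fst = d.fst ∧ src i ∈ T.I ∧ src a ∈ T.J ∧
      arcLength i d < arcLength i a := by
  constructor
  · rintro ⟨i, j, -, d₀, k, m, hkm, hm, hi, hj, rfl⟩
    refine ⟨d₀, (Γ.next ^ m) d₀, (fst_next_pow _ _).symm, by rw [fst_next_pow, fst_next_pow],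
      hi ▸ i.2, hj ▸ j.2, ?_⟩
    rwa [arcLength_eq (hkm.trans hm) rfl, arcLength_eq hm rfl]
  · rintro ⟨i, a, hi, ha, hiI, haJ, hlt⟩
    have hia := hi.trans ha.symm
    exact ⟨⟨src i, hiI⟩, ⟨src a, haJ⟩,
      component_ne_zero_of_coeff_ne_zero (hT.coeff_ne_zero i a hia hiI haJ) hiI haJ,
      i, arcLength i d, arcLength i a, hlt, arcLength_lt i a, rfl, by rw [next_pow_arcLength hia],
      (next_pow_arcLength hi).symm⟩

theorem mem_diagramArrows_iff_arcLength (hT : T.IsAlternating) (hi : i.fst = d.fst)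
    (ha : a.fst = d.fst) (hiI : src i ∈ T.I) (haJ : src a ∈ T.J) :
    d ∈ T.diagramArrows ↔ arcLength i d < arcLength i a := by
  rw [hT.mem_diagramArrows_iff]
  refine ⟨?_, fun h => ⟨i, a, hi, ha, hiI, haJ, h⟩⟩
  rintro ⟨i', a', hi', ha', hiI', haJ', h⟩
  rwa [hT.eq_of_mem_I i i' (hi.trans hi'.symm) hiI hiI',
    hT.eq_of_mem_J a a' (ha.trans ha'.symm) haJ haJ']

theorem mem_diagramArrows_of_src_mem_I (hT : T.IsAlternating) (h : i.fst = a.fst)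
    (hi : src i ∈ T.I) (ha : src a ∈ T.J) : i ∈ T.diagramArrows := by
  rw [hT.mem_diagramArrows_iff_arcLength rfl h.symm hi ha, arcLength_self]
  exact arcLength_pos h (hT.ne_of_mem hi ha)

theorem mem_diagramArrows_of_tgt_mem_J (hT : T.IsAlternating) (hi : i.fst = d.fst)
    (hiI : src i ∈ T.I) (hd : tgt d ∈ T.J) : d ∈ T.diagramArrows := by
  have hnext : (Γ.next d).fst = d.fst := Γ.next_fst d
  rw [hT.mem_diagramArrows_iff_arcLength hi hnext hiI hd,
    arcLength_next hi (hT.ne_of_mem hiI hd).symm]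
  exact Nat.lt_succ_self _

theorem src_notMem_J (hT : T.IsAlternating) (hd : d ∈ T.diagramArrows) : src d ∉ T.J := by
  obtain ⟨i, a, -, ha, -, haJ, hlt⟩ := hT.mem_diagramArrows_iff.1 hd
  intro h
  rw [hT.eq_of_mem_J a d ha haJ h] at hlt
  exact lt_irrefl _ hlt

theorem tgt_notMem_I (hT : T.IsAlternating) (hd : d ∈ T.diagramArrows) : tgt d ∉ T.I := by
  obtain ⟨i, a, hi, -, hiI, -, hlt⟩ := hT.mem_diagramArrows_iff.1 hd
  intro h
  have hinext : i = Γ.next d := hT.eq_of_mem_I i (Γ.next d) (by rw [Γ.next_fst, hi]) hiI h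
  have hturn : (Γ.next ^ (arcLength i d + 1)) i = i := by
    rw [next_pow_succ, next_pow_arcLength hi, ← hinext]
  have hlt' := arcLength_lt i a
  exact next_pow_ne (Nat.succ_pos _) (by lia) hturn

theorem next_mem_diagramArrows (hT : T.IsAlternating) (hd : d ∈ T.diagramArrows)
    (h : tgt d ∉ T.J) : Γ.next d ∈ T.diagramArrows := by
  obtain ⟨i, a, hi, ha, hiI, haJ, hlt⟩ := hT.mem_diagramArrows_iff.1 hd
  have hnext : (Γ.next d).fst = d.fst := Γ.next_fst d
  rw [hT.mem_diagramArrows_iff_arcLength (hi.trans hnext.symm) (ha.trans hnext.symm) hiI haJ]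
  have hni : Γ.next d ≠ i := fun e => hT.tgt_notMem_I hd (by rwa [tgt, e])
  have hlength : arcLength i (Γ.next d) ≠ arcLength i a := fun e => h
    (by rwa [tgt, arcLength_right_inj (hi.trans hnext.symm) (hi.trans ha.symm) e])
  rw [arcLength_next hi hni] at hlength ⊢
  lia

theorem src_mem_marked (hT : T.IsAlternating) {b b' : Γ.Arrow} (hb : b.fst = a.fst)
    (hb' : b'.fst = a.snd) (hbm : src b ∈ T.marked) (hbm' : src b' ∈ T.marked) :
    src a ∈ T.marked := by
  obtain ⟨y, hy, hym, hb'y⟩ := hT.exists_branch b hbm _ hbm'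
  have hb'a : src b' ∈ branch a := src_mem_branch_of_fst (by rw [hb']; exact snd_mem_side a)
  rwa [← eq_of_mem_branch (hy.trans hb) hb'y hb'a]

theorem exists_src_mem_marked (hT : T.IsAlternating) (hd : d ∈ T.diagramArrows) :
    ∃ b : Γ.Arrow, b.fst = d.fst ∧ src b ∈ T.marked := by
  obtain ⟨i, -, hi, -, hiI, -, -⟩ := hT.mem_diagramArrows_iff.1 hd
  exact ⟨i, hi, Or.inl hiI⟩

end IsAlternating

/-- Two complexes with alternating marked vertices whose diagrams have a connected intersection
with more than one vertex, both ends of which are sinks. -/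
structure IsSinkPair (T U : Γ.TwoTerm K) : Prop where
  left : T.IsAlternating
  right : U.IsAlternating
  connected : (T.diagram ∩ U.diagram).Connected
  nontrivial : (T.diagram ∩ U.diagram).verts.Nontrivial
  sinks : ∀ x, (T.diagram ∩ U.diagram).IsDegreeOne x → (T.diagram ∩ U.diagram).IsSink x

theorem eq_or_exists_of_eqvGen {α : Type*} {r : α → α → Prop} {x y : α}
    (h : Relation.EqvGen r x y) : x = y ∨ ((∃ z, r x z ∨ r z x) ∧ ∃ z, r y z ∨ r z y) := by
  induction h with
  | rel x y h => exact Or.inr ⟨⟨y, Or.inl h⟩, x, Or.inr h⟩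
  | refl x => exact Or.inl rfl
  | symm x y _ ih => exact ih.imp Eq.symm And.symm
  | trans x y z _ _ hxy hyz =>
    rcases hxy with rfl | hxy
    · exact hyz
    · rcases hyz with rfl | hyz
      · exact Or.inr hxy
      · exact Or.inr ⟨hxy.1, hyz.2⟩

/-- The arrow `d` belongs to both diagrams. -/
def IsCommonArrow (T U : Γ.TwoTerm K) (d : Γ.Arrow) : Prop :=
  d ∈ T.diagramArrows ∧ d ∈ U.diagramArrows

namespace IsSinkPair

variable {d i i' : Γ.Arrow} {x : Γ.Edge}

theorem symm (h : IsSinkPair T U) : IsSinkPair U T := by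
  have hcomm := diagram_inter_comm T U
  exact ⟨h.right, h.left, hcomm ▸ h.connected, hcomm ▸ h.nontrivial, hcomm ▸ h.sinks⟩

theorem exists_isCommonArrow (h : IsSinkPair T U) (hx : x ∈ T.diagram.verts)
    (hx' : x ∈ U.diagram.verts) : ∃ d, IsCommonArrow T U d ∧ (src d = x ∨ tgt d = x) := by
  obtain ⟨y, hy, hne⟩ := h.nontrivial.exists_ne x
  rcases eq_or_exists_of_eqvGen (h.connected.2 x ⟨hx, hx'⟩ y hy) with e | ⟨⟨z, hz⟩, -⟩
  · exact absurd e.symm hne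
  · rcases hz with ⟨d, hd, hsrc, -⟩ | ⟨d, hd, -, htgt⟩
    · exact ⟨d, hd, Or.inl hsrc⟩
    · exact ⟨d, hd, Or.inr htgt⟩

theorem exists_isCommonArrow_of_mem_marked (h : IsSinkPair T U) (hx : x ∈ T.marked)
    (hx' : x ∈ U.marked) : ∃ d, IsCommonArrow T U d ∧ (src d = x ∨ tgt d = x) :=
  h.exists_isCommonArrow (Or.inl hx) (Or.inl hx')

theorem notMem_J (h : IsSinkPair T U) (hx : x ∈ T.I) : x ∉ U.J := by
  intro hx'
  obtain ⟨d, hd, rfl | rfl⟩ := h.exists_isCommonArrow_of_mem_marked (Or.inl hx) (Or.inr hx')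
  · exact h.right.src_notMem_J hd.2 hx'
  · exact h.left.tgt_notMem_I hd.1 hx

theorem mem_I_of_mem_marked (h : IsSinkPair T U) (hx : x ∈ T.I) (hx' : x ∈ U.marked) : x ∈ U.I :=
  hx'.resolve_right (h.notMem_J hx)

theorem mem_J_of_mem_marked (h : IsSinkPair T U) (hx : x ∈ T.J) (hx' : x ∈ U.marked) : x ∈ U.J :=
  hx'.resolve_left fun hI => h.symm.notMem_J hI hx

theorem exists_ne_of_isCommonArrow (h : IsSinkPair T U) (hd : IsCommonArrow T U d) :
    ∃ e, IsCommonArrow T U e ∧ e ≠ d ∧ (src e = src d ∨ tgt e = src d) := by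
  by_contra! hcon
  have hset : {e ∈ (T.diagram ∩ U.diagram).arrows | src e = src d ∨ tgt e = src d} = {d} := by
    ext e
    constructor
    · rintro ⟨he, hs⟩
      by_contra hne
      exact hs.elim (hcon e he hne).1 (hcon e he hne).2
    · rintro rfl
      exact ⟨hd, Or.inl rfl⟩
  have hdeg : (T.diagram ∩ U.diagram).IsDegreeOne (src d) := by
    refine ⟨⟨Or.inr ⟨d, hd.1, Or.inl rfl⟩, Or.inr ⟨d, hd.2, Or.inl rfl⟩⟩, ?_⟩
    rw [hset, Set.ncard_singleton]
  exact (h.sinks _ hdeg).2.2 d hd rfl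

theorem source_eq_of_arcLength_le (h : IsSinkPair T U) {a' : Γ.Arrow} (hd : IsCommonArrow T U d)
    (hi : i.fst = d.fst) (hiI : src i ∈ T.I) (hi' : i'.fst = d.fst) (hiI' : src i' ∈ U.I)
    (ha' : a'.fst = d.fst) (haJ' : src a' ∈ U.J) (hle : arcLength i d ≤ arcLength i' d) :
    i = i' := by
  by_contra hne
  obtain ⟨-, a, -, ha, -, haJ, -⟩ := h.left.mem_diagramArrows_iff.1 hd.1
  have hlt := (h.right.mem_diagramArrows_iff_arcLength hi' ha' hiI' haJ').1 hd.2
  have hcommon : IsCommonArrow T U i := by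
    refine ⟨h.left.mem_diagramArrows_of_src_mem_I (hi.trans ha.symm) hiI haJ, ?_⟩
    rw [h.right.mem_diagramArrows_iff_arcLength (hi'.trans hi.symm) (ha'.trans hi.symm) hiI' haJ',
      arcLength_sub_right (hi'.trans hi.symm) hi hle]
    lia
  have hunmarked : src i ∉ U.marked := fun hm =>
    hne (h.right.eq_of_mem_I i i' (hi.trans hi'.symm) (h.mem_I_of_mem_marked hiI hm) hiI')
  obtain ⟨e, he, hei, hs | hs⟩ := h.exists_ne_of_isCommonArrow hcommon
  · rcases src_eq_src_iff.1 hs with rfl | rfl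
    · exact hei rfl
    · obtain ⟨b, hb, hbm⟩ := h.right.exists_src_mem_marked he.2
      exact hunmarked (h.right.src_mem_marked (hi'.trans hi.symm) hb (Or.inl hiI') hbm)
  · exact h.left.tgt_notMem_I he.1 (hs ▸ hiI)

theorem source_eq (h : IsSinkPair T U) (hd : IsCommonArrow T U d) (hi : i.fst = d.fst)
    (hiI : src i ∈ T.I) (hi' : i'.fst = d.fst) (hiI' : src i' ∈ U.I) : i = i' := by
  obtain ⟨-, a, -, ha, -, haJ, -⟩ := h.left.mem_diagramArrows_iff.1 hd.1
  obtain ⟨-, a', -, ha', -, haJ', -⟩ := h.right.mem_diagramArrows_iff.1 hd.2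
  rcases le_total (arcLength i d) (arcLength i' d) with hle | hle
  · exact h.source_eq_of_arcLength_le hd hi hiI hi' hiI' ha' haJ' hle
  · exact (h.symm.source_eq_of_arcLength_le hd.symm hi' hiI' hi hiI ha haJ hle).symm

theorem exists_source (h : IsSinkPair T U) (hd : IsCommonArrow T U d) :
    ∃ i a a' : Γ.Arrow, i.fst = d.fst ∧ a.fst = d.fst ∧ a'.fst = d.fst ∧ src i ∈ T.I ∧
      src i ∈ U.I ∧ src a ∈ T.J ∧ src a' ∈ U.J := by
  obtain ⟨i, a, hi, ha, hiI, haJ, -⟩ := h.left.mem_diagramArrows_iff.1 hd.1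
  obtain ⟨i', a', hi', ha', hiI', haJ', -⟩ := h.right.mem_diagramArrows_iff.1 hd.2
  obtain rfl := h.source_eq hd hi hiI hi' hiI'
  exact ⟨i, a, a', hi, ha, ha', hiI, hiI', haJ, haJ'⟩

theorem isCommonArrow_of_src_mem_I (h : IsSinkPair T U) (hi : src i ∈ T.I) (hi' : src i ∈ U.I) :
    IsCommonArrow T U i := by
  have src_eq {d : Γ.Arrow} (hd : IsCommonArrow T U d) (hs : src d = src i ∨ tgt d = src i) :
      src d = src i :=
    hs.resolve_right fun ht => h.left.tgt_notMem_I hd.1 (ht ▸ hi)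
  obtain ⟨d, hd, hs⟩ := h.exists_isCommonArrow_of_mem_marked (Or.inl hi) (Or.inl hi')
  obtain ⟨e, he, hne, hse⟩ := h.exists_ne_of_isCommonArrow hd
  rw [src_eq hd hs] at hse
  rcases src_eq_src_iff.1 (src_eq hd hs) with rfl | rfl
  · exact hd
  · rcases src_eq_src_iff.1 (src_eq he hse) with rfl | rfl
    · exact he
    · exact absurd rfl hne

theorem exists_src_mem_J (h : IsSinkPair T U) (hi : src i ∈ T.I) (hi' : src i ∈ U.I) :
    ∃ a : Γ.Arrow, a.fst = i.fst ∧ src a ∈ T.J := by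
  obtain ⟨-, a, -, ha, -, haJ, -⟩ :=
    h.left.mem_diagramArrows_iff.1 (h.isCommonArrow_of_src_mem_I hi hi').1
  exact ⟨a, ha, haJ⟩

theorem exists_isCommonArrow_of_src_mem_J (h : IsSinkPair T U) {j : Γ.Arrow} (hj : src j ∈ T.J)
    (hj' : src j ∈ U.J) : ∃ d, IsCommonArrow T U d ∧ (Γ.next d = j ∨ Γ.next d = j.symm) := by
  obtain ⟨d, hd, hs | hs⟩ := h.exists_isCommonArrow_of_mem_marked (Or.inr hj) (Or.inr hj')
  · exact absurd (hs ▸ hj) (h.left.src_notMem_J hd.1)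
  · exact ⟨d, hd, src_eq_src_iff.1 hs⟩

theorem exists_mem_I (h : IsSinkPair T U) : ∃ x, x ∈ T.I ∧ x ∈ U.I := by
  obtain ⟨x, hx⟩ := h.connected.1
  obtain ⟨d, hd, -⟩ := h.exists_isCommonArrow hx.1 hx.2
  obtain ⟨i, -, -, -, -, -, hi, hi', -⟩ := h.exists_source hd
  exact ⟨src i, hi, hi'⟩

/- The branches at `b.fst` containing a fixed common marked vertex agree for the two walks. -/
theorem exists_src_mem_I_or_mem_J (h : IsSinkPair T U) {b b' : Γ.Arrow} (hbb : b.fst = b'.fst)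
    (hb : src b ∈ T.marked) (hb' : src b' ∈ U.marked) :
    ∃ e : Γ.Arrow, e.fst = b.fst ∧
      ((src e ∈ T.I ∧ src e ∈ U.I) ∨ (src e ∈ T.J ∧ src e ∈ U.J)) := by
  obtain ⟨x, hx, hx'⟩ := h.exists_mem_I
  obtain ⟨y, hy, hym, hyx⟩ := h.left.exists_branch b hb x (Or.inl hx)
  obtain ⟨y', hy', hym', hyx'⟩ := h.right.exists_branch b' hb' x (Or.inl hx')
  obtain rfl := eq_of_mem_branch (hy.trans (hbb.trans hy'.symm)) hyx hyx'
  exact ⟨y, hy, hym.imp (fun hI => ⟨hI, h.mem_I_of_mem_marked hI hym'⟩)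
    fun hJ => ⟨hJ, h.mem_J_of_mem_marked hJ hym'⟩⟩

end IsSinkPair

end TwoTerm

end Diagram

end BrauerTree

namespace BrauerTree

section ACycle

variable {V : Type v} {Γ : BrauerTree V} {K : Type u} [Field K]

theorem IsArrowChain.fst_eq {L : List Γ.Arrow} (h : IsArrowChain K L) {a b : Γ.Arrow}
    (ha : a ∈ L) (hb : b ∈ L) : a.fst = b.fst := by
  let R (d d' : Γ.Arrow) : Prop := d.fst = d'.fst
  have : IsTrans Γ.Arrow R := ⟨fun _ _ _ => Eq.trans⟩
  have : Std.Symm R := ⟨fun _ _ => Eq.symm⟩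
  have hchain : L.IsChain R := h.2.2.imp fun d d' hd => by
    by_cases e : d' = Γ.next d
    · exact e ▸ (Γ.next_fst d).symm
    · exact absurd (arrow_mul_arrow K e) hd
  exact (List.isChain_iff_pairwise.1 hchain).forall_of_forall (R := R) (fun _ _ => rfl) ha hb

theorem IsACycle.exists_fst_eq {L : List Γ.Arrow} (hL : IsACycle K L) {m : Γ.Edge} {a : Γ.Arrow}
    (ha : a ∈ L) (h : ∃ d ∈ L, src d = m ∨ tgt d = m) : ∃ b, src b = m ∧ b.fst = a.fst := by
  obtain ⟨d, hd, h | h⟩ := h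
  · exact ⟨d, h, hL.1.fst_eq hd ha⟩
  · exact ⟨Γ.next d, h, (Γ.next_fst d).trans (hL.1.fst_eq hd ha)⟩

/-- The arrows of the full turn beginning with `d`, in their cyclic order. -/
noncomputable def turnList (d : Γ.Arrow) : List Γ.Arrow :=
  (List.range (turnLength d)).map fun k => (Γ.next ^ k) d

theorem nodup_turnList (d : Γ.Arrow) : (turnList d).Nodup :=
  List.nodup_range.map_on fun _ hk _ hl => next_pow_inj (List.mem_range.1 hk) (List.mem_range.1 hl)

variable [Finite V]

theorem arrow_mul_arrow_next_ne_zero {d : Γ.Arrow} (h : 2 ≤ turnLength d) :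
    arrow K d * arrow K (Γ.next d) ≠ 0 := by
  intro hzero
  have hpath : path K d 2 = 0 := by rw [path_succ, path_one, pow_one, hzero]
  have hrep : repPath K d 2 = 0 := by rw [← coords_path, hpath, map_zero]
  rcases h.lt_or_eq with h | h
  · rw [repPath_of_lt K two_pos h] at hrep
    exact one_ne_zero (Finsupp.single_eq_zero.1 hrep)
  · rw [h, repPath_turnLength] at hrep
    exact one_ne_zero (Finsupp.single_eq_zero.1 hrep)

theorem mem_turnList {b d : Γ.Arrow} (h : b.fst = d.fst) : b ∈ turnList d := by
  obtain ⟨k, hk, hkb⟩ := exists_next_pow_eq h.symm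
  exact List.mem_map.2 ⟨k, List.mem_range.2 hk, hkb⟩

variable (K)

theorem isArrowChain_turnList (d : Γ.Arrow) : IsArrowChain K (turnList d) := by
  refine ⟨List.ne_nil_of_mem (mem_turnList rfl), nodup_turnList d, ?_⟩
  rw [List.isChain_iff_getElem]
  intro k hk
  rw [turnList, List.length_map, List.length_range] at hk
  simp only [turnList, List.getElem_map, List.getElem_range]
  rw [next_pow_succ]
  exact arrow_mul_arrow_next_ne_zero (by rw [turnLength_next_pow]; lia)

theorem isACycle_turnList (d : Γ.Arrow) : IsACycle K (turnList d) := by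
  refine ⟨isArrowChain_turnList K d, fun L hL hinfix => ?_⟩
  refine (hinfix.eq_of_length (le_antisymm hinfix.length_le ?_)).symm
  refine (hL.2.1.subperm fun b hb => mem_turnList ?_).length_le
  exact hL.fst_eq hb (hinfix.subset (mem_turnList rfl))

variable {K}

namespace TwoTerm

variable {T S : Γ.TwoTerm K}

theorem mem_restriction_arrows_iff {a : Γ.Arrow} : a ∈ (T.restriction S).arrows ↔
    a ∈ T.diagramArrows ∧ ∃ b : Γ.Arrow, src b ∈ S.marked ∧ b.fst = a.fst := by
  refine and_congr_right fun _ => ⟨?_, ?_⟩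
  · rintro ⟨L, hL, ⟨m, hm, h⟩, ha⟩
    obtain ⟨b, rfl, hb⟩ := hL.exists_fst_eq ha h
    exact ⟨b, hm, hb⟩
  · rintro ⟨b, hb, hba⟩
    exact ⟨turnList a, isACycle_turnList K a, ⟨_, hb, b, mem_turnList hba, Or.inl rfl⟩,
      mem_turnList rfl⟩

theorem mem_restriction_verts_iff {x : Γ.Edge} : x ∈ (T.restriction S).verts ↔
    x ∈ T.diagram.verts ∧ ∃ b b' : Γ.Arrow, src b ∈ S.marked ∧ src b' = x ∧ b.fst = b'.fst := by
  refine and_congr_right fun _ => ⟨?_, ?_⟩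
  · rintro ⟨L, hL, ⟨m, hm, h⟩, h'⟩
    obtain ⟨a, ha⟩ := List.exists_mem_of_ne_nil L hL.1.1
    obtain ⟨b, rfl, hb⟩ := hL.exists_fst_eq ha h
    obtain ⟨b', hx, hb'⟩ := hL.exists_fst_eq ha h'
    exact ⟨b, b', hm, hx, hb.trans hb'.symm⟩
  · rintro ⟨b, b', hb, hb', hbb'⟩
    exact ⟨turnList b, isACycle_turnList K b, ⟨_, hb, b, mem_turnList rfl, Or.inl rfl⟩,
      b', mem_turnList hbb'.symm, Or.inl hb'⟩

end TwoTerm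

end ACycle

end BrauerTree

namespace BrauerTree

section Precedes

variable {V : Type v} {Γ : BrauerTree V} {K : Type u} [Field K]

namespace TwoTerm

/-- At every common source the arc of `T` is contained in the arc of `U`, and at a common sink the
walk of `U` continues whenever that of `T` may. -/
structure Precedes (T U : Γ.TwoTerm K) : Prop where
  arcLength_le : ∀ i a a' : Γ.Arrow, a.fst = i.fst → a'.fst = i.fst → src i ∈ T.I → src i ∈ U.I →
    src a ∈ T.J → src a' ∈ U.J → arcLength i a ≤ arcLength i a'
  exists_source : ∀ j : Γ.Arrow, src j ∈ T.J → src j ∈ U.J →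
    ∃ b : Γ.Arrow, b.fst = j.fst ∧ src b ∈ U.I

/-- The walk of `T` ends with the edge of `j`, which is a sink, at the vertex `j.fst`. -/
structure EndsAt (T : Γ.TwoTerm K) (j : Γ.Arrow) : Prop where
  src_mem_J : src j ∈ T.J
  src_notMem_I : ∀ b : Γ.Arrow, b.fst = j.fst → src b ∉ T.I

variable [Finite V] {T U : Γ.TwoTerm K}

namespace IsAlternating

variable {d j : Γ.Arrow}

theorem isDegreeOne (hT : T.IsAlternating) (hd : d ∈ T.diagramArrows)
    (hdj : Γ.next d = j.symm) (hj : T.EndsAt j) : T.diagram.IsDegreeOne (src j) := by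
  refine ⟨Or.inl (Or.inr hj.src_mem_J), Set.ncard_eq_one.2 ⟨d, ?_⟩⟩
  ext e
  constructor
  · rintro ⟨he, hs | hs⟩
    · exact absurd (hs ▸ hj.src_mem_J) (hT.src_notMem_J he)
    · rcases src_eq_src_iff.1 hs with hn | hn
      · obtain ⟨i, -, hi, -, hiI, -⟩ := hT.mem_diagramArrows_iff.1 he
        exact absurd hiI (hj.src_notMem_I i (by rw [hi, ← hn, Γ.next_fst]))
      · exact Γ.next.injective (hn.trans hdj.symm)
  · rintro rfl
    exact ⟨hd, Or.inr (by rw [tgt, hdj, src_symm])⟩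

theorem next_ne_self (hT : T.IsAlternating) (hd : d ∈ T.diagramArrows) : Γ.next d ≠ d := by
  intro hnext
  obtain ⟨i, a, hi, -, -, -, hlt⟩ := hT.mem_diagramArrows_iff.1 hd
  have hltturn := arcLength_lt i a
  have hturn := turnLength_eq hi
  have hle : ¬ 1 < turnLength d := fun h => next_pow_ne one_pos h (by rw [pow_one, hnext])
  lia

theorem endsAt_of_forall_eq (hT : T.IsAlternating) (hd : d ∈ T.diagramArrows)
    (huniq : ∀ e ∈ T.diagramArrows, src e = tgt d ∨ tgt e = tgt d → e = d) :
    T.EndsAt (Γ.next d).symm := by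
  have hJ : tgt d ∈ T.J := by
    by_contra h
    exact hT.next_ne_self hd (huniq _ (hT.next_mem_diagramArrows hd h) (Or.inl rfl))
  refine ⟨by rwa [src_symm], fun b hb hbI => ?_⟩
  obtain ⟨e, he, hfst⟩ := exists_next_eq (Γ.next d).symm
  have htgt : tgt e = tgt d := by rw [tgt, he, src_symm, tgt]
  have heT := hT.mem_diagramArrows_of_tgt_mem_J (hb.trans hfst.symm) hbI (htgt ▸ hJ)
  rw [huniq e heT (Or.inr htgt)] at he
  exact SimpleGraph.Dart.symm_ne _ he.symm

end IsAlternating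

namespace IsSinkPair

theorem exists_isDegreeOne_iff (h : IsSinkPair T U) :
    (∃ x, T.diagram.IsDegreeOne x ∧ U.diagram.IsDegreeOne x) ↔ ∃ j, T.EndsAt j ∧ U.EndsAt j := by
  constructor
  · rintro ⟨x, ⟨hx, hT⟩, hx', hU⟩
    obtain ⟨d, hd, hs⟩ := h.exists_isCommonArrow hx hx'
    obtain ⟨t, ht⟩ := Set.ncard_eq_one.1 hT
    obtain ⟨t', ht'⟩ := Set.ncard_eq_one.1 hU
    have huniqT : ∀ e ∈ T.diagramArrows, src e = x ∨ tgt e = x → e = d := fun e he hes =>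
      (show e = t from ht.subset ⟨he, hes⟩).trans (show d = t from ht.subset ⟨hd.1, hs⟩).symm
    have huniqU : ∀ e ∈ U.diagramArrows, src e = x ∨ tgt e = x → e = d := fun e he hes =>
      (show e = t' from ht'.subset ⟨he, hes⟩).trans (show d = t' from ht'.subset ⟨hd.2, hs⟩).symm
    rcases hs with rfl | rfl
    · obtain ⟨e, he, hne, hes⟩ := h.exists_ne_of_isCommonArrow hd
      exact absurd (huniqT e he.1 hes) hne
    · exact ⟨(Γ.next d).symm, h.left.endsAt_of_forall_eq hd.1 huniqT,
        h.right.endsAt_of_forall_eq hd.2 huniqU⟩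
  · rintro ⟨j, hT, hU⟩
    obtain ⟨d, hd, hn | hn⟩ := h.exists_isCommonArrow_of_src_mem_J hT.src_mem_J hU.src_mem_J
    · obtain ⟨i, -, -, hi, -, -, hiI, -⟩ := h.exists_source hd
      exact absurd hiI (hT.src_notMem_I i (by rw [hi, ← hn, Γ.next_fst]))
    · exact ⟨src j, h.left.isDegreeOne hd.1 hn hT, h.right.isDegreeOne hd.2 hn hU⟩

theorem mem_diagramArrows_of_precedes (h : IsSinkPair T U) (hp : Precedes T U) {d b : Γ.Arrow}
    (hd : d ∈ T.diagramArrows) (hb : b.fst = d.fst) (hbm : src b ∈ U.marked) :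
    d ∈ U.diagramArrows := by
  obtain ⟨i, a, hi, ha, hiI, haJ, hlt⟩ := h.left.mem_diagramArrows_iff.1 hd
  obtain ⟨e, he, ⟨heT, heU⟩ | ⟨heT, heU⟩⟩ :=
    h.exists_src_mem_I_or_mem_J (hi.trans hb.symm) (Or.inl hiI) hbm
  · obtain rfl := h.left.eq_of_mem_I e i he heT hiI
    obtain ⟨a', ha', haJ'⟩ := h.symm.exists_src_mem_J heU heT
    rw [h.right.mem_diagramArrows_iff_arcLength hi (ha'.trans hi) heU haJ']
    exact hlt.trans_le (hp.arcLength_le e a a' (ha.trans hi.symm) ha' hiI heU haJ haJ')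
  · obtain rfl := h.left.eq_of_mem_J e a ((he.trans hi).trans ha.symm) heT haJ
    obtain ⟨b', hb', hbI'⟩ := hp.exists_source e heT heU
    obtain ⟨p, rfl, hpf⟩ := exists_next_eq e
    have hcommon : IsCommonArrow T U p :=
      ⟨h.left.mem_diagramArrows_of_tgt_mem_J (he.symm.trans hpf.symm) hiI heT,
        h.right.mem_diagramArrows_of_tgt_mem_J (hb'.trans hpf.symm) hbI' heU⟩
    obtain rfl := h.source_eq hcommon (he.symm.trans hpf.symm) hiI (hb'.trans hpf.symm) hbI'
    rwa [h.right.mem_diagramArrows_iff_arcLength hi ha hbI' heU]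

theorem precedes_of_restriction_subset (h : IsSinkPair T U)
    (hend : ¬ ∃ x, T.diagram.IsDegreeOne x ∧ U.diagram.IsDegreeOne x)
    (hsub : T.restriction U ⊆ U.restriction T) : Precedes T U := by
  have hmem {d b : Γ.Arrow} (hd : d ∈ T.diagramArrows) (hb : b.fst = d.fst)
      (hbm : src b ∈ U.marked) : d ∈ U.diagramArrows :=
    (mem_restriction_arrows_iff.1 (hsub.2 (mem_restriction_arrows_iff.2 ⟨hd, b, hbm, hb⟩))).1
  constructor
  · intro i a a' ha ha' hi _ haJ haJ'
    by_contra hlt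
    have hd := (h.left.mem_diagramArrows_iff_arcLength ha'.symm (ha.trans ha'.symm) hi haJ).2
      (not_le.1 hlt)
    exact h.right.src_notMem_J (hmem hd rfl (Or.inr haJ')) haJ'
  · intro j hj hj'
    by_contra! hcon
    refine hend (h.exists_isDegreeOne_iff.2 ⟨j, ⟨hj, fun b hb hbI => ?_⟩, hj', hcon⟩)
    obtain ⟨p, rfl, hpf⟩ := exists_next_eq j
    have hpU := hmem (h.left.mem_diagramArrows_of_tgt_mem_J (hb.trans hpf.symm) hbI hj) hpf.symm
      (Or.inr hj')
    obtain ⟨i, -, hi, -, hiI, -⟩ := h.right.mem_diagramArrows_iff.1 hpU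
    exact hcon i (hi.trans hpf) hiI

theorem mem_verts_of_src_mem_marked (h : IsSinkPair T U) (hp : Precedes T U) {b b' : Γ.Arrow}
    (hbm : src b ∈ U.marked) (hbb : b.fst = b'.fst) (hbm' : src b' ∈ T.marked) :
    src b' ∈ U.diagram.verts := by
  obtain ⟨e, he, ⟨heT, heU⟩ | ⟨heT, heU⟩⟩ := h.exists_src_mem_I_or_mem_J hbb.symm hbm' hbm
  · rcases hbm' with hI | hJ
    · obtain rfl := h.left.eq_of_mem_I e b' he heT hI
      exact Or.inl (Or.inl heU)
    · obtain ⟨p, rfl, hpf⟩ := exists_next_eq b'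
      exact Or.inr ⟨p, h.mem_diagramArrows_of_precedes hp
        (h.left.mem_diagramArrows_of_tgt_mem_J (he.trans hpf.symm) heT hJ) (hbb.trans hpf.symm) hbm,
        Or.inr rfl⟩
  · rcases hbm' with hI | hJ
    · exact Or.inr ⟨b', h.mem_diagramArrows_of_precedes hp
        (h.left.mem_diagramArrows_of_src_mem_I he.symm hI heT) hbb hbm, Or.inl rfl⟩
    · obtain rfl := h.left.eq_of_mem_J e b' he heT hJ
      exact Or.inl (Or.inr heU)

theorem src_mem_marked_or_src_mem_marked (h : IsSinkPair T U) {a b c : Γ.Arrow}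
    (hb : b.fst = a.fst) (hbm : src b ∈ U.marked) (hc : c.fst = a.snd) (hcm : src c ∈ T.marked) :
    src a ∈ T.marked ∨ src a ∈ U.marked := by
  obtain ⟨x, hx, hx'⟩ := h.exists_mem_I
  obtain ⟨y, hy, hym, hyx⟩ := h.left.exists_branch c hcm x (Or.inl hx)
  obtain ⟨z, hz, hzm, hzx⟩ := h.right.exists_branch b hbm x (Or.inl hx')
  rcases mem_branch_or_mem_branch_symm a x with hax | hax
  · rw [← eq_of_mem_branch (hz.trans hb) hzx hax]
    exact Or.inr hzm
  · rw [← src_symm a, ← eq_of_mem_branch (hy.trans hc) hyx hax]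
    exact Or.inl hym

theorem restriction_arrows_subset_of_precedes (h : IsSinkPair T U) (hp : Precedes T U) :
    (T.restriction U).arrows ⊆ (U.restriction T).arrows := by
  intro d hd
  obtain ⟨hdT, b, hbm, hb⟩ := mem_restriction_arrows_iff.1 hd
  obtain ⟨c, hc, hcm⟩ := h.left.exists_src_mem_marked hdT
  exact mem_restriction_arrows_iff.2 ⟨h.mem_diagramArrows_of_precedes hp hdT hb hbm, c, hcm, hc⟩

theorem restriction_verts_subset_of_precedes (h : IsSinkPair T U) (hp : Precedes T U) :
    (T.restriction U).verts ⊆ (U.restriction T).verts := by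
  intro x hx
  obtain ⟨hxT, b, b', hbm, rfl, hbb⟩ := mem_restriction_verts_iff.1 hx
  rw [mem_restriction_verts_iff]
  by_cases hm : src b' ∈ T.marked
  · exact ⟨h.mem_verts_of_src_mem_marked hp hbm hbb hm, b', b', hm, rfl, rfl⟩
  obtain ⟨d, hd, hs⟩ := hxT.resolve_left hm
  obtain ⟨d', hd', hdf⟩ : ∃ d' : Γ.Arrow, src d' = src b' ∧ d'.fst = d.fst := by
    rcases hs with hs | hs
    · exact ⟨d, hs, rfl⟩
    · exact ⟨Γ.next d, hs, Γ.next_fst d⟩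
  obtain ⟨c, hc, hcm⟩ := h.left.exists_src_mem_marked hd
  refine ⟨?_, c, d', hcm, hd', hc.trans hdf.symm⟩
  rcases src_eq_src_iff.1 hd' with rfl | rfl
  · exact Or.inr ⟨d, h.mem_diagramArrows_of_precedes hp hd (hbb.trans hdf) hbm, hs⟩
  · exact Or.inl
      ((h.src_mem_marked_or_src_mem_marked hbb hbm (hc.trans hdf.symm) hcm).resolve_left hm)

theorem restriction_subset_iff (h : IsSinkPair T U)
    (hend : ¬ ∃ x, T.diagram.IsDegreeOne x ∧ U.diagram.IsDegreeOne x) :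
    T.restriction U ⊆ U.restriction T ↔ Precedes T U :=
  ⟨h.precedes_of_restriction_subset hend, fun hp =>
    ⟨h.restriction_verts_subset_of_precedes hp, h.restriction_arrows_subset_of_precedes hp⟩⟩

end IsSinkPair

end TwoTerm

end Precedes

end BrauerTree

namespace BrauerTree

section Potential

variable {V : Type v} {Γ : BrauerTree V} {K : Type u} [Field K] [Finite V]

/- A tree has more vertices than edges, hence the system has more unknowns than equations. -/
theorem exists_potential_ne_zero (x : Γ.Arrow → K) :
    ∃ z : V → K, z ≠ 0 ∧ ∀ d : Γ.Arrow, x d * z d.fst + x d.symm * z d.snd = 0 := by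
  classical
  have := Fintype.ofFinite V
  choose δ hδ using exists_src_eq (Γ := Γ)
  let L : (V → K) →ₗ[K] (Γ.Edge → K) := LinearMap.pi fun e =>
    x (δ e) • LinearMap.proj (δ e).fst + x (δ e).symm • LinearMap.proj (δ e).snd
  have hcard : Module.finrank K (Γ.Edge → K) < Module.finrank K (V → K) := by
    rw [Module.finrank_fintype_fun_eq_card, Module.finrank_fintype_fun_eq_card,
      ← Γ.isTree.card_edgeFinset, ← SimpleGraph.card_edgeSet]
    convert Nat.lt_succ_self _
  obtain ⟨z, hz, hne⟩ := Submodule.exists_mem_ne_zero_of_ne_bot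
    (LinearMap.ker_ne_bot_of_finrank_lt hcard (f := L))
  refine ⟨z, hne, fun d => ?_⟩
  have heq : x (δ (src d)) * z (δ (src d)).fst + x (δ (src d)).symm * z (δ (src d)).snd = 0 :=
    congrFun (LinearMap.mem_ker.1 hz) (src d)
  rcases src_eq_src_iff.1 (hδ (src d)) with h | h
  · rwa [h] at heq
  · rwa [h, SimpleGraph.Dart.symm_symm, add_comm] at heq

theorem exists_potential (x : Γ.Arrow → K) (hx : ∀ d, x d ≠ 0) :
    ∃ z : V → K, (∀ v, z v ≠ 0) ∧ ∀ d : Γ.Arrow, x d * z d.fst + x d.symm * z d.snd = 0 := by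
  obtain ⟨z, hne, hz⟩ := exists_potential_ne_zero x
  have eq_zero_of_adj {u v : V} (huv : Γ.graph.Adj u v) (hu : z u = 0) : z v = 0 := by
    have heq : x _ * z u + x _ * z v = 0 := hz ⟨(u, v), huv⟩
    rw [hu, mul_zero, zero_add] at heq
    exact (mul_eq_zero.1 heq).resolve_left (hx _)
  refine ⟨z, fun v hv => hne (funext fun u => ?_), hz⟩
  obtain ⟨p⟩ := Γ.isTree.connected v u
  induction p with
  | nil => exact hv
  | cons hadj _ ih => exact ih (eq_zero_of_adj hadj hv)

theorem exists_potential_of_ne_zero (x : Γ.Arrow → K) :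
    ∃ z : V → K, (∀ v, z v ≠ 0) ∧
      ∀ d : Γ.Arrow, x d ≠ 0 → x d.symm ≠ 0 → x d * z d.fst + x d.symm * z d.snd = 0 := by
  classical
  obtain ⟨z, hz, heq⟩ := exists_potential (fun d => if x d = 0 then 1 else x d) fun d => by
    split_ifs with h
    · exact one_ne_zero
    · exact h
  refine ⟨z, hz, fun d hd hd' => ?_⟩
  simpa only [if_neg hd, if_neg hd'] using heq d

end Potential

section ArcSums

variable {V : Type v} {Γ : BrauerTree V} {K : Type u} [Field K] [Finite V]

theorem arcCoeff_sum_arc (m : Γ.Arrow → Γ.Arrow → K) {a b : Γ.Arrow} (h : a.fst = b.fst)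
    (hne : a ≠ b) : arcCoeff K a b (∑ a, ∑ b, m a b • arc K a b) = m a b := by
  rw [map_sum, Finset.sum_eq_single a]
  · rw [map_sum, Finset.sum_eq_single b]
    · rw [map_smul, arcCoeff_arc_self K h hne, smul_eq_mul, mul_one]
    · intro b' _ hb
      rw [map_smul, arcCoeff_arc_of_ne K (Or.inr hb.symm), smul_zero]
    · simp
  · intro a' _ ha
    rw [map_sum]
    refine Finset.sum_eq_zero fun b' _ => ?_
    rw [map_smul, arcCoeff_arc_of_ne K (Or.inl ha.symm), smul_zero]
  · simp

theorem arc_mul_arc_eq_zero_or_eq_arc {a c : Γ.Arrow} (hac : a ≠ c) (b : Γ.Arrow) :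
    arc K a b * arc K b c = 0 ∨ arc K a b * arc K b c = arc K a c := by
  by_cases hab : a.fst = b.fst ∧ a ≠ b
  · by_cases hbc : b.fst = c.fst ∧ b ≠ c
    · rcases lt_trichotomy (arcLength a b + arcLength b c) (turnLength a) with hlt | heq | hgt
      · exact Or.inr (arc_mul_arc_of_lt K hab.1 hbc.1 hab.2 hbc.2 hlt)
      · have hcomm := arcLength_add_arcLength_comm hab.1 hab.2
        exact absurd (arcLength_right_inj hab.1.symm hbc.1 (by lia)) hac
      · exact Or.inl (arc_mul_arc_of_gt K hab.1 hbc.1 hab.2 hbc.2 hgt)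
    · exact Or.inl (by rw [arc_eq_zero K hbc, mul_zero])
  · exact Or.inl (by rw [arc_eq_zero K hab, zero_mul])

theorem socCoeff_arc_mul_arc {a c : Γ.Arrow} (hac : a ≠ c) (b : Γ.Arrow) (i : Γ.Edge) :
    socCoeff K i (arc K a b * arc K b c) = 0 := by
  rcases arc_mul_arc_eq_zero_or_eq_arc (K := K) hac b with h | h
  · rw [h, map_zero]
  · rw [h, socCoeff_arc]

theorem arcCoeff_arc_mul_arc_of_ne {a c a' c' : Γ.Arrow} (b : Γ.Arrow) (h : a' ≠ a ∨ c' ≠ c) :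
    arcCoeff K a' c' (arc K a b * arc K b c) = 0 := by
  by_cases hac : a = c
  · subst hac
    by_cases hab : a.fst = b.fst ∧ a ≠ b
    · rw [arc_mul_arc_self K hab.1 hab.2, arcCoeff_socElt]
    · rw [arc_eq_zero K hab, zero_mul, map_zero]
  · rcases arc_mul_arc_eq_zero_or_eq_arc (K := K) hac b with h0 | h0
    · rw [h0, map_zero]
    · rw [h0, arcCoeff_arc_of_ne K h]

theorem sum_arc_mul_sum_arc (p q : Γ.Arrow → Γ.Arrow → K) :
    (∑ a, ∑ b, p a b • arc K a b) * ∑ b, ∑ c, q b c • arc K b c =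
      ∑ a, ∑ b, ∑ c, (p a b * q b c) • (arc K a b * arc K b c) := by
  rw [alg_sum_mul]
  refine Finset.sum_congr rfl fun a _ => ?_
  rw [alg_sum_mul]
  refine Finset.sum_congr rfl fun b _ => ?_
  rw [alg_mul_sum, Finset.sum_eq_single b]
  · rw [alg_mul_sum]
    exact Finset.sum_congr rfl fun c _ => smul_mul_smul_comm ..
  · intro b' _ hb
    rw [alg_mul_sum]
    refine Finset.sum_eq_zero fun c _ => ?_
    rw [smul_mul_smul_comm, arc_mul_arc_of_ne K _ _ hb.symm, smul_zero]
  · simp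

theorem sum_smul_socElt_eq_zero {r : Γ.Arrow → K} (h : ∀ d, r d + r d.symm = 0) :
    ∑ d, r d • socElt K (src d) = 0 := by
  refine Finset.sum_involution (fun d _ => d.symm) (fun d _ => ?_)
    (fun d _ _ => SimpleGraph.Dart.symm_ne d) (fun d _ => Finset.mem_univ _)
    (fun d _ => SimpleGraph.Dart.symm_symm d)
  rw [src_symm, ← add_smul, h, zero_smul]

/- The surviving products `arc a b * arc b a` are the full turns at `src a`. -/
theorem sum_arc_mul_sum_arc_eq_zero {p q : Γ.Arrow → Γ.Arrow → K}
    (hp : ∀ a b, p a b ≠ 0 → a.fst = b.fst ∧ a ≠ b)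
    (hpq : ∀ a b c, p a b ≠ 0 → q b c ≠ 0 → a ≠ c → arc K a b * arc K b c = 0)
    (hturn : ∀ d, ∑ b, p d b * q b d + ∑ b, p d.symm b * q b d.symm = 0) :
    (∑ a, ∑ b, p a b • arc K a b) * ∑ b, ∑ c, q b c • arc K b c = 0 := by
  rw [sum_arc_mul_sum_arc, ← sum_smul_socElt_eq_zero (r := fun d => ∑ b, p d b * q b d) hturn]
  refine Finset.sum_congr rfl fun a _ => ?_
  rw [Finset.sum_smul]
  refine Finset.sum_congr rfl fun b _ => ?_
  rw [Finset.sum_eq_single a]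
  · by_cases hab : p a b = 0
    · rw [hab, zero_mul, zero_smul, zero_smul]
    · rw [arc_mul_arc_self K (hp a b hab).1 (hp a b hab).2]
  · intro c _ hc
    by_cases hab : p a b = 0
    · rw [hab, zero_mul, zero_smul]
    by_cases hbc : q b c = 0
    · rw [hbc, mul_zero, zero_smul]
    rw [hpq a b c hab hbc hc.symm, smul_zero]
  · simp

open Classical in
theorem socCoeff_sum_smul_arc_mul_arc {r : Γ.Arrow → K} {a b : Γ.Arrow} (i : Γ.Edge)
    (hr : r a ≠ 0 → a.fst = b.fst ∧ a ≠ b) :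
    socCoeff K i (∑ c, r c • (arc K a b * arc K b c)) = if src a = i then r a else 0 := by
  rw [map_sum, Finset.sum_eq_single a]
  · by_cases hab : r a = 0
    · simp [hab]
    rw [map_smul, arc_mul_arc_self K (hr hab).1 (hr hab).2]
    split_ifs with h
    · rw [h, socCoeff_socElt_self, smul_eq_mul, mul_one]
    · rw [socCoeff_socElt_of_ne K (Ne.symm h), smul_zero]
  · intro c _ hc
    rw [map_smul, socCoeff_arc_mul_arc hc.symm, smul_zero]
  · simp

theorem socCoeff_sum_arc_mul_sum_arc {p q : Γ.Arrow → Γ.Arrow → K}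
    (hp : ∀ a b, p a b ≠ 0 → a.fst = b.fst ∧ a ≠ b) (d : Γ.Arrow) :
    socCoeff K (src d) ((∑ a, ∑ b, p a b • arc K a b) * ∑ b, ∑ c, q b c • arc K b c) =
      ∑ b, p d b * q b d + ∑ b, p d.symm b * q b d.symm := by
  classical
  have hfilter : Finset.univ.filter (fun a : Γ.Arrow => src a = src d) = {d, d.symm} := by
    ext a
    simp [src_eq_src_iff]
  rw [sum_arc_mul_sum_arc, map_sum,
    ← Finset.sum_pair (f := fun a => ∑ b, p a b * q b a) (SimpleGraph.Dart.symm_ne d).symm,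
    ← hfilter, Finset.sum_filter]
  refine Finset.sum_congr rfl fun a _ => ?_
  rw [map_sum, Finset.sum_congr rfl fun b _ =>
    socCoeff_sum_smul_arc_mul_arc (src d) fun h => hp a b (left_ne_zero_of_mul h)]
  split_ifs <;> simp

theorem arcCoeff_sum_arc_mul_sum_arc (p q : Γ.Arrow → Γ.Arrow → K) (a c : Γ.Arrow) :
    arcCoeff K a c ((∑ a, ∑ b, p a b • arc K a b) * ∑ b, ∑ c, q b c • arc K b c) =
      ∑ b, p a b * q b c * arcCoeff K a c (arc K a b * arc K b c) := by
  rw [sum_arc_mul_sum_arc, map_sum, Finset.sum_eq_single a]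
  · rw [map_sum]
    refine Finset.sum_congr rfl fun b _ => ?_
    rw [map_sum, Finset.sum_eq_single c]
    · rw [map_smul, smul_eq_mul]
    · intro c' _ hc
      rw [map_smul, arcCoeff_arc_mul_arc_of_ne b (Or.inr hc.symm), smul_zero]
    · simp
  · intro a' _ ha
    rw [map_sum]
    refine Finset.sum_eq_zero fun b _ => ?_
    rw [map_sum]
    refine Finset.sum_eq_zero fun c' _ => ?_
    rw [map_smul, arcCoeff_arc_mul_arc_of_ne b (Or.inl ha.symm), smul_zero]
  · simp

end ArcSums

end BrauerTree

namespace BrauerTree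

namespace TwoTerm

section Link

variable {V : Type v} {Γ : BrauerTree V} {K : Type u} [Field K] {T U : Γ.TwoTerm K}

/-- The element `α` represents a morphism of complexes from `T` to `U[-1]`, that is, a map from the
term of `T` in degree one to the term of `U` in degree zero whose composites with both
differentials vanish. -/
structure IsLink (T U : Γ.TwoTerm K) (α : Γ.Alg K) : Prop where
  idempSum_mul : idempSum K T.J * α = α
  mul_idempSum : α * idempSum K U.I = α
  diffElt_mul : T.diffElt * α = 0
  mul_diffElt : α * U.diffElt = 0

theorem hom_shift_eq_zero_iff_isLink [HasDerivedCategory.{w} (ModuleCat (Γ.Alg K))] :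
    (∀ φ : T.obj ⟶ U.obj⟦(-1 : ℤ)⟧, φ = 0) ↔ ∀ α, IsLink T U α → α = 0 := by
  rw [hom_shift_eq_zero_iff]
  exact ⟨fun h α hα => h α hα.1 hα.2 hα.3 hα.4, fun h α h1 h2 h3 h4 => h α ⟨h1, h2, h3, h4⟩⟩

variable [Finite V]

namespace IsAlternating

theorem sum_coeff_mul (hT : T.IsAlternating) {d a : Γ.Arrow} (hda : a.fst = d.fst)
    (ha : src a ∈ T.J) (g : Γ.Arrow → K) : ∑ b, T.coeff d b * g b = T.coeff d a * g a := by
  refine Finset.sum_eq_single a (fun b _ hb => ?_) (by simp)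
  by_contra h
  obtain ⟨hfst, -, -, hJ⟩ := mem_of_coeff_ne_zero (left_ne_zero_of_mul h)
  exact hb (hT.eq_of_mem_J b a (hfst.symm.trans hda.symm) hJ ha)

theorem sum_mul_coeff (hT : T.IsAlternating) {d i : Γ.Arrow} (hdi : i.fst = d.fst)
    (hi : src i ∈ T.I) (g : Γ.Arrow → K) : ∑ b, g b * T.coeff b d = g i * T.coeff i d := by
  refine Finset.sum_eq_single i (fun b _ hb => ?_) (by simp)
  by_contra h
  obtain ⟨hfst, -, hI, -⟩ := mem_of_coeff_ne_zero (right_ne_zero_of_mul h)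
  exact hb (hT.eq_of_mem_I b i (hfst.trans hdi.symm) hI hi)

end IsAlternating

end Link

section LinkElt

variable {V : Type v} {Γ : BrauerTree V} {K : Type u} [Field K] {T U : Γ.TwoTerm K} {z : V → K}

open Classical in
/-- The coefficients of the link with value `z v` on each path around the vertex `v` from an edge
indexing a summand of `T` in degree one to an edge indexing a summand of `U` in degree zero. -/
noncomputable def linkCoeff (T U : Γ.TwoTerm K) (z : V → K) (a b : Γ.Arrow) : K :=
  if a.fst = b.fst ∧ src a ∈ T.J ∧ src b ∈ U.I then z a.fst else 0

theorem linkCoeff_eq {a b : Γ.Arrow} (h : a.fst = b.fst) (ha : src a ∈ T.J) (hb : src b ∈ U.I) :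
    linkCoeff T U z a b = z a.fst :=
  if_pos ⟨h, ha, hb⟩

theorem mem_of_linkCoeff_ne_zero {a b : Γ.Arrow} (h : linkCoeff T U z a b ≠ 0) :
    a.fst = b.fst ∧ src a ∈ T.J ∧ src b ∈ U.I := by
  by_contra hcon
  exact h (if_neg hcon)

variable [Finite V]

/-- The element with coefficients `linkCoeff T U z`. -/
noncomputable def linkElt (T U : Γ.TwoTerm K) (z : V → K) : Γ.Alg K :=
  ∑ a, ∑ b, linkCoeff T U z a b • arc K a b

theorem idempSum_mul_linkElt : idempSum K T.J * linkElt T U z = linkElt T U z := by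
  rw [linkElt, alg_mul_sum]
  refine Finset.sum_congr rfl fun a _ => ?_
  rw [alg_mul_sum]
  exact Finset.sum_congr rfl fun b _ =>
    idempSum_mul_smul_arc fun h => (mem_of_linkCoeff_ne_zero h).2.1

theorem linkElt_mul_idempSum : linkElt T U z * idempSum K U.I = linkElt T U z := by
  rw [linkElt, alg_sum_mul]
  refine Finset.sum_congr rfl fun a _ => ?_
  rw [alg_sum_mul]
  exact Finset.sum_congr rfl fun b _ =>
    smul_arc_mul_idempSum fun h => (mem_of_linkCoeff_ne_zero h).2.2

open Classical in
/-- The coefficient of `z d.fst` in the equation which the composites of the link with coefficients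
`linkCoeff T U z` with the two differentials impose at a common marked edge `src d`. -/
noncomputable def edgeWeight (T U : Γ.TwoTerm K) (d : Γ.Arrow) : K :=
  if src d ∈ T.I then ∑ b, T.coeff d b else ∑ b, U.coeff b d

theorem edgeWeight_of_mem_I (hT : T.IsAlternating) {i a : Γ.Arrow} (ha : a.fst = i.fst)
    (hi : src i ∈ T.I) (haJ : src a ∈ T.J) : edgeWeight T U i = T.coeff i a := by
  rw [edgeWeight, if_pos hi]
  simpa using hT.sum_coeff_mul ha haJ 1

theorem edgeWeight_of_notMem_I (hU : U.IsAlternating) {j b : Γ.Arrow} (hb : b.fst = j.fst)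
    (hj : src j ∉ T.I) (hbI : src b ∈ U.I) : edgeWeight T U j = U.coeff b j := by
  rw [edgeWeight, if_neg hj]
  simpa using hU.sum_mul_coeff hb hbI 1

/-- The equations at the common marked edges expressing that `linkElt T U z` is a link. -/
def IsPotential (T U : Γ.TwoTerm K) (z : V → K) : Prop :=
  ∀ d : Γ.Arrow, edgeWeight T U d ≠ 0 → edgeWeight T U d.symm ≠ 0 →
    edgeWeight T U d * z d.fst + edgeWeight T U d.symm * z d.snd = 0

namespace IsSinkPair

theorem source_eq_of_precedes (h : IsSinkPair T U) (hp : Precedes T U) {i a i' : Γ.Arrow}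
    (hia : i.fst = a.fst) (hia' : i'.fst = a.fst) (hi : src i ∈ T.I) (ha : src a ∈ T.J)
    (hi' : src i' ∈ U.I) : i = i' := by
  have hiT := h.left.mem_diagramArrows_of_src_mem_I hia hi ha
  have hiU := h.mem_diagramArrows_of_precedes hp hiT (hia'.trans hia.symm) (Or.inl hi')
  exact h.source_eq ⟨hiT, hiU⟩ rfl hi (hia'.trans hia.symm) hi'

theorem arc_mul_arc_eq_zero (h : IsSinkPair T U) (hp : Precedes T U) {a i a' : Γ.Arrow}
    (hai : a.fst = i.fst) (hia : i.fst = a'.fst) (ha : src a ∈ T.J) (hi : src i ∈ U.I)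
    (ha' : src a' ∈ U.J) (hne : a ≠ a') : arc K a i * arc K i a' = 0 := by
  obtain ⟨e, he, ⟨heT, heU⟩ | ⟨heT, heU⟩⟩ :=
    h.exists_src_mem_I_or_mem_J hai (Or.inr ha) (Or.inl hi)
  · obtain rfl := h.right.eq_of_mem_I e i (he.trans hai) heU hi
    have hae : a ≠ e := (h.left.ne_of_mem heT ha).symm
    refine arc_mul_arc_of_gt K hai hia hae (h.right.ne_of_mem hi ha') ?_
    have hle := hp.arcLength_le e a a' hai hia.symm heT heU ha ha'
    have hturn := arcLength_add_arcLength_comm hai hae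
    have hlength : arcLength e a ≠ arcLength e a' := fun heq =>
      hne (arcLength_right_inj hai.symm hia heq)
    lia
  · refine absurd ?_ hne
    rw [← h.left.eq_of_mem_J e a he heT ha,
      h.right.eq_of_mem_J e a' ((he.trans hai).trans hia) heU ha']

theorem ne_of_src_mem (h : IsSinkPair T U) {a b : Γ.Arrow} (ha : src a ∈ T.J) (hb : src b ∈ U.I) :
    a ≠ b := by
  rintro rfl
  exact h.symm.notMem_J hb ha

theorem edgeWeight_ne_zero_of_mem_I (h : IsSinkPair T U) {e : Γ.Arrow} (he : src e ∈ T.I)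
    (he' : src e ∈ U.I) : edgeWeight T U e ≠ 0 := by
  obtain ⟨a, ha, haJ⟩ := h.exists_src_mem_J he he'
  rw [edgeWeight_of_mem_I h.left ha he haJ]
  exact h.left.coeff_ne_zero e a ha.symm he haJ

theorem sum_coeff_mul_linkCoeff (h : IsSinkPair T U) {e : Γ.Arrow} (he : src e ∈ T.I)
    (he' : src e ∈ U.I) :
    ∑ b, T.coeff e b * linkCoeff T U z b e = edgeWeight T U e * z e.fst := by
  obtain ⟨a, ha, haJ⟩ := h.exists_src_mem_J he he'
  rw [edgeWeight_of_mem_I h.left ha he haJ, h.left.sum_coeff_mul ha haJ, linkCoeff_eq ha haJ he',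
    ha]

theorem edgeWeight_ne_zero_of_mem_J (h : IsSinkPair T U) (hp : Precedes T U) {e : Γ.Arrow}
    (he : src e ∈ T.J) (he' : src e ∈ U.J) : edgeWeight T U e ≠ 0 := by
  obtain ⟨b, hb, hbI⟩ := hp.exists_source e he he'
  rw [edgeWeight_of_notMem_I h.right hb (fun hI => h.notMem_J hI he') hbI]
  exact h.right.coeff_ne_zero b e hb hbI he'

theorem sum_linkCoeff_mul_coeff (h : IsSinkPair T U) (hp : Precedes T U) {e : Γ.Arrow}
    (he : src e ∈ T.J) (he' : src e ∈ U.J) :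
    ∑ b, linkCoeff T U z e b * U.coeff b e = edgeWeight T U e * z e.fst := by
  obtain ⟨b, hb, hbI⟩ := hp.exists_source e he he'
  rw [edgeWeight_of_notMem_I h.right hb (fun hI => h.notMem_J hI he') hbI,
    h.right.sum_mul_coeff hb hbI, linkCoeff_eq hb.symm he hbI, mul_comm]

theorem sum_coeff_mul_linkCoeff_add_symm (h : IsSinkPair T U) (hz : IsPotential T U z)
    (d : Γ.Arrow) : ∑ b, T.coeff d b * linkCoeff T U z b d +
      ∑ b, T.coeff d.symm b * linkCoeff T U z b d.symm = 0 := by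
  by_cases hd : src d ∈ T.I ∧ src d ∈ U.I
  · have hd' : src d.symm ∈ T.I ∧ src d.symm ∈ U.I := by rwa [src_symm]
    rw [h.sum_coeff_mul_linkCoeff hd.1 hd.2, h.sum_coeff_mul_linkCoeff hd'.1 hd'.2]
    exact hz d (h.edgeWeight_ne_zero_of_mem_I hd.1 hd.2)
      (h.edgeWeight_ne_zero_of_mem_I hd'.1 hd'.2)
  · have sum_eq_zero {e : Γ.Arrow} (he : src e = src d) :
        ∑ b, T.coeff e b * linkCoeff T U z b e = 0 := by
      refine Finset.sum_eq_zero fun b _ => ?_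
      by_contra hne
      rw [← he] at hd
      exact hd ⟨(mem_of_coeff_ne_zero (left_ne_zero_of_mul hne)).2.2.1,
        (mem_of_linkCoeff_ne_zero (right_ne_zero_of_mul hne)).2.2⟩
    rw [sum_eq_zero rfl, sum_eq_zero (src_symm d), add_zero]

theorem sum_linkCoeff_mul_coeff_add_symm (h : IsSinkPair T U) (hp : Precedes T U)
    (hz : IsPotential T U z) (d : Γ.Arrow) :
    ∑ b, linkCoeff T U z d b * U.coeff b d +
      ∑ b, linkCoeff T U z d.symm b * U.coeff b d.symm = 0 := by
  by_cases hd : src d ∈ T.J ∧ src d ∈ U.J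
  · have hd' : src d.symm ∈ T.J ∧ src d.symm ∈ U.J := by rwa [src_symm]
    rw [h.sum_linkCoeff_mul_coeff hp hd.1 hd.2, h.sum_linkCoeff_mul_coeff hp hd'.1 hd'.2]
    exact hz d (h.edgeWeight_ne_zero_of_mem_J hp hd.1 hd.2)
      (h.edgeWeight_ne_zero_of_mem_J hp hd'.1 hd'.2)
  · have sum_eq_zero {e : Γ.Arrow} (he : src e = src d) :
        ∑ b, linkCoeff T U z e b * U.coeff b e = 0 := by
      refine Finset.sum_eq_zero fun b _ => ?_
      by_contra hne
      rw [← he] at hd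
      exact hd ⟨(mem_of_linkCoeff_ne_zero (left_ne_zero_of_mul hne)).2.1,
        (mem_of_coeff_ne_zero (right_ne_zero_of_mul hne)).2.2.2⟩
    rw [sum_eq_zero rfl, sum_eq_zero (src_symm d), add_zero]

theorem diffElt_mul_linkElt (h : IsSinkPair T U) (hp : Precedes T U) (hz : IsPotential T U z) :
    T.diffElt * linkElt T U z = 0 := by
  rw [diffElt_eq_sum h.left.disjoint, linkElt]
  refine sum_arc_mul_sum_arc_eq_zero (fun a b hab => ?_) (fun a b c hab hbc hac => ?_)
    (h.sum_coeff_mul_linkCoeff_add_symm hz)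
  · exact ⟨(mem_of_coeff_ne_zero hab).1, (mem_of_coeff_ne_zero hab).2.1⟩
  · obtain ⟨hfst, -, ha, hb⟩ := mem_of_coeff_ne_zero hab
    obtain ⟨hfst', -, hc⟩ := mem_of_linkCoeff_ne_zero hbc
    exact absurd (h.source_eq_of_precedes hp hfst hfst'.symm ha hb hc) hac

theorem linkElt_mul_diffElt (h : IsSinkPair T U) (hp : Precedes T U) (hz : IsPotential T U z) :
    linkElt T U z * U.diffElt = 0 := by
  rw [diffElt_eq_sum h.right.disjoint, linkElt]
  refine sum_arc_mul_sum_arc_eq_zero (fun a b hab => ?_) (fun a b c hab hbc hac => ?_)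
    (h.sum_linkCoeff_mul_coeff_add_symm hp hz)
  · obtain ⟨hfst, ha, hb⟩ := mem_of_linkCoeff_ne_zero hab
    exact ⟨hfst, h.ne_of_src_mem ha hb⟩
  · obtain ⟨hfst, ha, hb⟩ := mem_of_linkCoeff_ne_zero hab
    obtain ⟨hfst', -, -, hc⟩ := mem_of_coeff_ne_zero hbc
    exact h.arc_mul_arc_eq_zero hp hfst hfst' ha hb hc hac

theorem linkElt_ne_zero (h : IsSinkPair T U) (hz : ∀ v, z v ≠ 0) : linkElt T U z ≠ 0 := by
  intro h0
  obtain ⟨x, hx, hx'⟩ := h.exists_mem_I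
  obtain ⟨i, rfl⟩ := exists_src_eq x
  obtain ⟨a, ha, haJ⟩ := h.exists_src_mem_J hx hx'
  apply hz a.fst
  rw [← linkCoeff_eq (z := z) ha haJ hx',
    ← arcCoeff_sum_arc (linkCoeff T U z) ha (h.ne_of_src_mem haJ hx'), ← linkElt, h0, map_zero]

theorem exists_isLink_ne_zero (h : IsSinkPair T U) (hp : Precedes T U) :
    ∃ α, IsLink T U α ∧ α ≠ 0 := by
  obtain ⟨z, hz, hpot⟩ := exists_potential_of_ne_zero (edgeWeight T U)
  exact ⟨linkElt T U z, ⟨idempSum_mul_linkElt, linkElt_mul_idempSum,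
    h.diffElt_mul_linkElt hp hpot, h.linkElt_mul_diffElt hp hpot⟩, h.linkElt_ne_zero hz⟩

end IsSinkPair

end LinkElt

end TwoTerm

end BrauerTree

namespace BrauerTree

namespace TwoTerm

section Propagation

variable {V : Type v} {Γ : BrauerTree V} {K : Type u} [Field K] {T U : Γ.TwoTerm K}

theorem exists_src_eq_fst_eq {a : Γ.Arrow} {x : Γ.Edge} (h : src a = x ∨ tgt a = x) :
    ∃ a' : Γ.Arrow, src a' = x ∧ a'.fst = a.fst := by
  rcases h with h | h
  · exact ⟨a, h, rfl⟩
  · exact ⟨Γ.next a, h, Γ.next_fst a⟩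

namespace IsSinkPair

variable [Finite V] {Z : V → Prop}

theorem src_mem_marked_of_isCommonArrow (h : IsSinkPair T U) {a b c : Γ.Arrow}
    (ha : IsCommonArrow T U a) (hb : IsCommonArrow T U b) (hca : c.fst = a.fst)
    (hcb : c.snd = b.fst) : src c ∈ T.marked ∧ src c ∈ U.marked := by
  obtain ⟨d, hd, hdm⟩ := h.left.exists_src_mem_marked ha.1
  obtain ⟨d', hd', hdm'⟩ := h.left.exists_src_mem_marked hb.1
  obtain ⟨e, he, hem⟩ := h.right.exists_src_mem_marked ha.2
  obtain ⟨e', he', hem'⟩ := h.right.exists_src_mem_marked hb.2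
  exact ⟨h.left.src_mem_marked (hd.trans hca.symm) (hd'.trans hcb.symm) hdm hdm',
    h.right.src_mem_marked (he.trans hca.symm) (he'.trans hcb.symm) hem hem'⟩

theorem of_isCommonArrow (h : IsSinkPair T U)
    (hZ : ∀ d : Γ.Arrow, src d ∈ T.marked → src d ∈ U.marked → Z d.fst → Z d.snd)
    {a b : Γ.Arrow} {x : Γ.Edge} (ha : IsCommonArrow T U a) (hb : IsCommonArrow T U b)
    (hax : src a = x ∨ tgt a = x) (hbx : src b = x ∨ tgt b = x) (h0 : Z a.fst) : Z b.fst := by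
  obtain ⟨a', rfl, haf⟩ := exists_src_eq_fst_eq hax
  obtain ⟨b', hab, hbf⟩ := exists_src_eq_fst_eq hbx
  rw [← haf] at h0
  rw [← hbf]
  rcases src_eq_src_iff.1 hab with rfl | rfl
  · exact h0
  · obtain ⟨hT, hU⟩ := h.src_mem_marked_of_isCommonArrow ha hb haf hbf
    exact hZ a' hT hU h0

theorem forall_isCommonArrow_iff_of_eqvGen (h : IsSinkPair T U)
    (hZ : ∀ d : Γ.Arrow, src d ∈ T.marked → src d ∈ U.marked → Z d.fst → Z d.snd)
    {x y : Γ.Edge} (hxy : Relation.EqvGen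
      (fun a b => ∃ d ∈ (T.diagram ∩ U.diagram).arrows, src d = a ∧ tgt d = b) x y) :
    (∀ a, IsCommonArrow T U a → src a = x ∨ tgt a = x → Z a.fst) ↔
      ∀ a, IsCommonArrow T U a → src a = y ∨ tgt a = y → Z a.fst := by
  induction hxy with
  | rel x y hr =>
    obtain ⟨a, ha, hax, hay⟩ := hr
    exact ⟨fun hx b hb hby => h.of_isCommonArrow hZ ha hb (Or.inr hay) hby (hx a ha (Or.inl hax)),
      fun hy b hb hbx => h.of_isCommonArrow hZ ha hb (Or.inl hax) hbx (hy a ha (Or.inr hay))⟩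
  | refl x => exact Iff.rfl
  | symm x y _ ih => exact ih.symm
  | trans x y z _ _ ihxy ihyz => exact ihxy.trans ihyz

theorem of_src_mem_marked (h : IsSinkPair T U)
    (hZ : ∀ d : Γ.Arrow, src d ∈ T.marked → src d ∈ U.marked → Z d.fst → Z d.snd)
    {d e : Γ.Arrow} (hd : src d ∈ T.marked) (hd' : src d ∈ U.marked) (he : src e ∈ T.marked)
    (he' : src e ∈ U.marked) (h0 : Z d.fst) : Z e.fst := by
  have of_src_eq {a b : Γ.Arrow} (ha : src a ∈ T.marked) (ha' : src a ∈ U.marked)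
      (hab : src a = src b) (hZa : Z a.fst) : Z b.fst := by
    rcases src_eq_src_iff.1 hab with rfl | rfl
    · exact hZa
    · exact hZ b.symm ha ha' hZa
  have hZe := (h.forall_isCommonArrow_iff_of_eqvGen hZ (h.connected.2 _ ⟨Or.inl hd, Or.inl hd'⟩ _
    ⟨Or.inl he, Or.inl he'⟩)).1 fun a _ has => by
      obtain ⟨a', hsrc, hfst⟩ := exists_src_eq_fst_eq has
      exact hfst ▸ of_src_eq hd hd' hsrc.symm h0
  obtain ⟨a, ha, has⟩ := h.exists_isCommonArrow_of_mem_marked he he'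
  obtain ⟨a', hsrc, hfst⟩ := exists_src_eq_fst_eq has
  exact of_src_eq (hsrc ▸ he) (hsrc ▸ he') hsrc (hfst ▸ hZe a ha has)

end IsSinkPair

end Propagation

section VanishesAt

variable {V : Type v} {Γ : BrauerTree V} {K : Type u} [Field K] [Finite V] {T U : Γ.TwoTerm K}
  {α : Γ.Alg K}

/-- No path around the vertex `v` of the tree occurs in `α`. -/
def VanishesAt (α : Γ.Alg K) (v : V) : Prop :=
  ∀ a b : Γ.Arrow, a.fst = v → arcCoeff K a b α = 0

theorem IsLink.mem_of_arcCoeff_ne_zero (hα : IsLink T U α) {a b : Γ.Arrow}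
    (hab : arcCoeff K a b α ≠ 0) : a.fst = b.fst ∧ a ≠ b ∧ src a ∈ T.J ∧ src b ∈ U.I :=
  BrauerTree.mem_of_arcCoeff_ne_zero hα.idempSum_mul hα.mul_idempSum hab

namespace IsSinkPair

theorem eq_sum_arc (h : IsSinkPair T U) (hα : IsLink T U α) :
    α = ∑ a, ∑ b, arcCoeff K a b α • arc K a b :=
  eq_sum_arc_of_disjoint (Finset.disjoint_left.2 fun _ hJ hI => h.symm.notMem_J hI hJ)
    hα.idempSum_mul hα.mul_idempSum

theorem sum_coeff_mul_arcCoeff_add_symm (h : IsSinkPair T U) (hα : IsLink T U α) (d : Γ.Arrow) :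
    ∑ b, T.coeff d b * arcCoeff K b d α +
      ∑ b, T.coeff d.symm b * arcCoeff K b d.symm α = 0 := by
  have hT (a b : Γ.Arrow) (hab : T.coeff a b ≠ 0) : a.fst = b.fst ∧ a ≠ b :=
    ⟨(mem_of_coeff_ne_zero hab).1, (mem_of_coeff_ne_zero hab).2.1⟩
  have heq := socCoeff_sum_arc_mul_sum_arc (q := fun a b => arcCoeff K a b α) hT d
  rw [← diffElt_eq_sum h.left.disjoint, ← h.eq_sum_arc hα, hα.diffElt_mul, map_zero] at heq
  exact heq.symm

theorem sum_arcCoeff_mul_coeff_add_symm (h : IsSinkPair T U) (hα : IsLink T U α) (d : Γ.Arrow) :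
    ∑ b, arcCoeff K d b α * U.coeff b d +
      ∑ b, arcCoeff K d.symm b α * U.coeff b d.symm = 0 := by
  have hne (a b : Γ.Arrow) (hab : arcCoeff K a b α ≠ 0) : a.fst = b.fst ∧ a ≠ b :=
    ⟨(hα.mem_of_arcCoeff_ne_zero hab).1, (hα.mem_of_arcCoeff_ne_zero hab).2.1⟩
  have heq := socCoeff_sum_arc_mul_sum_arc (p := fun a b => arcCoeff K a b α) (q := U.coeff) hne d
  rw [← diffElt_eq_sum h.right.disjoint, ← h.eq_sum_arc hα, hα.mul_diffElt, map_zero] at heq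
  exact heq.symm

theorem vanishesAt_snd_of_mem_I (h : IsSinkPair T U) (hα : IsLink T U α) {d : Γ.Arrow}
    (hd : src d ∈ T.I) (hd' : src d ∈ U.I) (hv : VanishesAt α d.fst) : VanishesAt α d.snd := by
  intro a b ha
  by_contra hab
  obtain ⟨hfst, -, haJ, hbI⟩ := hα.mem_of_arcCoeff_ne_zero hab
  rw [← src_symm] at hd hd'
  obtain rfl := h.right.eq_of_mem_I b d.symm (hfst.symm.trans ha) hbI hd'
  have hsum : ∑ b, T.coeff d b * arcCoeff K b d α = 0 := by
    refine Finset.sum_eq_zero fun b _ => ?_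
    by_contra hne
    have hb := right_ne_zero_of_mul hne
    exact hb (hv b d (hα.mem_of_arcCoeff_ne_zero hb).1)
  have heq := h.sum_coeff_mul_arcCoeff_add_symm hα d
  rw [hsum, zero_add, h.left.sum_coeff_mul hfst haJ] at heq
  exact mul_ne_zero (h.left.coeff_ne_zero d.symm a hfst.symm hd haJ) hab heq

theorem vanishesAt_snd_of_mem_J (h : IsSinkPair T U) (hα : IsLink T U α) {d : Γ.Arrow}
    (hd : src d ∈ T.J) (hd' : src d ∈ U.J) (hv : VanishesAt α d.fst) : VanishesAt α d.snd := by
  intro a b ha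
  by_contra hab
  obtain ⟨hfst, -, haJ, hbI⟩ := hα.mem_of_arcCoeff_ne_zero hab
  rw [← src_symm] at hd hd'
  obtain rfl := h.left.eq_of_mem_J a d.symm ha haJ hd
  have hsum : ∑ b, arcCoeff K d b α * U.coeff b d = 0 :=
    Finset.sum_eq_zero fun b _ => by rw [hv d b rfl, zero_mul]
  have heq := h.sum_arcCoeff_mul_coeff_add_symm hα d
  rw [hsum, zero_add, h.right.sum_mul_coeff hfst.symm hbI] at heq
  exact mul_ne_zero hab (h.right.coeff_ne_zero b d.symm hfst.symm hbI hd') heq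

theorem vanishesAt_snd (h : IsSinkPair T U) (hα : IsLink T U α) {d : Γ.Arrow}
    (hd : src d ∈ T.marked) (hd' : src d ∈ U.marked) (hv : VanishesAt α d.fst) :
    VanishesAt α d.snd := by
  rcases hd with hI | hJ
  · exact h.vanishesAt_snd_of_mem_I hα hI (h.mem_I_of_mem_marked hI hd') hv
  · exact h.vanishesAt_snd_of_mem_J hα hJ (h.mem_J_of_mem_marked hJ hd') hv

/- Otherwise the product of the path from `a` to `i` in `α` with the path from `i` to `a'` in the
differential of `U` is shorter than a full turn, and nothing else in `α * U.diffElt` cancels it. -/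
theorem vanishesAt_of_arcLength_lt (h : IsSinkPair T U) (hα : IsLink T U α) {i a a' : Γ.Arrow}
    (ha : a.fst = i.fst) (ha' : a'.fst = i.fst) (hi : src i ∈ U.I) (haJ : src a ∈ T.J)
    (haJ' : src a' ∈ U.J) (hlt : arcLength i a' < arcLength i a) : VanishesAt α i.fst := by
  intro b c hb
  by_contra hbc
  obtain ⟨hfst, hne, hbJ, hcI⟩ := hα.mem_of_arcCoeff_ne_zero hbc
  obtain rfl := h.left.eq_of_mem_J b a (hb.trans ha.symm) hbJ haJ
  obtain rfl := h.right.eq_of_mem_I c i (hfst.symm.trans hb) hcI hi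
  have hprod : arc K b c * arc K c a' = arc K b a' := by
    refine arc_mul_arc_of_lt K hfst ha'.symm hne (h.right.ne_of_mem hi haJ') ?_
    have hturn := arcLength_add_arcLength_comm hfst hne
    lia
  have hba' : b ≠ a' := by
    rintro rfl
    exact lt_irrefl _ hlt
  have heq := arcCoeff_sum_arc_mul_sum_arc (fun a b => arcCoeff K a b α) U.coeff b a'
  rw [← h.eq_sum_arc hα, ← diffElt_eq_sum h.right.disjoint, hα.mul_diffElt, map_zero,
    Finset.sum_eq_single c, hprod, arcCoeff_arc_self K (hb.trans ha'.symm) hba', mul_one] at heq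
  · exact mul_ne_zero hbc (h.right.coeff_ne_zero c a' ha'.symm hi haJ') heq.symm
  · intro c' _ hc'
    by_contra hcon
    obtain ⟨hfst', -, -, hcI'⟩ :=
      hα.mem_of_arcCoeff_ne_zero (left_ne_zero_of_mul (left_ne_zero_of_mul hcon))
    exact hc' (h.right.eq_of_mem_I c' c (hfst'.symm.trans hb) hcI' hi)
  · simp

theorem precedes_of_forall_not_vanishesAt (h : IsSinkPair T U) (hα : IsLink T U α)
    (hv : ∀ d : Γ.Arrow, src d ∈ T.marked → src d ∈ U.marked → ¬ VanishesAt α d.fst) :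
    Precedes T U where
  arcLength_le i a a' ha ha' hi hi' haJ haJ' := by
    by_contra! hlt
    exact hv i (Or.inl hi) (Or.inl hi') (h.vanishesAt_of_arcLength_lt hα ha ha' hi' haJ haJ' hlt)
  exists_source j hj hj' := by
    by_contra! hno
    refine hv j (Or.inr hj) (Or.inr hj') fun a b ha => ?_
    by_contra hab
    obtain ⟨hfst, -, -, hbI⟩ := hα.mem_of_arcCoeff_ne_zero hab
    exact hno b (hfst.symm.trans ha) hbI

theorem eq_zero_of_vanishesAt (h : IsSinkPair T U) (hα : IsLink T U α) {d : Γ.Arrow}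
    (hd : src d ∈ T.marked) (hd' : src d ∈ U.marked) (hv : VanishesAt α d.fst) : α = 0 := by
  rw [h.eq_sum_arc hα]
  refine Finset.sum_eq_zero fun a _ => Finset.sum_eq_zero fun b _ => ?_
  suffices arcCoeff K a b α = 0 by rw [this, zero_smul]
  by_contra hab
  obtain ⟨hfst, -, haJ, hbI⟩ := hα.mem_of_arcCoeff_ne_zero hab
  obtain ⟨e, he, hem⟩ := h.exists_src_mem_I_or_mem_J hfst (Or.inr haJ) (Or.inl hbI)
  have hve : VanishesAt α e.fst :=
    h.of_src_mem_marked (fun _ => h.vanishesAt_snd hα) hd hd' (hem.imp And.left And.left)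
      (hem.imp And.right And.right) hv
  exact hab (hve a b he.symm)

theorem precedes_of_isLink_ne_zero (h : IsSinkPair T U) (hα : IsLink T U α) (hne : α ≠ 0) :
    Precedes T U :=
  h.precedes_of_forall_not_vanishesAt hα fun _ hd hd' hv =>
    hne (h.eq_zero_of_vanishesAt hα hd hd' hv)

theorem hom_shift_eq_zero_iff_not_precedes [HasDerivedCategory.{w} (ModuleCat (Γ.Alg K))]
    (h : IsSinkPair T U) : (∀ φ : T.obj ⟶ U.obj⟦(-1 : ℤ)⟧, φ = 0) ↔ ¬ Precedes T U := by
  rw [hom_shift_eq_zero_iff_isLink]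
  constructor
  · intro h0 hp
    obtain ⟨α, hα, hne⟩ := h.exists_isLink_ne_zero hp
    exact hne (h0 α hα)
  · intro hp α hα
    by_contra hne
    exact hp (h.precedes_of_isLink_ne_zero hα hne)

theorem not_precedes (h : IsSinkPair T U)
    (hend : ∃ x, T.diagram.IsDegreeOne x ∧ U.diagram.IsDegreeOne x) : ¬ Precedes T U := by
  intro hp
  obtain ⟨j, hT, hU⟩ := h.exists_isDegreeOne_iff.1 hend
  obtain ⟨b, hb, hbI⟩ := hp.exists_source j hT.src_mem_J hU.src_mem_J
  exact hU.src_notMem_I b hb hbI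

end IsSinkPair

end VanishesAt

end TwoTerm

end BrauerTree

theorem hom_vanishes_iff_both_ends_sinks_general {K : Type u} [Field K] {V : Type v} [Finite V]
    (Γ : BrauerTree V) [HasDerivedCategory.{w} (ModuleCat (Γ.Alg K))] (Ti Tj : Γ.TwoTerm K)
    (hi : ∀ φ : Ti.obj ⟶ Ti.obj⟦(-1 : ℤ)⟧, φ = 0) (hj : ∀ φ : Tj.obj ⟶ Tj.obj⟦(-1 : ℤ)⟧, φ = 0)
    (hpi : Ti.IsPresentation) (hpj : Tj.IsPresentation)
    (hconn : (Ti.diagram ∩ Tj.diagram).Connected)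
    (hmany : (Ti.diagram ∩ Tj.diagram).verts.Nontrivial)
    (hsinks : ∀ x, (Ti.diagram ∩ Tj.diagram).IsDegreeOne x →
      (Ti.diagram ∩ Tj.diagram).IsSink x) :
    ((∀ φ : Ti.obj ⟶ Tj.obj⟦(-1 : ℤ)⟧, φ = 0) ∧
      (∀ φ : Tj.obj ⟶ Ti.obj⟦(-1 : ℤ)⟧, φ = 0)) ↔
    ((¬ Ti.restriction Tj ⊆ Tj.restriction Ti ∧ ¬ Tj.restriction Ti ⊆ Ti.restriction Tj) ∨
      ∃ x, Ti.diagram.IsDegreeOne x ∧ Tj.diagram.IsDegreeOne x) := by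
  have hTi := hpi.isAlternating (hpi.disjoint_of_hom_eq_zero hi)
  have hTj := hpj.isAlternating (hpj.disjoint_of_hom_eq_zero hj)
  have h : BrauerTree.TwoTerm.IsSinkPair Ti Tj := ⟨hTi, hTj, hconn, hmany, hsinks⟩
  rw [h.hom_shift_eq_zero_iff_not_precedes, h.symm.hom_shift_eq_zero_iff_not_precedes]
  by_cases hend : ∃ x, Ti.diagram.IsDegreeOne x ∧ Tj.diagram.IsDegreeOne x
  · exact iff_of_true ⟨h.not_precedes hend, h.symm.not_precedes (hend.imp fun _ => And.symm)⟩
      (Or.inr hend)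
  · have hend' : ¬ ∃ x, Tj.diagram.IsDegreeOne x ∧ Ti.diagram.IsDegreeOne x :=
      fun hx => hend (hx.imp fun _ => And.symm)
    rw [h.restriction_subset_iff hend, h.symm.restriction_subset_iff hend', or_iff_left hend]

theorem hom_vanishes_iff_both_ends_sinks {K : Type u} [Field K] [IsAlgClosed K]
    {V : Type v} [Finite V] (Γ : BrauerTree V)
    [HasDerivedCategory.{w} (ModuleCat (Γ.Alg K))]
    (Ti Tj : Γ.TwoTerm K)
    (hi : Ti.IsIndecPartialTilting) (hj : Tj.IsIndecPartialTilting)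
    (hpi : Ti.IsPresentation) (hpj : Tj.IsPresentation)
    (hconn : (Ti.diagram ∩ Tj.diagram).Connected)
    (hmany : (Ti.diagram ∩ Tj.diagram).verts.Nontrivial)
    (hsinks : ∀ x, (Ti.diagram ∩ Tj.diagram).IsDegreeOne x →
      (Ti.diagram ∩ Tj.diagram).IsSink x) :
    ((∀ φ : Ti.obj ⟶ Tj.obj⟦(-1 : ℤ)⟧, φ = 0) ∧
      (∀ φ : Tj.obj ⟶ Ti.obj⟦(-1 : ℤ)⟧, φ = 0)) ↔
    ((¬ Ti.restriction Tj ⊆ Tj.restriction Ti ∧ ¬ Tj.restriction Ti ⊆ Ti.restriction Tj) ∨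
      ∃ x, Ti.diagram.IsDegreeOne x ∧ Tj.diagram.IsDegreeOne x) :=
  hom_vanishes_iff_both_ends_sinks_general Γ Ti Tj (hi.2 (-1) (by decide)) (hj.2 (-1) (by decide))
    hpi hpj hconn hmany hsinks
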